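/- arXiv:math/0701414 — 2 statements merged into one kernel-verified Lean document; each statement's English description precedes it below -/
import Mathlib

section
/- (Theorem 1.2, part 2) Let d ≥ 3 and 1 ≤ m ≤ d−2, and assume λ > 0 satisfies e^λ (m/(d+1) + (1 − m/(d+1)) q(d+1−m)) < 1. Then there exist N_1(d,m,λ) > 0 and u_1(d,m,λ) > 0 such that for all N ≥ N_1, all j ∈ ℤ and all A ∈ A^j_m: P[X_{[0,D^j_{u_1 N^{d−1}}]} ⊇ A] ≤ exp(−λ|A|). -/
open MeasureTheory Filter
open scoped ENNReal Classical

namespace DiscCyl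

/-- The lattice `ℤ^{d+1}`. -/
abbrev Lat (d : ℕ) := Fin (d + 1) → ℤ

/-- The discrete cylinder `E = (ℤ/Nℤ)^d × ℤ`. -/
abbrev Cyl (d N : ℕ) := (Fin d → ZMod N) × ℤ

instance (N : ℕ) : MeasurableSpace (ZMod N) := ⊤

instance (N : ℕ) : Countable (ZMod N) := by
  cases N with
  | zero => exact inferInstanceAs (Countable ℤ)
  | succ n => exact inferInstanceAs (Countable (Fin (n + 1)))

/-- The canonical projection `π_E : ℤ^{d+1} → E`. -/
def projE (d N : ℕ) (v : Lat d) : Cyl d N :=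
  (fun i => (v i.castSucc : ZMod N), v (Fin.last d))

/-- The `2(d+1)` unit vectors `±e_i` of `ℤ^{d+1}`. -/
def unitVecs (d : ℕ) : Finset (Lat d) :=
  Finset.image (fun p : Fin (d + 1) × Bool => Pi.single p.1 (if p.2 then (1 : ℤ) else -1))
    Finset.univ

/-- One-step transition probability of simple random walk on the cylinder:
each of the `2(d+1)` unit moves of `ℤ^{d+1}` is taken with probability `1/(2(d+1))`
and projected to `E`. -/
noncomputable def stepProb (d N : ℕ) (x y : Cyl d N) : ℝ≥0∞ :=
  (((unitVecs d).filter fun e => x + projE d N e = y).card : ℝ≥0∞) / (2 * (d + 1))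

/-- `Pl` is the family of laws (indexed by the starting point) of simple random walk
on the cylinder `E = (ℤ/Nℤ)^d × ℤ`. -/
def IsCylRW (d N : ℕ) (Pl : Cyl d N → Measure (ℕ → Cyl d N)) : Prop :=
  (∀ x, IsProbabilityMeasure (Pl x)) ∧
    ∀ (x : Cyl d N) (n : ℕ) (γ : ℕ → Cyl d N),
      Pl x {ω | ∀ i ≤ n, ω i = γ i} =
        (if γ 0 = x then 1 else 0) * ∏ i ∈ Finset.range n, stepProb d N (γ i) (γ (i + 1))

/-- The lattice `ℤ^ν`. -/
abbrev ZLat (ν : ℕ) := Fin ν → ℤ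

/-- Unit vectors of `ℤ^ν`. -/
def zUnitVecs (ν : ℕ) : Set (ZLat ν) :=
  {v | ∃ i, v = Pi.single i 1 ∨ v = Pi.single i (-1)}

/-- One-step transition probability of simple random walk on `ℤ^ν`. -/
noncomputable def zStep (ν : ℕ) (x y : ZLat ν) : ℝ≥0∞ :=
  if y - x ∈ zUnitVecs ν then (2 * ν : ℝ≥0∞)⁻¹ else 0

/-- `Ql` is the family of laws of simple random walk on `ℤ^ν`. -/
def IsLatRW (ν : ℕ) (Ql : ZLat ν → Measure (ℕ → ZLat ν)) : Prop :=
  (∀ x, IsProbabilityMeasure (Ql x)) ∧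
    ∀ (x : ZLat ν) (n : ℕ) (γ : ℕ → ZLat ν),
      Ql x {ω | ∀ i ≤ n, ω i = γ i} =
        (if γ 0 = x then 1 else 0) * ∏ i ∈ Finset.range n, zStep ν (γ i) (γ (i + 1))

/-- `q(ν)`: the return probability to the origin of simple random walk on `ℤ^ν`. -/
noncomputable def retProb (ν : ℕ) (Ql : ZLat ν → Measure (ℕ → ZLat ν)) : ℝ :=
  ((Ql 0) {ω | ∃ n : ℕ, 1 ≤ n ∧ ω n = 0}).toReal

/-- Entrance time `H_U` (with value `⊤` if `U` is never entered). -/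
noncomputable def entT {X : Type*} (U : Set X) (ω : ℕ → X) : ℕ∞ :=
  sInf {t : ℕ∞ | ∃ n : ℕ, ω n ∈ U ∧ t = n}

/-- Exit time `T_U`. -/
noncomputable def exitT {X : Type*} (U : Set X) (ω : ℕ → X) : ℕ∞ :=
  entT Uᶜ ω

/-- `after t f ω = t + f (θ_t ω)`, with value `⊤` when `t = ⊤`. -/
noncomputable def after {X : Type*} (t : ℕ∞) (f : (ℕ → X) → ℕ∞) (ω : ℕ → X) : ℕ∞ :=
  t.recTopCoe ⊤ fun m => (m : ℕ∞) + f fun k => ω (k + m)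

/-- The block `C_j = (ℤ/Nℤ)^d × ([(j-3/4)N, (j+3/4)N] ∩ ℤ)`. -/
def Cblk (d N : ℕ) (j : ℤ) : Set (Cyl d N) :=
  {x | ((j : ℝ) - 3 / 4) * N ≤ (x.2 : ℝ) ∧ (x.2 : ℝ) ≤ ((j : ℝ) + 3 / 4) * N}

/-- The block `B_j = (ℤ/Nℤ)^d × [(j-1)N, (j+1)N]`. -/
def Bblk (d N : ℕ) (j : ℤ) : Set (Cyl d N) :=
  {x | (j - 1) * (N : ℤ) ≤ x.2 ∧ x.2 ≤ (j + 1) * (N : ℤ)}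

/-- The block `B̃_j = (ℤ/Nℤ)^d × [(j-2)N+1, (j+2)N-1]`. -/
def Btl (d N : ℕ) (j : ℤ) : Set (Cyl d N) :=
  {x | (j - 2) * (N : ℤ) + 1 ≤ x.2 ∧ x.2 ≤ (j + 2) * (N : ℤ) - 1}

/-- `D^j_1`: time of the first departure from `B̃_j` after the first return to `B_j`. -/
noncomputable def oneExc (d N : ℕ) (j : ℤ) (ω : ℕ → Cyl d N) : ℕ∞ :=
  after (entT (Bblk d N j) ω) (exitT (Btl d N j)) ω

/-- `D^j_k`: time of the `k`-th departure from `B̃_j` (after successive returns to `B_j`). -/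
noncomputable def DD (d N : ℕ) (j : ℤ) : ℕ → (ℕ → Cyl d N) → ℕ∞
  | 0, _ => 0
  | k + 1, ω => after (DD d N j k ω) (oneExc d N j) ω

/-- The law `P` of the walk with initial distribution uniform on `B_0`. -/
noncomputable def lawP (d N : ℕ) (Pl : Cyl d N → Measure (ℕ → Cyl d N)) :
    Measure (ℕ → Cyl d N) :=
  ((N : ℝ≥0∞) ^ d * (2 * N + 1))⁻¹ •
    Measure.sum fun x : Cyl d N => if x ∈ Bblk d N 0 then Pl x else 0

/-- Nearest-neighbour adjacency on the cylinder. -/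
def adj (d N : ℕ) (x y : Cyl d N) : Prop :=
  x ≠ y ∧ ∃ e ∈ unitVecs d, y = x + projE d N e

/-- `x` and `y` are connected by a nearest-neighbour path inside `S`. -/
def connIn (d N : ℕ) (S : Set (Cyl d N)) (x y : Cyl d N) : Prop :=
  Relation.ReflTransGen (fun a b => a ∈ S ∧ b ∈ S ∧ adj d N a b) x y

/-- `S` is a connected set. -/
def IsConnIn (d N : ℕ) (S : Set (Cyl d N)) : Prop :=
  ∀ x ∈ S, ∀ y ∈ S, connIn d N S x y

/-- The boundary `∂U`. -/
def bdry (d N : ℕ) (U : Set (Cyl d N)) : Set (Cyl d N) :=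
  {x | x ∉ U ∧ ∃ y ∈ U, adj d N x y}

/-- `ℓ^∞`-norm on `ℤ^{d+1}`. -/
def linf {d : ℕ} (v : Lat d) : ℕ := Finset.univ.sup fun i => (v i).natAbs

/-- `ℓ^∞`-distance induced on the cylinder. -/
noncomputable def cylDist (d N : ℕ) (x y : Cyl d N) : ℕ :=
  sInf {r : ℕ | ∃ v : Lat d, projE d N v = y - x ∧ linf v = r}

/-- `S` has `ℓ^∞`-diameter at least `L`. -/
def diamGE (d N : ℕ) (S : Set (Cyl d N)) (L : ℕ) : Prop :=
  ∃ x ∈ S, ∃ y ∈ S, L ≤ cylDist d N x y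

/-- `X_{[0,n]}`: the set of points visited up to time `n`. -/
def ran {X : Type*} (ω : ℕ → X) (n : ℕ) : Set X := {y | ∃ i ≤ n, ω i = y}

/-- The set of points visited up to the (possibly infinite) time `t`. -/
def ranE {X : Type*} (ω : ℕ → X) (t : ℕ∞) : Set X :=
  {y | ∃ i : ℕ, (i : ℕ∞) ≤ t ∧ ω i = y}

/-- `L_m`: projections to `E` of `m`-dimensional affine coordinate lattices of `ℤ^{d+1}`. -/
def Lcoll (d N m : ℕ) : Set (Set (Cyl d N)) :=
  {F | ∃ I : Finset (Fin (d + 1)), I.card = m ∧ ∃ y : Lat d,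
      F = (fun v => projE d N (y + v)) '' {v : Lat d | ∀ i ∉ I, v i = 0}}

/-- `A^j_m`: nonempty subsets of `C_j` contained in some `F ∈ L_m`. -/
def Adm (d N : ℕ) (j : ℤ) (m : ℕ) : Set (Finset (Cyl d N)) :=
  {A | A.Nonempty ∧ ↑A ⊆ Cblk d N j ∧ ∃ F ∈ Lcoll d N m, (↑A : Set (Cyl d N)) ⊆ F}

/-- The segment `{x + k·e : 0 ≤ k ≤ L}` (addition via `π_E`). -/
def segment (d N : ℕ) (x : Cyl d N) (e : Lat d) (L : ℕ) : Set (Cyl d N) :=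
  {y | ∃ k : ℕ, k ≤ L ∧ y = x + projE d N ((k : ℤ) • e)}

/-- The event `V_{K,j,t}` (with `k = ⌊t⌋` excursions). -/
def Vev (d N : ℕ) (K : ℝ) (j : ℤ) (k : ℕ) : Set (ℕ → Cyl d N) :=
  {ω | ∀ x ∈ Cblk d N j, ∀ e ∈ unitVecs d, ∃ i : ℕ, (i : ℝ) < Real.sqrt N ∧
      ∀ l : ℕ, i ≤ l → l ≤ i + ⌊K * Real.log N⌋₊ →
        x + projE d N ((l : ℤ) • e) ∉ ranE ω (DD d N j k ω)}

/-- The event `U_{K,j,t}` (with `k = ⌊t⌋` excursions). -/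
def Uev (d N : ℕ) (K : ℝ) (j : ℤ) (k : ℕ) : Set (ℕ → Cyl d N) :=
  {ω | ∀ F ∈ Lcoll d N 2, ∀ n : ℕ, (n : ℕ∞) ≤ DD d N j k ω →
      ∀ O₁ O₂ : Set (Cyl d N),
        O₁ ⊆ (F ∩ Cblk d N j) \ ran ω n → O₂ ⊆ (F ∩ Cblk d N j) \ ran ω n →
        IsConnIn d N O₁ → IsConnIn d N O₂ →
        diamGE d N O₁ ⌊K * Real.log N⌋₊ → diamGE d N O₂ ⌊K * Real.log N⌋₊ →
        ∀ p ∈ O₁, ∀ q ∈ O₂, connIn d N ((F ∩ Cblk d N j) \ ran ω n) p q}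

/-- A (finite) set `S` disconnects the cylinder. -/
def Disconnects (d N : ℕ) (S : Set (Cyl d N)) : Prop :=
  S.Finite ∧ ∃ M₀ : ℕ, ∀ M : ℕ, M₀ ≤ M → ∀ x y : Cyl d N,
    (M : ℤ) ≤ x.2 → y.2 ≤ -(M : ℤ) → ¬ connIn d N Sᶜ x y

/-- The disconnection time `T_N`. -/
noncomputable def discT (d N : ℕ) (ω : ℕ → Cyl d N) : ℕ∞ :=
  sInf {t : ℕ∞ | ∃ n : ℕ, Disconnects d N (ran ω n) ∧ t = n}

/-- `r ≤ t` for `t : ℕ∞` and a real threshold `r` (trivially true when `t = ⊤`). -/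
def geReal (t : ℕ∞) (r : ℝ) : Prop := ∀ n : ℕ, t = (n : ℕ∞) → r ≤ n

/-- `r < t` for `t : ℕ∞` and a real threshold `r` (trivially true when `t = ⊤`). -/
def gtReal (t : ℕ∞) (r : ℝ) : Prop := ∀ n : ℕ, t = (n : ℕ∞) → r < n

/-- `φ_j(z) = E_z[exp(λ Σ_{x∈A} 1{H_x < T_{B̃_j}})]`. -/
noncomputable def phi (d N : ℕ) (Pl : Cyl d N → Measure (ℕ → Cyl d N)) (j : ℤ) (lam : ℝ)
    (A : Finset (Cyl d N)) (z : Cyl d N) : ℝ :=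
  ∫ ω, Real.exp (lam * ∑ x ∈ A, if entT {x} ω < exitT (Btl d N j) ω then (1 : ℝ) else 0)
    ∂(Pl z)

/-- `‖φ_j‖_∞`. -/
noncomputable def phiSup (d N : ℕ) (Pl : Cyl d N → Measure (ℕ → Cyl d N)) (j : ℤ) (lam : ℝ)
    (A : Finset (Cyl d N)) : ℝ :=
  ⨆ z : Cyl d N, phi d N Pl j lam A z

/-- `q_N = sup {P_z[H_F < T_{B̃_j}] : F ∈ L_m, z ∈ ∂F}`. -/
noncomputable def qNval (d N m : ℕ) (Pl : Cyl d N → Measure (ℕ → Cyl d N)) (j : ℤ) : ℝ :=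
  sSup {r : ℝ | ∃ F ∈ Lcoll d N m, ∃ z ∈ bdry d N F,
      r = ((Pl z) {ω | entT F ω < exitT (Btl d N j) ω}).toReal}

/-- The times `τ_k`: `τ_0` is the entrance time of `(ℤ/Nℤ)^d × Nℤ`, and `τ_{k+1}` is the
first time after `τ_k` at which the vertical component has moved by exactly `N`. -/
noncomputable def tauT (d N : ℕ) : ℕ → (ℕ → Cyl d N) → ℕ∞
  | 0, ω => entT {x : Cyl d N | (N : ℤ) ∣ x.2} ω
  | k + 1, ω =>
      (tauT d N k ω).recTopCoe ⊤ fun m =>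
        sInf {t : ℕ∞ | ∃ n : ℕ, m < n ∧ ((ω n).2 - (ω m).2).natAbs = N ∧ t = n}

/-- `*`-adjacency on `ℤ²`. -/
def starAdj (x y : ℤ × ℤ) : Prop :=
  x ≠ y ∧ (x.1 - y.1).natAbs ≤ 1 ∧ (x.2 - y.2).natAbs ≤ 1

/-- Fourth order Taylor upper bound for a negative power. -/
lemma pow_taylor (α x : ℝ) (hα : 0 < α) (hx : |x| * (α + 4) ≤ 1) :
    (1 + x) ^ (-α) ≤ 1 - α * x + α * (α + 1) / 2 * x ^ 2
      - α * (α + 1) * (α + 2) / 6 * x ^ 3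
      + (α + 3) * (α * (α + 1) * (α + 2) / 6) * x ^ 4 := by
  set t : ℝ := α * (α + 1) * (α + 2) / 6 with ht
  have ht0 : 0 < t := by positivity
  set P : ℝ → ℝ := fun x => 1 - α * x + α * (α + 1) / 2 * x ^ 2 - t * x ^ 3
      + (α + 3) * t * x ^ 4 with hP
  set k : ℝ → ℝ := fun x => P x * (1 + x) ^ α with hk
  set δ : ℝ := 1 / (α + 4) with hδ
  have hδ1 : δ < 1 := by rw [hδ, div_lt_one (by positivity)]; linarith
  have hδ0 : 0 < δ := by positivity
  have hxδ : |x| ≤ δ := by rw [hδ, le_div_iff₀ (by positivity)]; exact hx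
  have hder : ∀ y : ℝ, |y| ≤ δ → HasDerivAt k
      ((1 + y) ^ (α - 1) * (y ^ 3 * ((α + 3) * t * (3 + (4 + α) * y)))) y := by
    intro y hy
    have hy1 : 0 < 1 + y := by have := (abs_le.1 hy).1; linarith
    have h1 : HasDerivAt P (-α + α * (α + 1) * y - 3 * t * y ^ 2
        + 4 * ((α + 3) * t) * y ^ 3) y := by
      have hid := hasDerivAt_id y
      have := ((((hid.const_mul α).const_sub 1).add
        ((hid.pow 2).const_mul (α * (α + 1) / 2))).sub ((hid.pow 3).const_mul t)).add
        ((hid.pow 4).const_mul ((α + 3) * t))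
      refine this.congr_deriv ?_
      simp
      ring
    have h2 : HasDerivAt (fun y : ℝ => (1 + y) ^ α) (1 * α * (1 + y) ^ (α - 1)) y :=
      ((hasDerivAt_id y).const_add 1).rpow_const (Or.inl hy1.ne')
    refine (h1.mul h2).congr_deriv ?_
    have h3 : (1 + y) ^ α = (1 + y) ^ (α - 1) * (1 + y) := by
      rw [← Real.rpow_add_one hy1.ne']; congr 1; ring
    rw [h3]
    simp only [hP, ht]
    ring
  have hbr : ∀ y : ℝ, |y| ≤ δ → 0 ≤ (α + 3) * t * (3 + (4 + α) * y) := by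
    intro y hy
    have h1 := (abs_le.1 hy).1
    have h2 : (4 + α) * δ = 1 := by rw [hδ]; field_simp; ring
    have : 0 ≤ 3 + (4 + α) * y := by nlinarith
    positivity
  have hk0 : k 0 = 1 := by simp [hk, hP]
  have hkey : 1 ≤ k x := by
    rcases le_total 0 x with h0 | h0
    · have hm : MonotoneOn k (Set.Icc 0 δ) := by
        refine monotoneOn_of_deriv_nonneg (convex_Icc _ _) ?_ ?_ ?_
        · intro y hy
          exact (hder y (abs_le.2 ⟨by linarith [hy.1], hy.2⟩)).continuousAt.continuousWithinAt
        · intro y hy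
          rw [interior_Icc] at hy
          exact (hder y (abs_le.2 ⟨by linarith [hy.1], hy.2.le⟩)).differentiableAt.differentiableWithinAt
        · intro y hy
          rw [interior_Icc] at hy
          have hy' : |y| ≤ δ := abs_le.2 ⟨by linarith [hy.1], hy.2.le⟩
          rw [(hder y hy').deriv]
          have := hbr y hy'
          have h1 : 0 ≤ (1 + y) ^ (α - 1) := Real.rpow_nonneg (by linarith [hy.1]) _
          have h2 : 0 ≤ y ^ 3 := pow_nonneg hy.1.le 3
          positivity
      rw [← hk0]
      exact hm ⟨le_rfl, hδ0.le⟩ ⟨h0, (le_abs_self x).trans hxδ⟩ h0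
    · have hm : AntitoneOn k (Set.Icc (-δ) 0) := by
        refine antitoneOn_of_deriv_nonpos (convex_Icc _ _) ?_ ?_ ?_
        · intro y hy
          exact (hder y (abs_le.2 ⟨hy.1, by linarith [hy.2]⟩)).continuousAt.continuousWithinAt
        · intro y hy
          rw [interior_Icc] at hy
          exact (hder y (abs_le.2 ⟨hy.1.le, by linarith [hy.2]⟩)).differentiableAt.differentiableWithinAt
        · intro y hy
          rw [interior_Icc] at hy
          have hy' : |y| ≤ δ := abs_le.2 ⟨hy.1.le, by linarith [hy.2]⟩
          rw [(hder y hy').deriv]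
          have := hbr y hy'
          have h1 : 0 ≤ (1 + y) ^ (α - 1) := Real.rpow_nonneg (by linarith [hy.1]) _
          have h2 : y ^ 3 ≤ 0 := by
            have h3 := hy.2.le
            have : y ^ 3 = y * y ^ 2 := by ring
            rw [this]; exact mul_nonpos_of_nonpos_of_nonneg h3 (sq_nonneg y)
          exact mul_nonpos_of_nonneg_of_nonpos h1 (mul_nonpos_of_nonpos_of_nonneg h2 this)
      rw [← hk0]
      exact hm ⟨(abs_le.1 hxδ).1, h0⟩ ⟨by linarith, le_rfl⟩ h0
  have hx1 : 0 < 1 + x := by have := (abs_le.1 hxδ).1; linarith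
  have hp : 0 < (1 + x) ^ α := Real.rpow_pos_of_pos hx1 α
  rw [Real.rpow_neg hx1.le, inv_le_iff_one_le_mul₀ hp]
  exact hkey

lemma pow_one (α s t : ℝ) (hα : 0 < α) (hs : 9 * (α + 4) ^ 2 ≤ s) (ht : t ^ 2 ≤ 4 * s) :
    (s + 1 + t) ^ (-α) ≤ s ^ (-α) * (1 - α * ((1 + t) / s) + α * (α + 1) / 2 * ((1 + t) / s) ^ 2
      - α * (α + 1) * (α + 2) / 6 * ((1 + t) / s) ^ 3
      + (α + 3) * (α * (α + 1) * (α + 2) / 6) * ((1 + t) / s) ^ 4) := by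
  have hs1 : 1 ≤ s := by nlinarith
  have hs0 : 0 < s := by linarith
  have h1 : (1 + t) ^ 2 ≤ 9 * s := by nlinarith [sq_nonneg (t - 2)]
  have h2 : |1 + t| * (α + 4) ≤ s := by
    apply abs_le_of_sq_le_sq' _ hs0.le |>.2
    rw [mul_pow, sq_abs]
    nlinarith [sq_nonneg (α + 4)]
  have h3 : |(1 + t) / s| * (α + 4) ≤ 1 := by
    rw [abs_div, abs_of_pos hs0, div_mul_eq_mul_div, div_le_one hs0]; exact h2
  have h5 : -1 ≤ (1 + t) / s := by
    have h6 := neg_abs_le ((1 + t) / s)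
    have : |(1 + t) / s| ≤ 1 := by nlinarith [abs_nonneg ((1 + t) / s)]
    linarith
  have h4 : s + 1 + t = s * (1 + (1 + t) / s) := by field_simp; ring
  rw [h4, Real.mul_rpow hs0.le (by linarith)]
  exact mul_le_mul_of_nonneg_left (pow_taylor α _ hα h3) (Real.rpow_nonneg hs0.le _)

lemma pow_pair (α s t : ℝ) (hα : 0 < α) (hs : 9 * (α + 4) ^ 2 ≤ s) (ht : t ^ 2 ≤ 4 * s) :
    (s + 1 + t) ^ (-α) + (s + 1 - t) ^ (-α) ≤ s ^ (-α) * (2 - 2 * α / s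
      + (α * (α + 1) * (1 + t ^ 2) + 82 * ((α + 3) * (α * (α + 1) * (α + 2) / 6))) / s ^ 2) := by
  have h1 := pow_one α s t hα hs ht
  have h2 := pow_one α s (-t) hα hs (by nlinarith)
  have hs1 : 1 ≤ s := by nlinarith
  have hs0 : 0 < s := by linarith
  rw [← sub_eq_add_neg] at h2
  refine (add_le_add h1 h2).trans ?_
  rw [← mul_add]
  refine mul_le_mul_of_nonneg_left ?_ (Real.rpow_nonneg hs0.le _)
  set c : ℝ := α * (α + 1) * (α + 2) / 6 with hc
  have hc0 : 0 < c := by positivity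
  have e1 : ((1 + t) / s) ^ 4 + ((1 + -t) / s) ^ 4 ≤ 82 / s ^ 2 := by
    rw [div_pow, div_pow, ← add_div, div_le_div_iff₀ (by positivity) (by positivity)]
    have : (1 + t) ^ 4 + (1 + -t) ^ 4 ≤ 82 * s ^ 2 := by
      have : (1 + t) ^ 4 + (1 + -t) ^ 4 = 2 + 12 * t ^ 2 + 2 * (t ^ 2) ^ 2 := by ring
      rw [this]
      have : (t ^ 2) ^ 2 ≤ (4 * s) ^ 2 := pow_le_pow_left₀ (sq_nonneg t) ht 2
      nlinarith
    calc _ ≤ 82 * s ^ 2 * s ^ 2 := by gcongr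
      _ = 82 * s ^ 4 := by ring
  have e2 : 0 ≤ ((1 + t) / s) ^ 3 + ((1 + -t) / s) ^ 3 := by
    rw [div_pow, div_pow, ← add_div]
    apply div_nonneg _ (by positivity)
    nlinarith [sq_nonneg t]
  have e3 : α * (α + 1) / 2 * ((1 + t) / s) ^ 2 + α * (α + 1) / 2 * ((1 + -t) / s) ^ 2
      = α * (α + 1) * (1 + t ^ 2) / s ^ 2 := by
    field_simp; ring
  have e4 : α * ((1 + t) / s) + α * ((1 + -t) / s) = 2 * α / s := by
    field_simp; ring
  have e5 := mul_le_mul_of_nonneg_left e1 (show 0 ≤ (α + 3) * c by positivity)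
  have e6 := mul_nonneg hc0.le e2
  have e7 : (α * (α + 1) * (1 + t ^ 2) + 82 * ((α + 3) * c)) / s ^ 2
    = α * (α + 1) * (1 + t ^ 2) / s ^ 2 + (α + 3) * c * (82 / s ^ 2) := by
    field_simp
  rw [e7]
  linarith

/-- `(|z|² + a)^{-(ν-2)/2}` is superharmonic on `ℤ^ν` for `a` large. -/
lemma exists_a (ν : ℕ) (hν : 3 ≤ ν) : ∃ a : ℝ, 1 ≤ a ∧
    ∀ (n : ℕ) (J : Finset (Fin n)), J.card = ν → ∀ (z : Fin n → ℝ) (s : ℝ),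
      s = ∑ i ∈ J, z i ^ 2 + a →
      ∑ i ∈ J, ((s + 1 + 2 * z i) ^ (-(((ν : ℝ) - 2) / 2))
        + (s + 1 - 2 * z i) ^ (-(((ν : ℝ) - 2) / 2))) ≤ 2 * ν * s ^ (-(((ν : ℝ) - 2) / 2)) := by
  set α : ℝ := ((ν : ℝ) - 2) / 2 with hα
  have hν' : (3 : ℝ) ≤ ν := by exact_mod_cast hν
  have hα0 : 0 < α := by rw [hα]; linarith
  have hνα : (ν : ℝ) = 2 * (α + 1) := by rw [hα]; ring
  set D : ℝ := 82 * ((α + 3) * (α * (α + 1) * (α + 2) / 6)) with hD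
  have hD0 : 0 < D := by positivity
  set a : ℝ := 9 * (α + 4) ^ 2 + (α * (α + 1) * ν + ν * D) / (4 * (α * (α + 1))) with ha
  have ha9 : 9 * (α + 4) ^ 2 ≤ a := by
    rw [ha]; have : 0 ≤ (α * (α + 1) * ν + ν * D) / (4 * (α * (α + 1))) := by positivity
    linarith
  have ha4 : α * (α + 1) * ν + ν * D ≤ 4 * (α * (α + 1)) * a := by
    rw [ha, mul_add (4 * (α * (α + 1))), mul_div_cancel₀ _ (by positivity)]
    have : 0 ≤ 4 * (α * (α + 1)) * (9 * (α + 4) ^ 2) := by positivity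
    linarith
  refine ⟨a, by nlinarith, ?_⟩
  intro n J hJ z s hs
  have hsum0 : 0 ≤ ∑ i ∈ J, z i ^ 2 := Finset.sum_nonneg fun i _ => sq_nonneg _
  have has : a ≤ s := by linarith
  have hs0 : 0 < s := by nlinarith
  have hterm : ∀ i ∈ J, (s + 1 + 2 * z i) ^ (-α) + (s + 1 - 2 * z i) ^ (-α)
      ≤ s ^ (-α) * (2 - 2 * α / s + (α * (α + 1) * (1 + (2 * z i) ^ 2) + D) / s ^ 2) := by
    intro i hi
    apply pow_pair α s _ hα0 (by linarith)
    have : z i ^ 2 ≤ ∑ i ∈ J, z i ^ 2 :=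
      Finset.single_le_sum (f := fun i => z i ^ 2) (fun i _ => sq_nonneg _) hi
    nlinarith
  refine (Finset.sum_le_sum hterm).trans ?_
  rw [← Finset.mul_sum, mul_comm (2 * (ν : ℝ))]
  refine mul_le_mul_of_nonneg_left ?_ (Real.rpow_nonneg hs0.le _)
  have : ∑ i ∈ J, (2 - 2 * α / s + (α * (α + 1) * (1 + (2 * z i) ^ 2) + D) / s ^ 2)
      = 2 * ν - 2 * α * ν / s + (α * (α + 1) * (ν + 4 * (s - a)) + ν * D) / s ^ 2 := by
    have h4 : s - a = ∑ i ∈ J, z i ^ 2 := by rw [hs]; ring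
    rw [h4, Finset.sum_add_distrib, ← Finset.sum_div, Finset.sum_add_distrib, ← Finset.mul_sum,
      Finset.sum_add_distrib]
    simp only [Finset.sum_const, hJ, nsmul_eq_mul, mul_pow, ← Finset.mul_sum]
    ring
  rw [this]
  have h6 : 2 * α * ν / s = (2 * α * ν * s) / s ^ 2 := by field_simp
  rw [h6]
  have h7 : (α * (α + 1) * (ν + 4 * (s - a)) + ν * D) / s ^ 2 ≤ (2 * α * ν * s) / s ^ 2 := by
    gcongr
    have : 2 * α * ν * s = 4 * (α * (α + 1)) * s := by rw [hνα]; ring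
    rw [this]
    linarith
  linarith

lemma single_pm_inj (d : ℕ) : Function.Injective
    (fun p : Fin (d + 1) × Bool => (Pi.single p.1 (if p.2 then (1 : ℤ) else -1) : Lat d)) := by
  rintro ⟨i, b⟩ ⟨i', b'⟩ h
  simp only at h
  have h1 := congrFun h i
  rw [Pi.single_eq_same] at h1
  by_cases hi : i = i'
  · subst hi
    rw [Pi.single_eq_same] at h1
    cases b <;> cases b' <;> simp_all
  · rw [Pi.single_eq_of_ne hi] at h1
    cases b <;> simp_all

lemma sum_unitVecs {M : Type*} [AddCommMonoid M] (d : ℕ) (f : Lat d → M) :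
    ∑ e ∈ unitVecs d, f e = ∑ i : Fin (d + 1), (f (Pi.single i 1) + f (Pi.single i (-1))) := by
  unfold unitVecs
  rw [Finset.sum_image (fun x _ y _ h => single_pm_inj d h), Fintype.sum_prod_type]
  simp

lemma mem_unitVecs (d : ℕ) (e : Lat d) :
    e ∈ unitVecs d ↔ ∃ i, e = Pi.single i 1 ∨ e = Pi.single i (-1) := by
  unfold unitVecs
  simp only [Finset.mem_image, Finset.mem_univ, true_and, Prod.exists, Bool.exists_bool]
  constructor
  · rintro ⟨i, h | h⟩
    · exact ⟨i, Or.inr (by simpa using h.symm)⟩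
    · exact ⟨i, Or.inl (by simpa using h.symm)⟩
  · rintro ⟨i, h | h⟩
    · exact ⟨i, Or.inr (by simpa using h.symm)⟩
    · exact ⟨i, Or.inl (by simpa using h.symm)⟩

lemma card_unitVecs (d : ℕ) : (unitVecs d).card = 2 * (d + 1) := by
  rw [Finset.card_eq_sum_ones, sum_unitVecs]; simp; ring

/-- Representative of a point of the cylinder in `ℤ^{d+1}`. -/
def rep (d N : ℕ) (w : Cyl d N) : Lat d :=
  Fin.snoc (α := fun _ => ℤ) (fun i => (w.1 i).valMinAbs) w.2

@[simp] lemma rep_last (d N : ℕ) (w : Cyl d N) : rep d N w (Fin.last d) = w.2 := by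
  simp [rep]

@[simp] lemma rep_castSucc (d N : ℕ) (w : Cyl d N) (i : Fin d) :
    rep d N w i.castSucc = (w.1 i).valMinAbs := by
  simp [rep]

lemma zmod_step (N : ℕ) (hN : 4 ≤ N) (b : ZMod N) (ε : ℤ) (hε : |ε| ≤ 1) :
    (b + (ε : ZMod N)).valMinAbs = b.valMinAbs + ε ∨
      (((b + (ε : ZMod N)).valMinAbs ^ 2 ≤ (b.valMinAbs + ε) ^ 2 ∧
        (N : ℤ) ^ 2 ≤ 16 * (b + (ε : ZMod N)).valMinAbs ^ 2) ∧
        (N : ℤ) ≤ 2 * |b.valMinAbs + ε|) := by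
  have : NeZero N := ⟨by omega⟩
  set t := (b + (ε : ZMod N)).valMinAbs with ht
  set s := b.valMinAbs + ε with hs
  have h1 := ZMod.valMinAbs_mem_Ioc b
  have h2 := ZMod.valMinAbs_mem_Ioc (b + (ε : ZMod N))
  rw [← ht] at h2
  obtain ⟨h2a, h2b⟩ := h2
  obtain ⟨h1a, h1b⟩ := h1
  have hcong : ((t - s : ℤ) : ZMod N) = 0 := by
    rw [ht, hs]; push_cast; simp
  rw [ZMod.intCast_zmod_eq_zero_iff_dvd] at hcong
  obtain ⟨k, hk⟩ := hcong
  by_cases hts : t = s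
  · exact Or.inl hts
  right
  have hk0 : k ≠ 0 := by rintro rfl; apply hts; linarith
  have habs : (N : ℤ) ≤ |t - s| := by
    rw [hk, abs_mul]
    have : 1 ≤ |k| := Int.one_le_abs hk0
    have h3 : |(N : ℤ)| = N := abs_of_nonneg (by positivity)
    rw [h3]; nlinarith
  have h4 : |t - s| ≤ |t| + |s| := abs_sub t s
  have h5 : 2 * |t| ≤ N := by rcases abs_cases t with h | h <;> omega
  have h6 : 2 * |s| ≤ N + 2 := by
    have hsb : |s| ≤ |b.valMinAbs| + |ε| := abs_add_le _ _
    rcases abs_cases b.valMinAbs with h | h <;> omega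
  have hN4 : (4 : ℤ) ≤ N := by exact_mod_cast hN
  refine ⟨⟨?_, ?_⟩, by omega⟩
  · rw [sq_le_sq]; omega
  · have : (N : ℤ) ≤ 4 * |t| := by omega
    rw [← sq_abs t]; nlinarith

lemma rep_step_other (d N : ℕ) (w : Cyl d N) (e : Lat d) (k : Fin (d + 1)) (hk : e k = 0) :
    rep d N (w + projE d N e) k = rep d N w k := by
  induction k using Fin.lastCases with
  | last => simp [projE, hk]
  | cast i => simp [projE, hk]

lemma rep_step (d N : ℕ) (hN : 4 ≤ N) (w : Cyl d N) (e : Lat d) (k : Fin (d + 1))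
    (hk : |e k| ≤ 1) :
    rep d N (w + projE d N e) k = rep d N w k + e k ∨
      (((rep d N (w + projE d N e) k) ^ 2 ≤ (rep d N w k + e k) ^ 2 ∧
        (N : ℤ) ^ 2 ≤ 16 * (rep d N (w + projE d N e) k) ^ 2) ∧
        (N : ℤ) ≤ 2 * |rep d N w k + e k| ∧ k ≠ Fin.last d) := by
  induction k using Fin.lastCases with
  | last => left; simp [projE]
  | cast i =>
    have := zmod_step N hN (w.1 i) (e i.castSucc) hk
    simp only [rep_castSucc, projE, Prod.fst_add, Pi.add_apply]
    rcases this with h | h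
    · exact Or.inl h
    · exact Or.inr ⟨h.1, h.2, Fin.castSucc_ne_last i⟩

lemma sum_sq_single (n : ℕ) (J : Finset (Fin n)) (c : Fin n → ℝ) (z : Fin n → ℤ) (i : Fin n)
    (ε : ℤ) : ∑ k ∈ J, c k * (((z + (Pi.single i ε : Fin n → ℤ)) k : ℤ) : ℝ) ^ 2
      = ∑ k ∈ J, c k * (z k : ℝ) ^ 2
        + if i ∈ J then c i * (2 * ε * z i + ε ^ 2) else 0 := by
  rw [← Finset.sum_ite_eq' J i (fun i => c i * (2 * (ε : ℝ) * z i + (ε : ℝ) ^ 2)),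
    ← Finset.sum_add_distrib]
  refine Finset.sum_congr rfl fun k _ => ?_
  by_cases h : k = i
  · subst h; simp; ring
  · simp [h]

lemma tangent_pow (α x y : ℝ) (hα : 0 < α) (hx : 0 < x) (hxy : x ≤ y) :
    x ^ (-α) - y ^ (-α) ≤ α * x ^ (-α - 1) * (y - x) := by
  have hy : y = x * (1 + (y - x) / x) := by field_simp; ring
  set t := (y - x) / x with ht
  have ht0 : 0 ≤ t := div_nonneg (by linarith) hx.le
  have h1 : 1 - α * t ≤ (1 + t) ^ (-α) := by
    rw [Real.rpow_def_of_pos (by linarith)]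
    have h2 := Real.add_one_le_exp (Real.log (1 + t) * -α)
    have h3 := Real.log_le_sub_one_of_pos (show 0 < 1 + t by linarith)
    nlinarith
  have h2 : y - x = x * t := by rw [ht]; field_simp
  rw [h2]
  have h3 : x ^ (-α - 1) * x = x ^ (-α) := by
    rw [← Real.rpow_add_one hx.ne']; congr 1; ring
  have h4 : α * x ^ (-α - 1) * (x * t) = x ^ (-α) * (α * t) := by rw [← h3]; ring
  rw [h4, hy, Real.mul_rpow hx.le (by linarith)]
  have := Real.rpow_pos_of_pos hx (-α)
  nlinarith

/-- coefficients of the harmonic quadratic form -/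
noncomputable def kap (d : ℕ) (k : Fin (d + 1)) : ℝ := if k = Fin.last d then -(d : ℝ) else 1

lemma sum_kap (d : ℕ) : ∑ k, kap d k = 0 := by
  rw [Fin.sum_univ_castSucc]
  simp [kap]

/-- The explicit barrier on `ℤ^{d+1}` -/
noncomputable def Phi (d : ℕ) (α a c K : ℝ) (J : Finset (Fin (d + 1))) (z : Lat d) : ℝ :=
  (∑ k ∈ J, 1 * (z k : ℝ) ^ 2 + a) ^ (-α) + c * (∑ k, kap d k * (z k : ℝ) ^ 2 + K)

lemma Phi_super (d ν : ℕ) (a c K : ℝ)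
    (ha : ∀ (n : ℕ) (J : Finset (Fin n)), J.card = ν → ∀ (z : Fin n → ℝ) (s : ℝ),
      s = ∑ i ∈ J, z i ^ 2 + a →
      ∑ i ∈ J, ((s + 1 + 2 * z i) ^ (-(((ν : ℝ) - 2) / 2))
        + (s + 1 - 2 * z i) ^ (-(((ν : ℝ) - 2) / 2))) ≤ 2 * ν * s ^ (-(((ν : ℝ) - 2) / 2)))
    (J : Finset (Fin (d + 1))) (hJ : J.card = ν) (z : Lat d) :
    ∑ e ∈ unitVecs d, Phi d (((ν : ℝ) - 2) / 2) a c K J (z + e)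
      ≤ 2 * (d + 1) * Phi d (((ν : ℝ) - 2) / 2) a c K J z := by
  set α : ℝ := ((ν : ℝ) - 2) / 2 with hα
  rw [sum_unitVecs]
  unfold Phi
  simp only [sum_sq_single]
  set s : ℝ := ∑ k ∈ J, 1 * (z k : ℝ) ^ 2 + a with hs
  set q : ℝ := ∑ k, kap d k * (z k : ℝ) ^ 2 with hq
  have h1 := ha (d + 1) J hJ (fun k => (z k : ℝ)) s (by simp [hs])
  have key : ∀ i : Fin (d + 1),
      ((∑ k ∈ J, 1 * (z k : ℝ) ^ 2 + (if i ∈ J then 1 * (2 * ((1 : ℤ) : ℝ) * z i + ((1 : ℤ) : ℝ) ^ 2) else 0) + a) ^ (-α)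
        + c * (q + (if i ∈ Finset.univ then kap d i * (2 * ((1 : ℤ) : ℝ) * z i + ((1 : ℤ) : ℝ) ^ 2) else 0) + K))
      + ((∑ k ∈ J, 1 * (z k : ℝ) ^ 2 + (if i ∈ J then 1 * (2 * ((-1 : ℤ) : ℝ) * z i + ((-1 : ℤ) : ℝ) ^ 2) else 0) + a) ^ (-α)
        + c * (q + (if i ∈ Finset.univ then kap d i * (2 * ((-1 : ℤ) : ℝ) * z i + ((-1 : ℤ) : ℝ) ^ 2) else 0) + K))
      = 2 * s ^ (-α) + (if i ∈ J then ((s + 1 + 2 * z i) ^ (-α) + (s + 1 - 2 * z i) ^ (-α) - 2 * s ^ (-α)) else 0)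
        + (2 * (c * (q + K)) + 2 * c * kap d i) := by
    intro i
    by_cases hi : i ∈ J
    · simp only [hi, if_true, Finset.mem_univ]
      have e1 : ∑ k ∈ J, 1 * (z k : ℝ) ^ 2 + 1 * (2 * ((1 : ℤ) : ℝ) * z i + ((1 : ℤ) : ℝ) ^ 2) + a
        = s + 1 + 2 * z i := by rw [hs]; push_cast; ring
      have e2 : ∑ k ∈ J, 1 * (z k : ℝ) ^ 2 + 1 * (2 * ((-1 : ℤ) : ℝ) * z i + ((-1 : ℤ) : ℝ) ^ 2) + a
        = s + 1 - 2 * z i := by rw [hs]; push_cast; ring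
      rw [e1, e2]
      push_cast
      ring
    · simp only [hi, if_false, Finset.mem_univ, if_true, add_zero]
      rw [← hs]
      push_cast
      ring
  rw [Finset.sum_congr rfl fun i _ => key i]
  have hk0 : ∑ i, 2 * c * kap d i = 0 := by rw [← Finset.mul_sum, sum_kap, mul_zero]
  rw [Finset.sum_add_distrib, Finset.sum_add_distrib, Finset.sum_ite_mem, Finset.univ_inter,
    Finset.sum_add_distrib, hk0, Finset.sum_sub_distrib]
  simp only [Finset.sum_const, Finset.card_univ, Fintype.card_fin, hJ, nsmul_eq_mul]
  push_cast
  linarith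

lemma Phi_wrap (d ν : ℕ) (hν : 3 ≤ ν) (N : ℕ) (hN : 4 ≤ N) (a c K : ℝ) (ha : 1 ≤ a)
    (hc : c = ((ν : ℝ) - 2) / 2 * (4 / N) ^ ν)
    (J : Finset (Fin (d + 1))) (z z' : Lat d) (i : Fin (d + 1)) (hi : i ≠ Fin.last d)
    (hzz : ∀ k, k ≠ i → z' k = z k) (h1 : z' i ^ 2 ≤ z i ^ 2) (h2 : (N : ℤ) ^ 2 ≤ 16 * z' i ^ 2) :
    Phi d (((ν : ℝ) - 2) / 2) a c K J z' ≤ Phi d (((ν : ℝ) - 2) / 2) a c K J z := by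
  set α : ℝ := ((ν : ℝ) - 2) / 2 with hα
  have hν' : (3 : ℝ) ≤ ν := by exact_mod_cast hν
  have hα0 : 0 < α := by rw [hα]; linarith
  have hN0 : (0 : ℝ) < N := by have : 0 < N := by omega
                               exact_mod_cast this
  have hc0 : 0 ≤ c := by rw [hc]; positivity
  have h1r : (z' i : ℝ) ^ 2 ≤ (z i : ℝ) ^ 2 := by exact_mod_cast h1
  have h2r : (N : ℝ) ^ 2 ≤ 16 * (z' i : ℝ) ^ 2 := by exact_mod_cast h2
  have split : ∀ (S : Finset (Fin (d + 1))) (f : Fin (d + 1) → ℝ) , i ∈ S →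
      ∑ k ∈ S, f k * (z k : ℝ) ^ 2 - ∑ k ∈ S, f k * (z' k : ℝ) ^ 2
        = f i * ((z i : ℝ) ^ 2 - (z' i : ℝ) ^ 2) := by
    intro S f hS
    rw [← Finset.sum_sub_distrib, Finset.sum_eq_single_of_mem i hS]
    · ring
    · intro k _ hk
      rw [hzz k hk]; ring
  have hq := split Finset.univ (kap d) (Finset.mem_univ i)
  have hki : kap d i = 1 := by simp [kap, hi]
  rw [hki, one_mul] at hq
  unfold Phi
  by_cases hJ : i ∈ J
  · have hs := split J (fun _ => 1) hJ
    simp only [one_mul] at hs ⊢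
    set s' := ∑ k ∈ J, (z' k : ℝ) ^ 2
    set s := ∑ k ∈ J, (z k : ℝ) ^ 2
    have hs' : (z' i : ℝ) ^ 2 ≤ s' :=
      Finset.single_le_sum (f := fun k => (z' k : ℝ) ^ 2) (fun _ _ => sq_nonneg _) hJ
    have hx : (N : ℝ) ^ 2 / 16 ≤ s' + a := by linarith
    have hx0 : 0 < (N : ℝ) ^ 2 / 16 := by positivity
    have ht := tangent_pow α (s' + a) (s + a) hα0 (by linarith) (by linarith)
    have hcc : α * (s' + a) ^ (-α - 1) ≤ c := by
      rw [hc]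
      refine mul_le_mul_of_nonneg_left ?_ hα0.le
      have e1 : (s' + a) ^ (-α - 1) ≤ ((N : ℝ) ^ 2 / 16) ^ (-α - 1) :=
        Real.rpow_le_rpow_of_nonpos hx0 hx (by linarith)
      refine e1.trans (le_of_eq ?_)
      have e2 : (N : ℝ) ^ 2 / 16 = ((N : ℝ) / 4) ^ (2 : ℝ) := by
        rw [Real.rpow_two]; ring
      rw [e2, ← Real.rpow_mul (by positivity)]
      have e3 : 2 * (-α - 1) = -(ν : ℝ) := by rw [hα]; ring
      rw [e3, Real.rpow_neg (by positivity), Real.rpow_natCast, ← inv_pow, inv_div]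
    have h6 : α * (s' + a) ^ (-α - 1) * (s + a - (s' + a)) ≤ c * (s + a - (s' + a)) :=
      mul_le_mul_of_nonneg_right hcc (by linarith)
    have h7 : s + a - (s' + a) = (z i : ℝ) ^ 2 - (z' i : ℝ) ^ 2 := by linarith
    rw [h7] at h6 ht
    rw [← hq] at h6 ht
    nlinarith
  · have hs : ∑ k ∈ J, 1 * (z' k : ℝ) ^ 2 = ∑ k ∈ J, 1 * (z k : ℝ) ^ 2 := by
      refine Finset.sum_congr rfl fun k hk => ?_
      rw [hzz k (fun h => hJ (h ▸ hk))]
    rw [hs]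
    have : c * (∑ k, kap d k * (z' k : ℝ) ^ 2 + K) ≤ c * (∑ k, kap d k * (z k : ℝ) ^ 2 + K) := by
      apply mul_le_mul_of_nonneg_left _ hc0
      linarith
    linarith

/-- Package: explicit barriers on the cylinder. -/
lemma exists_bar (d ν : ℕ) (hd : 1 ≤ d) (hν : 3 ≤ ν) : ∃ C : ℝ, 0 < C ∧
    ∀ J : Finset (Fin (d + 1)), J.card = ν → ∀ N : ℕ, 4 ≤ N → ∃ bar : Cyl d N → ℝ,
      (∀ w, ∑ e ∈ unitVecs d, bar (w + projE d N e) ≤ 2 * (d + 1) * bar w) ∧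
      (∀ w : Cyl d N, |w.2| ≤ 3 * N → 0 ≤ bar w) ∧
      (∀ w : Cyl d N, |w.2| ≤ 3 * N → (∀ k ∈ J, rep d N w k = 0) → 1 ≤ bar w) ∧
      (∀ w : Cyl d N, ∀ k ∈ J, ∀ t : ℝ, 0 < t → t ≤ |(rep d N w k : ℝ)| →
        bar w ≤ C * ((1 / t) ^ (ν - 2) + (1 / (N : ℝ)) ^ (ν - 2))) ∧
      (∀ w : Cyl d N, bar w ≤ C) := by
  obtain ⟨a, ha1, ha⟩ := exists_a ν hν
  set α : ℝ := ((ν : ℝ) - 2) / 2 with hα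
  have hν' : (3 : ℝ) ≤ ν := by exact_mod_cast hν
  have hα0 : 0 < α := by rw [hα]; linarith
  have ha0 : 0 < a := by linarith
  have hA : 0 < a ^ α := Real.rpow_pos_of_pos ha0 α
  set C0 : ℝ := α * 4 ^ ν * (10 * d) with hC0
  have hd' : (1 : ℝ) ≤ d := by exact_mod_cast hd
  have hC00 : 0 < C0 := by positivity
  refine ⟨a ^ α * (1 + C0), by positivity, ?_⟩
  intro J hJ N hN
  have : NeZero N := ⟨by omega⟩
  have hN4 : (4 : ℝ) ≤ N := by exact_mod_cast hN
  have hN0 : (0 : ℝ) < N := by linarith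
  set c : ℝ := α * (4 / N) ^ ν with hc
  have hc0 : 0 < c := by positivity
  set K : ℝ := 9 * d * (N : ℝ) ^ 2 with hK
  have hcN : c * (10 * d * (N : ℝ) ^ 2) = C0 * (1 / (N : ℝ)) ^ (ν - 2) := by
    rw [hc, hC0]
    obtain ⟨m, rfl⟩ : ∃ m, ν = m + 2 := ⟨ν - 2, by omega⟩
    simp only [Nat.add_sub_cancel]
    rw [div_pow, pow_add _ m 2, one_div, inv_pow]
    field_simp
    ring
  have hqlow : ∀ w : Cyl d N, |w.2| ≤ 3 * N →
      0 ≤ ∑ k, kap d k * (rep d N w k : ℝ) ^ 2 + K := by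
    intro w hw
    rw [Fin.sum_univ_castSucc]
    have h1 : 0 ≤ ∑ i : Fin d, kap d i.castSucc * (rep d N w i.castSucc : ℝ) ^ 2 :=
      Finset.sum_nonneg fun i _ => by simp [kap]; positivity
    have h2 : ((w.2 : ℝ)) ^ 2 ≤ (3 * N) ^ 2 := by
      have h3 : |(w.2 : ℝ)| ≤ 3 * N := by exact_mod_cast hw
      rw [← sq_abs]; gcongr
    simp only [kap, if_true, rep_last] at h1 ⊢
    rw [hK]
    nlinarith
  have hqup : ∀ w : Cyl d N, ∑ k, kap d k * (rep d N w k : ℝ) ^ 2 + K ≤ 10 * d * (N : ℝ) ^ 2 := by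
    intro w
    rw [Fin.sum_univ_castSucc]
    have h1 : ∑ i : Fin d, kap d i.castSucc * (rep d N w i.castSucc : ℝ) ^ 2
        ≤ ∑ i : Fin d, (N : ℝ) ^ 2 := by
      refine Finset.sum_le_sum fun i _ => ?_
      simp only [kap, Fin.castSucc_ne_last, if_false, rep_castSucc, one_mul]
      have h3 := ZMod.valMinAbs_mem_Ioc (w.1 i)
      have h4 : |(w.1 i).valMinAbs| ≤ N := by
        rcases abs_cases (w.1 i).valMinAbs with h | h <;> have := h3.1 <;> have := h3.2 <;> omega
      have h5 : |((w.1 i).valMinAbs : ℝ)| ≤ N := by exact_mod_cast h4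
      rw [← sq_abs]; gcongr
    simp only [Finset.sum_const, Finset.card_univ, Fintype.card_fin, nsmul_eq_mul] at h1
    have h2 : kap d (Fin.last d) * (rep d N w (Fin.last d) : ℝ) ^ 2 ≤ 0 := by
      simp [kap]; positivity
    rw [hK]
    linarith
  have hS0 : ∀ w : Cyl d N, 0 ≤ ∑ k ∈ J, 1 * (rep d N w k : ℝ) ^ 2 := fun w =>
    Finset.sum_nonneg fun k _ => by positivity
  have hup : ∀ w : Cyl d N, Phi d α a c K J (rep d N w) ≤
      (∑ k ∈ J, 1 * (rep d N w k : ℝ) ^ 2 + a) ^ (-α) + C0 * (1 / (N : ℝ)) ^ (ν - 2) := by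
    intro w
    unfold Phi
    rw [← hcN]
    gcongr
    exact hqup w
  refine ⟨fun w => a ^ α * Phi d α a c K J (rep d N w), ?_, ?_, ?_, ?_, ?_⟩
  · intro w
    rw [← Finset.mul_sum, mul_left_comm]
    refine mul_le_mul_of_nonneg_left ?_ hA.le
    refine le_trans (Finset.sum_le_sum fun e he => ?_) (Phi_super d ν a c K ha J hJ (rep d N w))
    obtain ⟨i, hi⟩ := (mem_unitVecs d e).1 he
    have hei : |e i| ≤ 1 := by rcases hi with h | h <;> simp [h]
    have hek : ∀ k, k ≠ i → e k = 0 := by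
      intro k hk; rcases hi with h | h <;> simp [h, hk]
    rcases rep_step d N hN w e i hei with h | h
    · have : rep d N (w + projE d N e) = rep d N w + e := by
        ext k
        by_cases hk : k = i
        · subst hk; simpa using h
        · rw [rep_step_other d N w e k (hek k hk)]; simp [hek k hk]
      rw [this]
    · refine Phi_wrap d ν hν N hN a c K ha1 hc J _ _ i h.2.2 ?_ ?_ ?_
      · intro k hk
        rw [rep_step_other d N w e k (hek k hk)]; simp [hek k hk]
      · simpa using h.1.1
      · simpa using h.1.2
  · intro w hw
    have h1 := hqlow w hw
    have h2 : 0 ≤ (∑ k ∈ J, 1 * (rep d N w k : ℝ) ^ 2 + a) ^ (-α) :=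
      Real.rpow_nonneg (by linarith [hS0 w]) _
    unfold Phi
    positivity
  · intro w hw h0
    have h1 := hqlow w hw
    have h2 : ∑ k ∈ J, 1 * (rep d N w k : ℝ) ^ 2 = 0 :=
      Finset.sum_eq_zero fun k hk => by simp [h0 k hk]
    unfold Phi
    beta_reduce
    rw [h2, zero_add, mul_add, ← Real.rpow_add ha0]
    simp only [add_neg_cancel, Real.rpow_zero]
    have : 0 ≤ a ^ α * (c * (∑ k, kap d k * (rep d N w k : ℝ) ^ 2 + K)) := by positivity
    linarith
  · intro w k hk t ht htk
    rw [mul_assoc]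
    refine mul_le_mul_of_nonneg_left ?_ hA.le
    refine (hup w).trans ?_
    have h1 : t ^ 2 ≤ ∑ k ∈ J, 1 * (rep d N w k : ℝ) ^ 2 + a := by
      have := Finset.single_le_sum (f := fun k => 1 * (rep d N w k : ℝ) ^ 2)
        (fun _ _ => by positivity) hk
      have h3 : t ^ 2 ≤ |(rep d N w k : ℝ)| ^ 2 := by gcongr
      rw [sq_abs] at h3
      simp only [one_mul] at this ⊢
      linarith
    have h2 : (∑ k ∈ J, 1 * (rep d N w k : ℝ) ^ 2 + a) ^ (-α) ≤ (t ^ 2) ^ (-α) :=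
      Real.rpow_le_rpow_of_nonpos (by positivity) h1 (by linarith)
    have h3 : (t ^ 2) ^ (-α) = (1 / t) ^ (ν - 2) := by
      rw [← Real.rpow_two, ← Real.rpow_mul ht.le]
      have : (2 : ℝ) * -α = -((ν - 2 : ℕ) : ℝ) := by
        rw [Nat.cast_sub (by omega), hα]; push_cast; ring
      rw [this, Real.rpow_neg ht.le, Real.rpow_natCast, one_div, inv_pow]
    rw [h3] at h2
    have h4 : 0 ≤ (1 / t) ^ (ν - 2) := by positivity
    have h5 : 0 ≤ (1 / (N : ℝ)) ^ (ν - 2) := by positivity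
    nlinarith
  · intro w
    refine mul_le_mul_of_nonneg_left ?_ hA.le
    refine (hup w).trans ?_
    have h1 : (∑ k ∈ J, 1 * (rep d N w k : ℝ) ^ 2 + a) ^ (-α) ≤ 1 :=
      Real.rpow_le_one_of_one_le_of_nonpos (by linarith [hS0 w]) (by linarith)
    have h2 : (1 / (N : ℝ)) ^ (ν - 2) ≤ 1 := by
      apply pow_le_one₀ (by positivity)
      rw [div_le_one hN0]; linarith
    nlinarith

/-- Backward induction: an upper bound for path probabilities from a supersolution. -/
lemma path_upper {X : Type*} [Countable X] [MeasurableSpace X] (μ : Measure (ℕ → X))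
    (p : X → X → ℝ≥0∞)
    (hμ : ∀ (γ : ℕ → X) (k : ℕ), μ {ω | ∀ i ≤ k + 1, ω i = γ i}
      = μ {ω | ∀ i ≤ k, ω i = γ i} * p (γ k) (γ (k + 1)))
    (n : ℕ) (V : ℕ → (ℕ → X) → ℝ≥0∞)
    (hdep : ∀ k γ γ', (∀ i ≤ k, γ i = γ' i) → V k γ = V k γ')
    (E : Set (ℕ → X)) (hterm : ∀ ω ∈ E, 1 ≤ V n ω)
    (hstep : ∀ k < n, ∀ γ : ℕ → X,
      ∑' y, p (γ k) y * V (k + 1) (Function.update γ (k + 1) y) ≤ V k γ) :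
    ∀ l k, k + l = n → ∀ γ : ℕ → X,
      μ ({ω | ∀ i ≤ k, ω i = γ i} ∩ E) ≤ μ {ω | ∀ i ≤ k, ω i = γ i} * V k γ := by
  intro l
  induction l with
  | zero =>
    intro k hk γ
    have hkn : k = n := by omega
    subst hkn
    by_cases h : ({ω | ∀ i ≤ k, ω i = γ i} ∩ E).Nonempty
    · obtain ⟨ω, hω, hE⟩ := h
      have h1 : 1 ≤ V k γ := by
        rw [← hdep k ω γ hω]; exact hterm ω hE
      calc μ ({ω | ∀ i ≤ k, ω i = γ i} ∩ E) ≤ μ {ω | ∀ i ≤ k, ω i = γ i} * 1 := by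
            rw [mul_one]; exact measure_mono Set.inter_subset_left
        _ ≤ _ := by gcongr
    · rw [Set.not_nonempty_iff_eq_empty.1 h]; simp
  | succ l ih =>
    intro k hk γ
    have hsub : {ω | ∀ i ≤ k, ω i = γ i} ∩ E ⊆
        ⋃ y : X, ({ω | ∀ i ≤ k + 1, ω i = Function.update γ (k + 1) y i} ∩ E) := by
      rintro ω ⟨hω, hE⟩
      refine Set.mem_iUnion.2 ⟨ω (k + 1), ?_, hE⟩
      intro i hi
      by_cases h : i = k + 1
      · subst h; simp
      · rw [Function.update_of_ne h]; exact hω i (by omega)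
    refine (measure_mono hsub).trans ((measure_iUnion_le _).trans ?_)
    have hpre : ∀ y : X, {ω : ℕ → X | ∀ i ≤ k, ω i = Function.update γ (k + 1) y i}
        = {ω | ∀ i ≤ k, ω i = γ i} := by
      intro y
      ext ω
      simp only [Set.mem_ofPred_eq]
      refine forall_congr' fun i => forall_congr' fun hi => ?_
      rw [Function.update_of_ne (by omega)]
    have h1 : ∀ y : X, μ ({ω | ∀ i ≤ k + 1, ω i = Function.update γ (k + 1) y i} ∩ E)
        ≤ μ {ω | ∀ i ≤ k, ω i = γ i} *
          (p (γ k) y * V (k + 1) (Function.update γ (k + 1) y)) := by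
      intro y
      refine (ih (k + 1) (by omega) (Function.update γ (k + 1) y)).trans (le_of_eq ?_)
      rw [hμ, hpre, Function.update_self, Function.update_of_ne (by omega), mul_assoc]
    refine (ENNReal.tsum_le_tsum h1).trans ?_
    rw [ENNReal.tsum_mul_left]
    gcongr
    exact hstep k (by omega) γ

/-- Version for a walk with a deterministic starting point. -/
lemma path_upper0 {X : Type*} [DecidableEq X] [Countable X] [MeasurableSpace X] (μ : Measure (ℕ → X))
    [IsProbabilityMeasure μ] (x : X)
    (p : X → X → ℝ≥0∞)
    (hμ : ∀ (k : ℕ) (γ : ℕ → X), μ {ω | ∀ i ≤ k, ω i = γ i}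
      = (if γ 0 = x then 1 else 0) * ∏ i ∈ Finset.range k, p (γ i) (γ (i + 1)))
    (n : ℕ) (V : ℕ → (ℕ → X) → ℝ≥0∞)
    (hdep : ∀ k γ γ', (∀ i ≤ k, γ i = γ' i) → V k γ = V k γ')
    (E : Set (ℕ → X)) (hterm : ∀ ω ∈ E, 1 ≤ V n ω)
    (hstep : ∀ k < n, ∀ γ : ℕ → X,
      ∑' y, p (γ k) y * V (k + 1) (Function.update γ (k + 1) y) ≤ V k γ) :
    μ E ≤ V 0 (fun _ => x) := by
  have h := path_upper μ p (by
    intro γ k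
    rw [hμ, hμ, Finset.prod_range_succ, mul_assoc]) n V hdep E hterm hstep n 0 (by omega)
  have hsub : E ⊆ ⋃ y : X, ({ω | ∀ i ≤ 0, ω i = (fun _ => y) i} ∩ E) := by
    intro ω hω
    refine Set.mem_iUnion.2 ⟨ω 0, ?_, hω⟩
    intro i hi
    have : i = 0 := by omega
    rw [this]
  refine (measure_mono hsub).trans ((measure_iUnion_le _).trans ?_)
  refine (ENNReal.tsum_le_tsum fun y => h (fun _ => y)).trans ?_
  have h0 : ∀ y : X, μ {ω | ∀ i ≤ 0, ω i = (fun _ => y) i} * V 0 (fun _ => y)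
      = if y = x then V 0 (fun _ => x) else 0 := by
    intro y
    rw [hμ]
    by_cases hy : y = x <;> simp [hy]
  simp_rw [h0]
  rw [tsum_ite_eq]

lemma zUnitVecs_eq (n : ℕ) : zUnitVecs (n + 1) = ↑(unitVecs n) := by
  ext v
  simp only [zUnitVecs, Set.mem_ofPred_eq, Finset.mem_coe]
  exact (mem_unitVecs n v).symm

lemma tsum_zStep (n : ℕ) (x : ZLat (n + 1)) (W : ZLat (n + 1) → ℝ≥0∞) :
    ∑' y, zStep (n + 1) x y * W y
      = (2 * ((n + 1 : ℕ) : ℝ≥0∞))⁻¹ * ∑ e ∈ unitVecs n, W (x + e) := by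
  rw [← (Equiv.addLeft x).tsum_eq]
  rw [tsum_eq_sum (s := unitVecs n)]
  · rw [Finset.mul_sum]
    refine Finset.sum_congr rfl fun e he => ?_
    simp [zStep, zUnitVecs_eq, he]
  · intro e he
    simp [zStep, zUnitVecs_eq, he]

/-- probability that the walk from `z` visits `0` at some time in `[1,n]` -/
noncomputable def rr (k : ℕ) : ℕ → Lat k → ℝ
  | 0, _ => 0
  | n + 1, z => (∑ e ∈ unitVecs k, if z + e = 0 then 1 else rr k n (z + e)) / (2 * (k + 1))

lemma rr_nonneg (k n : ℕ) (z : Lat k) : 0 ≤ rr k n z := by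
  induction n generalizing z with
  | zero => simp [rr]
  | succ n ih =>
    rw [rr]
    refine div_nonneg (Finset.sum_nonneg fun e _ => ?_) (by positivity)
    split_ifs
    · exact zero_le_one
    · exact ih _

lemma rr_le_one (k n : ℕ) (z : Lat k) : rr k n z ≤ 1 := by
  induction n generalizing z with
  | zero => simp [rr]
  | succ n ih =>
    rw [rr, div_le_one (by positivity)]
    refine (Finset.sum_le_card_nsmul _ _ 1 fun e _ => ?_).trans ?_
    · split_ifs
      · exact le_rfl
      · exact ih _
    · rw [card_unitVecs]; simp

lemma rr_mono (k n : ℕ) (z : Lat k) : rr k n z ≤ rr k (n + 1) z := by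
  induction n generalizing z with
  | zero => rw [rr]; exact rr_nonneg _ _ _
  | succ n ih =>
    rw [rr, rr]
    gcongr
    split_ifs
    · exact le_rfl
    · exact ih _

/-- value function of the non-return event -/
noncomputable def VQ (k n j : ℕ) (γ : ℕ → ZLat (k + 1)) : ℝ≥0∞ :=
  if ∀ i, 1 ≤ i → i ≤ j → γ i ≠ 0 then ENNReal.ofReal (1 - rr k (n - j) (γ j)) else 0

lemma VQ_pos {k n j : ℕ} {γ : ℕ → ZLat (k + 1)} (h : ∀ i, 1 ≤ i → i ≤ j → γ i ≠ 0) :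
    VQ k n j γ = ENNReal.ofReal (1 - rr k (n - j) (γ j)) := if_pos h

lemma VQ_neg {k n j : ℕ} {γ : ℕ → ZLat (k + 1)} (h : ¬ ∀ i, 1 ≤ i → i ≤ j → γ i ≠ 0) :
    VQ k n j γ = 0 := if_neg h

lemma rr_le_ret (k : ℕ) (Q : ZLat (k + 1) → Measure (ℕ → ZLat (k + 1)))
    (hQ : IsLatRW (k + 1) Q) (n : ℕ) : rr k n 0 ≤ retProb (k + 1) Q := by
  have := hQ.1 0
  set R : Set (ℕ → ZLat (k + 1)) := {ω | ∃ n : ℕ, 1 ≤ n ∧ ω n = 0} with hR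
  have hup : Q 0 Rᶜ ≤ ENNReal.ofReal (1 - rr k n 0) := by
    have h := path_upper0 (Q 0) 0 (zStep (k + 1)) (fun j γ => hQ.2 0 j γ) n
      (VQ k n)
      (by
        intro j γ γ' hγ
        have h1 : (∀ i, 1 ≤ i → i ≤ j → γ i ≠ 0) ↔ (∀ i, 1 ≤ i → i ≤ j → γ' i ≠ 0) := by
          refine forall_congr' fun i => forall_congr' fun _ => forall_congr' fun hi => ?_
          rw [hγ i hi]
        by_cases h2 : ∀ i, 1 ≤ i → i ≤ j → γ i ≠ 0
        · rw [VQ_pos h2, VQ_pos (h1.1 h2), hγ j le_rfl]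
        · rw [VQ_neg h2, VQ_neg (fun h => h2 (h1.2 h))]) Rᶜ
      (by
        intro ω hω
        have h1 : ∀ i, 1 ≤ i → i ≤ n → ω i ≠ 0 := fun i hi _ h0 => hω ⟨i, hi, h0⟩
        rw [VQ_pos h1]
        simp [rr])
      (by
        intro j hj γ
        rw [tsum_zStep]
        by_cases h1 : ∀ i, 1 ≤ i → i ≤ j → γ i ≠ 0
        · rw [VQ_pos h1]
          have h2 : n - j = (n - (j + 1)) + 1 := by omega
          have hterm : ∀ e ∈ unitVecs k,
              VQ k n (j + 1) (Function.update γ (j + 1) (γ j + e))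
              = ENNReal.ofReal (1 - if γ j + e = 0 then 1 else rr k (n - (j + 1)) (γ j + e)) := by
            intro e _
            have h3 : (∀ i, 1 ≤ i → i ≤ j + 1 → Function.update γ (j + 1) (γ j + e) i ≠ 0)
                ↔ γ j + e ≠ 0 := by
              constructor
              · intro h; have := h (j + 1) (by omega) le_rfl; simpa using this
              · intro h i hi hij
                by_cases hi' : i = j + 1
                · subst hi'; simpa using h
                · rw [Function.update_of_ne hi']; exact h1 i hi (by omega)
            by_cases h4 : γ j + e = 0
            · rw [VQ_neg (fun h => h3.1 h h4)]; simp [h4]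
            · rw [VQ_pos (h3.2 h4), Function.update_self]; simp [h4]
          rw [Finset.sum_congr rfl hterm, ← ENNReal.ofReal_sum_of_nonneg]
          · have h5 : (2 * ((k + 1 : ℕ) : ℝ≥0∞))⁻¹ = ENNReal.ofReal ((2 * ((k : ℝ) + 1))⁻¹) := by
              rw [ENNReal.ofReal_inv_of_pos (by positivity), ENNReal.ofReal_mul (by norm_num)]
              congr 2
              · simp
              · rw [← Nat.cast_succ, ENNReal.ofReal_natCast]
            rw [h5, ← ENNReal.ofReal_mul (by positivity)]
            apply ENNReal.ofReal_le_ofReal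
            rw [h2, rr, Finset.sum_sub_distrib]
            simp only [Finset.sum_const, card_unitVecs, nsmul_eq_mul, mul_one]
            push_cast
            rw [mul_sub, inv_mul_cancel₀ (by positivity), div_eq_inv_mul]
          · intro e _
            split_ifs
            · simp
            · linarith [rr_le_one k (n - (j + 1)) (γ j + e)]
        · rw [VQ_neg h1, Finset.sum_eq_zero, mul_zero]
          intro e _
          apply VQ_neg
          intro h
          apply h1
          intro i hi hij
          have := h i hi (by omega)
          rwa [Function.update_of_ne (by omega)] at this)
    refine h.trans (le_of_eq ?_)
    rw [VQ_pos (by intro i h1 h2; omega)]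
    simp
  have h1 : (1 : ℝ≥0∞) ≤ Q 0 R + Q 0 Rᶜ := by
    rw [← measure_univ (μ := Q 0), ← Set.union_compl_self R]
    exact measure_union_le _ _
  have h2 : (1 : ℝ≥0∞) ≤ ENNReal.ofReal (retProb (k + 1) Q + (1 - rr k n 0)) := by
    have hr0 : 0 ≤ retProb (k + 1) Q := ENNReal.toReal_nonneg
    rw [ENNReal.ofReal_add hr0 (by linarith [rr_le_one k n 0])]
    refine h1.trans (add_le_add ?_ hup)
    unfold retProb
    rw [ENNReal.ofReal_toReal (measure_ne_top _ _)]
  rw [ENNReal.one_le_ofReal] at h2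
  linarith

/-- The hitting probability of the origin. -/
lemma exists_g (k : ℕ) (Q : ZLat (k + 1) → Measure (ℕ → ZLat (k + 1)))
    (hQ : IsLatRW (k + 1) Q) : ∃ g : Lat k → ℝ, (∀ z, 0 ≤ g z) ∧ g 0 = 1 ∧
      (∀ z, z ≠ 0 → ∑ e ∈ unitVecs k, g (z + e) ≤ 2 * (k + 1) * g z) ∧
      ∑ e ∈ unitVecs k, g e ≤ 2 * (k + 1) * retProb (k + 1) Q := by
  have hbdd : ∀ z, BddAbove (Set.range fun n => rr k n z) := fun z =>
    ⟨1, by rintro _ ⟨n, rfl⟩; exact rr_le_one k n z⟩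
  have hmono : ∀ z, Monotone fun n => rr k n z := fun z =>
    monotone_nat_of_le_succ fun n => rr_mono k n z
  set r : Lat k → ℝ := fun z => ⨆ n, rr k n z with hr
  have hlim : ∀ z, Tendsto (fun n => rr k n z) atTop (nhds (r z)) := fun z =>
    tendsto_atTop_ciSup (hmono z) (hbdd z)
  set g : Lat k → ℝ := fun z => if z = 0 then 1 else r z with hg
  have heq : ∀ z, ∑ e ∈ unitVecs k, g (z + e) = 2 * (k + 1) * r z := by
    intro z
    have h1 : Tendsto (fun n => rr k (n + 1) z) atTop
        (nhds ((∑ e ∈ unitVecs k, g (z + e)) / (2 * (k + 1)))) := by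
      simp only [rr]
      refine Tendsto.div_const (tendsto_finsetSum _ fun e _ => ?_) _
      simp only [hg]
      split_ifs
      · exact tendsto_const_nhds
      · exact hlim _
    have h2 := tendsto_nhds_unique h1 ((tendsto_add_atTop_iff_nat 1).2 (hlim z))
    rw [div_eq_iff (by positivity)] at h2
    rw [h2]; ring
  refine ⟨g, ?_, ?_, ?_, ?_⟩
  · intro z
    simp only [hg]
    split_ifs
    · exact zero_le_one
    · exact Real.iSup_nonneg fun n => rr_nonneg k n z
  · simp [hg]
  · intro z hz
    rw [heq]
    simp [hg, hz]
  · have := heq 0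
    simp only [zero_add] at this
    rw [this]
    gcongr
    exact ciSup_le fun n => rr_le_ret k Q hQ n

lemma sum_emb (d k : ℕ) (emb : Fin (k + 1) ↪ Fin (d + 1)) (f : Lat k → ℝ) :
    ∑ e ∈ unitVecs d, f (fun i => e (emb i))
      = ∑ e ∈ unitVecs k, f e + 2 * ((d : ℝ) - k) * f 0 := by
  rw [sum_unitVecs, sum_unitVecs]
  set J : Finset (Fin (d + 1)) := Finset.univ.map emb with hJ
  rw [← Finset.sum_add_sum_compl J]
  have hsame : ∀ (i : Fin (k + 1)) (ε : ℤ),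
      (fun l => (Pi.single (emb i) ε : Lat d) (emb l)) = (Pi.single i ε : Lat k) := by
    intro i ε
    ext l
    by_cases h : l = i
    · subst h; simp
    · rw [Pi.single_eq_of_ne h, Pi.single_eq_of_ne (fun h' => h (emb.injective h'))]
  have hdiff : ∀ (i : Fin (d + 1)) (ε : ℤ), i ∉ J →
      (fun l => (Pi.single i ε : Lat d) (emb l)) = (0 : Lat k) := by
    intro i ε hi
    ext l
    rw [Pi.single_eq_of_ne]
    · rfl
    · rintro rfl; apply hi; simp [hJ]
  congr 1
  · rw [hJ, Finset.sum_map]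
    refine Finset.sum_congr rfl fun i _ => ?_
    rw [hsame, hsame]
  · have hcard : ((Jᶜ.card : ℕ) : ℝ) = (d : ℝ) - k := by
      have h1 : J.card = k + 1 := by simp [hJ]
      have h2 := Finset.card_add_card_compl J
      rw [h1, Fintype.card_fin] at h2
      have : (((k + 1 + Jᶜ.card : ℕ)) : ℝ) = ((d + 1 : ℕ) : ℝ) := by rw [h2]
      push_cast at this
      linarith
    rw [Finset.sum_congr rfl (g := fun _ => 2 * f 0), Finset.sum_const, nsmul_eq_mul, hcard]
    · ring
    · intro i hi
      rw [Finset.mem_compl] at hi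
      rw [hdiff i _ hi, hdiff i _ hi]; ring

lemma Cblk_vert {d N : ℕ} {j : ℤ} {x : Cyl d N} (hx : x ∈ Cblk d N j) :
    |4 * (x.2 - j * N)| ≤ 3 * N := by
  obtain ⟨h1, h2⟩ := hx
  rw [abs_le]
  constructor
  · have : (-(3 * N : ℤ) : ℝ) ≤ ((4 * (x.2 - j * N) : ℤ) : ℝ) := by push_cast; linarith
    exact_mod_cast this
  · have : ((4 * (x.2 - j * N) : ℤ) : ℝ) ≤ ((3 * N : ℤ) : ℝ) := by push_cast; linarith
    exact_mod_cast this

lemma exists_U (d m k : ℕ) (hm1 : 1 ≤ m) (hk : 2 ≤ k) (hmk : k + m = d)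
    (Q : ZLat (k + 1) → Measure (ℕ → ZLat (k + 1))) (hQ : IsLatRW (k + 1) Q)
    (ε : ℝ) (hε : 0 < ε) :
    ∃ C : ℝ, 0 < C ∧ ∃ N₀ : ℕ, 4 ≤ N₀ ∧ ∀ N : ℕ, N₀ ≤ N → ∀ j : ℤ, ∀ A ∈ Adm d N j m,
      ∃ U : Cyl d N → ℝ,
        (∀ y : Cyl d N, |y.2 - j * N| ≤ 2 * N → 0 ≤ U y) ∧
        (∀ y ∈ A, 1 ≤ U y) ∧
        (∀ y, ∑ e ∈ unitVecs d, U (y + projE d N e) ≤ 2 * (d + 1) * U y) ∧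
        (∀ y ∈ A, ∑ e ∈ unitVecs d, U (y + projE d N e) ≤ 2 * (d + 1) *
          ((m : ℝ) / (d + 1) + (1 - (m : ℝ) / (d + 1)) * retProb (k + 1) Q + ε)) ∧
        (∀ y : Cyl d N, |y.2 - j * N| = N → U y ≤ C * A.card / (N : ℝ) ^ (d - 1)) ∧
        (∀ T : Finset (Cyl d N), (∀ y ∈ T, |y.2| ≤ N) →
          ∑ y ∈ T, U y ≤ ε * A.card * ((N : ℝ) ^ d * (2 * N + 1))) := by
  obtain ⟨g, hg0, hg1, hgs, hgr⟩ := exists_g k Q hQ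
  obtain ⟨C₁, hC₁, H₁⟩ := exists_bar d (k + 1) (by omega) (by omega)
  obtain ⟨C₂, hC₂, H₂⟩ := exists_bar d (d + 1) (by omega) (by omega)
  have hret1 : retProb (k + 1) Q ≤ 1 := by
    have := hQ.1 0
    unfold retProb
    exact ENNReal.toReal_le_of_le_ofReal zero_le_one (by simpa using prob_le_one)
  -- `g` is superharmonic everywhere
  have hgS : ∀ z, ∑ e ∈ unitVecs k, g (z + e) ≤ 2 * (k + 1) * g z := by
    intro z
    by_cases hz : z = 0
    · subst hz
      simp only [zero_add, hg1]
      refine hgr.trans ?_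
      gcongr
    · exact hgs z hz
  obtain ⟨r, hr⟩ := exists_nat_gt (2 * C₁ / ε)
  obtain ⟨t, ht⟩ := exists_nat_gt (4 * C₂ / ε)
  obtain ⟨M, hM⟩ := exists_nat_gt (C₂ * (2 * t + 1) / ε)
  have hr0 : (0 : ℝ) < r := lt_trans (by positivity) hr
  have ht0 : (0 : ℝ) < t := lt_trans (by positivity) ht
  refine ⟨C₂ * (4 ^ (d - 1) + 1), by positivity, 2 * r + t + M + 4, by omega, ?_⟩
  intro N hN j A hA
  have hN4 : 4 ≤ N := by omega
  have : NeZero N := ⟨by omega⟩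
  have hN0 : (0 : ℝ) < N := by exact_mod_cast (show 0 < N by omega)
  obtain ⟨⟨x₀, hx₀⟩, hAC, F, ⟨I, hI, y₀, rfl⟩, hAF⟩ := hA
  set J : Finset (Fin (d + 1)) := Iᶜ with hJdef
  have hJ : J.card = k + 1 := by
    rw [hJdef, Finset.card_compl, Fintype.card_fin, hI]; omega
  obtain ⟨w, hw1, hw2, hw3, hw4, hw5⟩ := H₁ J hJ N hN4
  obtain ⟨b, hb1, hb2, hb3, hb4, hb5⟩ := H₂ Finset.univ (by simp) N hN4
  -- points of `A` have the same `J` coordinates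
  have hrepA : ∀ x ∈ A, ∀ l ∈ J, rep d N (x - x₀) l = 0 := by
    intro x hx l hl
    obtain ⟨v, hv, rfl⟩ := hAF hx
    obtain ⟨v', hv', hx₀'⟩ := hAF hx₀
    have hlI : l ∉ I := by rw [hJdef, Finset.mem_compl] at hl; exact hl
    have h1 := hv l hlI
    have h2 := hv' l hlI
    rw [← hx₀']
    clear hx hl hlI
    induction l using Fin.lastCases with
    | last => simp [projE, h1, h2]
    | cast i => simp [projE, h1, h2]
  have hvert : ∀ x ∈ A, ∀ y : Cyl d N, |y.2 - j * N| ≤ 2 * N → |(y - x).2| ≤ 3 * N := by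
    intro x hx y hy
    have h1 := Cblk_vert (hAC hx)
    rw [abs_le] at h1 hy ⊢
    rw [Prod.snd_sub]
    constructor <;> linarith [h1.1, h1.2, hy.1, hy.2]
  set emb : Fin (k + 1) ↪ Fin (d + 1) := (J.orderEmbOfFin hJ).toEmbedding with hemb
  have hembJ : ∀ i, emb i ∈ J := fun i => Finset.orderEmbOfFin_mem J hJ i
  set G : Cyl d N → ℝ := fun y => g (fun i => rep d N (y - x₀) (emb i)) + ε with hG
  set W : Cyl d N → ℝ := fun y => w (y - x₀) with hW
  set B : Cyl d N → ℝ := fun y => ∑ x ∈ A, b (y - x) with hB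
  have hsub : ∀ (y x : Cyl d N) (e : Lat d), y + projE d N e - x = y - x + projE d N e := by
    intro y x e; abel
  have hWs : ∀ y, ∑ e ∈ unitVecs d, W (y + projE d N e) ≤ 2 * (d + 1) * W y := by
    intro y
    simp only [hW, hsub]
    exact hw1 _
  have hBs : ∀ y, ∑ e ∈ unitVecs d, B (y + projE d N e) ≤ 2 * (d + 1) * B y := by
    intro y
    simp only [hB, hsub]
    rw [Finset.sum_comm, Finset.mul_sum]
    exact Finset.sum_le_sum fun x _ => hb1 _
  have hN2r : 2 * r < N := by omega
  -- sum of G over neighbours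
  have hGsum : ∀ y, (∀ l ∈ J, |rep d N (y - x₀) l| < r) →
      ∑ e ∈ unitVecs d, G (y + projE d N e) =
        ∑ e ∈ unitVecs k, g ((fun i => rep d N (y - x₀) (emb i)) + e)
          + 2 * ((d : ℝ) - k) * g (fun i => rep d N (y - x₀) (emb i)) + 2 * (d + 1) * ε := by
    intro y hy
    have h1 : ∀ e ∈ unitVecs d, G (y + projE d N e) =
        (fun e' : Lat k => g ((fun i => rep d N (y - x₀) (emb i)) + e')) (fun i => e (emb i)) + ε := by
      intro e he
      simp only [hG, hsub]
      congr 2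
      ext i
      simp only [Pi.add_apply]
      obtain ⟨l, hl⟩ := (mem_unitVecs d e).1 he
      have hel : |e (emb i)| ≤ 1 := by
        by_cases hil : emb i = l
        · rcases hl with h | h <;> simp [h, hil]
        · rcases hl with h | h <;> simp [h, hil]
      rcases rep_step d N hN4 (y - x₀) e (emb i) hel with h | h
      · exact h
      · exfalso
        have h2 := hy (emb i) (hembJ i)
        have h3 := h.2.1
        have h4 := abs_add_le (rep d N (y - x₀) (emb i)) (e (emb i))
        omega
    rw [Finset.sum_congr rfl h1, Finset.sum_add_distrib,
      sum_emb d k emb (fun e' : Lat k => g ((fun i => rep d N (y - x₀) (emb i)) + e'))]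
    simp only [add_zero, Finset.sum_const, card_unitVecs, nsmul_eq_mul]
    push_cast
    ring
  have hmin : ∀ y, ∑ e ∈ unitVecs d, min (G (y + projE d N e)) (W (y + projE d N e))
      ≤ 2 * (d + 1) * min (G y) (W y) := by
    intro y
    have hle : ∑ e ∈ unitVecs d, min (G (y + projE d N e)) (W (y + projE d N e))
        ≤ 2 * (d + 1) * W y :=
      (Finset.sum_le_sum fun e _ => min_le_right _ _).trans (hWs y)
    by_cases hy : ∀ l ∈ J, |rep d N (y - x₀) l| < r
    · rw [mul_min_of_nonneg _ _ (by positivity)]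
      refine le_min ?_ hle
      refine (Finset.sum_le_sum fun e _ => min_le_left _ _).trans ?_
      rw [hGsum y hy]
      have := hgS (fun i => rep d N (y - x₀) (emb i))
      simp only [hG]
      linarith
    · push Not at hy
      obtain ⟨l, hl, hrl⟩ := hy
      have h1 : W y ≤ ε := by
        have h2 := hw4 (y - x₀) l hl r hr0 (by exact_mod_cast hrl)
        have h3 : (1 / (r : ℝ)) ^ (k + 1 - 2) ≤ 1 / r := by
          have hr1 : (1 : ℝ) ≤ r := by
            have : 0 < r := by exact_mod_cast hr0
            exact_mod_cast this
          apply pow_le_of_le_one (by positivity) _ (by omega)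
          rw [div_le_one hr0]; exact hr1
        have h4 : (1 / (N : ℝ)) ^ (k + 1 - 2) ≤ 1 / r := by
          refine le_trans ?_ h3
          apply pow_le_pow_left₀ (by positivity)
          apply one_div_le_one_div_of_le hr0
          exact_mod_cast (show r ≤ N by omega)
        have h5 : C₁ * (1 / r + 1 / r) ≤ ε := by
          rw [div_lt_iff₀ hε] at hr
          have : C₁ * (1 / (r : ℝ) + 1 / r) = 2 * C₁ / r := by ring
          rw [this, div_le_iff₀ hr0]; linarith
        refine h2.trans (le_trans ?_ h5)
        gcongr
      have h2 : min (G y) (W y) = W y := by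
        apply min_eq_right
        simp only [hG]
        linarith [hg0 (fun i => rep d N (y - x₀) (emb i))]
      rw [h2]; exact hle
  refine ⟨fun y => min (min (G y) (W y)) (B y), ?_, ?_, ?_, ?_, ?_, ?_⟩
  · intro y hy
    refine le_min (le_min ?_ ?_) ?_
    · simp only [hG]; linarith [hg0 (fun i => rep d N (y - x₀) (emb i))]
    · exact hw2 _ (hvert x₀ hx₀ y hy)
    · exact Finset.sum_nonneg fun x hx => hb2 _ (hvert x hx y hy)
  · intro y hy
    have hyv : |y.2 - j * N| ≤ 2 * N := by
      have h1 := Cblk_vert (hAC hy)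
      rw [abs_le] at h1 ⊢
      constructor <;> linarith [h1.1, h1.2]
    refine le_min (le_min ?_ ?_) ?_
    · have : (fun i => rep d N (y - x₀) (emb i)) = 0 := by
        ext i; exact hrepA y hy _ (hembJ i)
      simp only [hG]
      rw [this, hg1]; linarith
    · exact hw3 _ (hvert x₀ hx₀ y hyv) (hrepA y hy)
    · have h1 : b (y - y) ≤ B y :=
        Finset.single_le_sum (f := fun x => b (y - x))
          (fun x hx => hb2 _ (hvert x hx y hyv)) hy
      refine le_trans ?_ h1
      apply hb3 _ (hvert y hy y hyv)
      intro l _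
      rw [sub_self]
      induction l using Fin.lastCases with
      | last => simp
      | cast i => simp
  · intro y
    rw [mul_min_of_nonneg _ _ (by positivity)]
    refine le_min ?_ ?_
    · exact (Finset.sum_le_sum fun e _ => min_le_left _ _).trans (hmin y)
    · exact (Finset.sum_le_sum fun e _ => min_le_right _ _).trans (hBs y)
  · intro y hy
    refine (Finset.sum_le_sum fun e _ => (min_le_left _ _).trans (min_le_left _ _)).trans ?_
    have h0 : (fun i => rep d N (y - x₀) (emb i)) = 0 := by
      ext i; exact hrepA y hy _ (hembJ i)
    rw [hGsum y]
    · rw [h0, hg1]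
      simp only [zero_add]
      have hdm : (d : ℝ) = k + m := by exact_mod_cast hmk.symm
      have h1 : 2 * ((d : ℝ) + 1) * ((m : ℝ) / (d + 1) + (1 - (m : ℝ) / (d + 1)) * retProb (k + 1) Q + ε)
          = 2 * (k + 1) * retProb (k + 1) Q + 2 * m + 2 * (d + 1) * ε := by
        have : (d : ℝ) + 1 ≠ 0 := by positivity
        field_simp
        rw [hdm]; ring
      rw [h1]
      have h2 : (d : ℝ) - k = m := by linarith
      rw [h2]
      linarith
    · intro l hl
      rw [hrepA y hy l hl]
      simpa using hr0
  · intro y hy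
    refine (min_le_right _ _).trans ?_
    have h1 : ∀ x ∈ A, b (y - x) ≤ C₂ * (4 ^ (d - 1) + 1) / (N : ℝ) ^ (d - 1) := by
      intro x hx
      have h2 := Cblk_vert (hAC hx)
      have h3 : (N : ℤ) ≤ 4 * |(y - x).2| := by
        rw [Prod.snd_sub]
        rcases abs_cases (y.2 - x.2) with h | h <;> rcases abs_cases (y.2 - j * N) with h' | h' <;>
          rw [abs_le] at h2 <;> linarith [h2.1, h2.2]
      have h4 : (N : ℝ) ≤ 4 * |((y - x).2 : ℝ)| := by exact_mod_cast h3
      have h5 := hb4 (y - x) (Fin.last d) (Finset.mem_univ _) ((N : ℝ) / 4) (by positivity)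
        (by rw [rep_last]; linarith)
      refine h5.trans (le_of_eq ?_)
      have : d + 1 - 2 = d - 1 := by omega
      rw [this, one_div_div, div_pow, div_pow, one_pow]
      field_simp
    refine (Finset.sum_le_sum h1).trans (le_of_eq ?_)
    rw [Finset.sum_const, nsmul_eq_mul]; ring
  · intro T hT
    refine (Finset.sum_le_sum fun y _ => min_le_right _ _).trans ?_
    simp only [hB]
    rw [Finset.sum_comm]
    have hTs : T ⊆ Finset.univ ×ˢ Finset.Icc (-(N : ℤ)) N := by
      intro y hy
      simp only [Finset.mem_product, Finset.mem_univ, true_and, Finset.mem_Icc]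
      exact abs_le.1 (hT y hy)
    have hTc : (T.card : ℝ) ≤ (N : ℝ) ^ d * (2 * N + 1) := by
      have h1 := Finset.card_le_card hTs
      rw [Finset.card_product, Finset.card_univ, Int.card_Icc, Fintype.card_pi] at h1
      simp only [ZMod.card, Finset.prod_const, Finset.card_univ, Fintype.card_fin] at h1
      have h2 : ((N : ℤ) + 1 - -(N : ℤ)).toNat = 2 * N + 1 := by omega
      rw [h2] at h1
      exact_mod_cast h1
    have h1 : ∀ x ∈ A, ∑ y ∈ T, b (y - x) ≤ ε * ((N : ℝ) ^ d * (2 * N + 1)) := by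
      intro x _
      rw [← Finset.sum_filter_add_sum_filter_not T (fun y => |y.2 - x.2| ≤ t)]
      have h2 : ∑ y ∈ T with |y.2 - x.2| ≤ t, b (y - x) ≤ C₂ * ((N : ℝ) ^ d * (2 * t + 1)) := by
        have h3 : (T.filter fun y => |y.2 - x.2| ≤ t) ⊆
            Finset.univ ×ˢ Finset.Icc (x.2 - t) (x.2 + t) := by
          intro y hy
          have h4 := (Finset.mem_filter.1 hy).2
          rw [abs_le] at h4
          simp only [Finset.mem_product, Finset.mem_univ, true_and, Finset.mem_Icc]
          constructor <;> linarith [h4.1, h4.2]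
        have h5 := Finset.card_le_card h3
        rw [Finset.card_product, Finset.card_univ, Int.card_Icc, Fintype.card_pi] at h5
        simp only [ZMod.card, Finset.prod_const, Finset.card_univ, Fintype.card_fin] at h5
        have h6 : (x.2 + (t : ℤ) + 1 - (x.2 - (t : ℤ))).toNat = 2 * t + 1 := by omega
        rw [h6] at h5
        have h7 : (((T.filter fun y => |y.2 - x.2| ≤ t).card : ℕ) : ℝ) ≤ (N : ℝ) ^ d * (2 * t + 1) := by
          exact_mod_cast h5
        refine (Finset.sum_le_card_nsmul _ _ C₂ fun y _ => hb5 _).trans ?_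
        rw [nsmul_eq_mul, mul_comm]
        gcongr
      have h3 : ∑ y ∈ T with ¬ |y.2 - x.2| ≤ t, b (y - x) ≤ (ε / 2) * ((N : ℝ) ^ d * (2 * N + 1)) := by
        have h4 : ∀ y ∈ T.filter (fun y => ¬ |y.2 - x.2| ≤ t), b (y - x) ≤ ε / 2 := by
          intro y hy
          have h5 := (Finset.mem_filter.1 hy).2
          push Not at h5
          have h6 : (t : ℝ) ≤ |((y - x).2 : ℝ)| := by
            rw [Prod.snd_sub]; exact_mod_cast h5.le
          have h7 := hb4 (y - x) (Fin.last d) (Finset.mem_univ _) t ht0 (by rw [rep_last]; exact h6)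
          have ht1 : (1 : ℝ) ≤ t := by
            have : 0 < t := by exact_mod_cast ht0
            exact_mod_cast this
          have h8 : (1 / (t : ℝ)) ^ (d + 1 - 2) ≤ 1 / t := by
            apply pow_le_of_le_one (by positivity) _ (by omega)
            rw [div_le_one ht0]; exact ht1
          have h9 : (1 / (N : ℝ)) ^ (d + 1 - 2) ≤ 1 / t := by
            refine le_trans ?_ h8
            apply pow_le_pow_left₀ (by positivity)
            apply one_div_le_one_div_of_le ht0
            exact_mod_cast (show t ≤ N by omega)
          have h10 : C₂ * (1 / t + 1 / t) ≤ ε / 2 := by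
            rw [div_lt_iff₀ hε] at ht
            have : C₂ * (1 / (t : ℝ) + 1 / t) = 2 * C₂ / t := by ring
            rw [this, div_le_iff₀ ht0]; linarith
          refine h7.trans (le_trans ?_ h10)
          gcongr
        refine (Finset.sum_le_card_nsmul _ _ (ε / 2) h4).trans ?_
        rw [nsmul_eq_mul, mul_comm]
        refine mul_le_mul_of_nonneg_left (le_trans ?_ hTc) (by positivity)
        exact_mod_cast Finset.card_filter_le _ _
      have h4 : C₂ * ((N : ℝ) ^ d * (2 * t + 1)) ≤ (ε / 2) * ((N : ℝ) ^ d * (2 * N + 1)) := by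
        rw [div_lt_iff₀ hε] at hM
        have h5 : (M : ℝ) ≤ N := by exact_mod_cast (show M ≤ N by omega)
        have h6 : C₂ * (2 * t + 1) ≤ ε / 2 * (2 * N + 1) := by nlinarith
        calc _ = (N : ℝ) ^ d * (C₂ * (2 * t + 1)) := by ring
          _ ≤ (N : ℝ) ^ d * (ε / 2 * (2 * N + 1)) := by gcongr
          _ = _ := by ring
      linarith
    refine (Finset.sum_le_sum h1).trans (le_of_eq ?_)
    rw [Finset.sum_const, nsmul_eq_mul]; ring

lemma tsum_stepProb (d N : ℕ) (x : Cyl d N) (W : Cyl d N → ℝ≥0∞) :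
    ∑' y, stepProb d N x y * W y
      = (∑ e ∈ unitVecs d, W (x + projE d N e)) / (2 * (d + 1)) := by
  have h : ∀ y, stepProb d N x y * W y
      = ∑ e ∈ unitVecs d, (if y = x + projE d N e then
          W (x + projE d N e) / (2 * (d + 1)) else 0) := by
    intro y
    rw [← Finset.sum_filter]
    have : ∀ e ∈ (unitVecs d).filter (fun e => y = x + projE d N e),
        W (x + projE d N e) / (2 * (d + 1)) = W y / (2 * (d + 1)) := by
      intro e he
      rw [← (Finset.mem_filter.1 he).2]
    rw [Finset.sum_congr rfl this, Finset.sum_const, nsmul_eq_mul, stepProb]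
    have h2 : (unitVecs d).filter (fun e => x + projE d N e = y)
        = (unitVecs d).filter (fun e => y = x + projE d N e) := by
      ext e; simp only [Finset.mem_filter]; rw [eq_comm (a := y)]
    rw [h2]
    simp only [div_eq_mul_inv]
    ring
  simp_rw [h]
  rw [Summable.tsum_finsetSum (fun _ _ => ENNReal.summable)]
  simp_rw [tsum_ite_eq]
  simp only [div_eq_mul_inv]
  rw [Finset.sum_mul]

/-- Automaton step: phase, number of completed excursions, visited set. -/
noncomputable def stp {X : Type*} (B Bt : Set X) (A : Finset X) (K : ℕ) :
    Bool × ℕ × Finset X → X → Bool × ℕ × Finset X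
  | (true, k, S), y => if y ∈ Bt then (true, k, S ∪ ({y} ∩ A)) else (false, k + 1, S)
  | (false, k, S), y => if y ∈ B ∧ k < K then (true, k, S ∪ ({y} ∩ A)) else (false, k, S)

noncomputable def stA {X : Type*} (B Bt : Set X) (A : Finset X) (K : ℕ) (ω : ℕ → X) :
    ℕ → Bool × ℕ × Finset X
  | 0 => stp B Bt A K (false, 0, ∅) (ω 0)
  | n + 1 => stp B Bt A K (stA B Bt A K ω n) (ω (n + 1))

lemma stA_congr {X : Type*} (B Bt : Set X) (A : Finset X) (K : ℕ) (n : ℕ) (ω ω' : ℕ → X)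
    (h : ∀ i ≤ n, ω i = ω' i) : stA B Bt A K ω n = stA B Bt A K ω' n := by
  induction n with
  | zero => simp only [stA]; rw [h 0 le_rfl]
  | succ n ih => simp only [stA]; rw [ih (fun i hi => h i (by omega)), h (n + 1) le_rfl]

lemma stp_mono {X : Type*} (B Bt : Set X) (A : Finset X) (K : ℕ) (s : Bool × ℕ × Finset X)
    (y : X) : s.2.2 ⊆ (stp B Bt A K s y).2.2 := by
  obtain ⟨b, k, S⟩ := s
  cases b <;> simp only [stp] <;> split_ifs <;> simp [Finset.subset_union_left]

lemma stA_mono {X : Type*} (B Bt : Set X) (A : Finset X) (K : ℕ) (ω : ℕ → X) :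
    Monotone fun n => (stA B Bt A K ω n).2.2 :=
  monotone_nat_of_le_succ fun _ => stp_mono B Bt A K _ _

lemma stp_mem {X : Type*} (B Bt : Set X) (A : Finset X) (K : ℕ) (s : Bool × ℕ × Finset X)
    (y : X) (hy : y ∈ A) (h : (stp B Bt A K s y).1 = true) : y ∈ (stp B Bt A K s y).2.2 := by
  obtain ⟨b, k, S⟩ := s
  revert h
  cases b <;> simp only [stp] <;> split_ifs <;> simp [hy]

lemma stA_mem {X : Type*} (B Bt : Set X) (A : Finset X) (K : ℕ) (ω : ℕ → X) (n : ℕ)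
    (hy : ω n ∈ A) (h : (stA B Bt A K ω n).1 = true) : ω n ∈ (stA B Bt A K ω n).2.2 := by
  cases n with
  | zero => exact stp_mem B Bt A K _ _ hy h
  | succ n => exact stp_mem B Bt A K _ _ hy h

lemma stA_out {X : Type*} (B Bt : Set X) (hB : B ⊆ Bt) (A : Finset X) (K : ℕ) (ω : ℕ → X)
    (n : ℕ) (h : (stA B Bt A K ω n).1 = false) (hk : (stA B Bt A K ω n).2.1 < K) :
    ω n ∉ B := by
  have key : ∀ (s : Bool × ℕ × Finset X) (y : X), (stp B Bt A K s y).1 = false →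
      (stp B Bt A K s y).2.1 < K → y ∉ B := by
    intro s y
    obtain ⟨b, k, S⟩ := s
    cases b
    · simp only [stp]
      split_ifs with h1
      · simp
      · intro _ h2 h3
        exact h1 ⟨h3, h2⟩
    · simp only [stp]
      split_ifs with h1
      · simp
      · intro _ _ h3
        exact h1 (hB h3)
  cases n with
  | zero => exact key _ _ h hk
  | succ n => exact key _ _ h hk

lemma entT_le {X : Type*} (U : Set X) (ω : ℕ → X) (n : ℕ) (h : ω n ∈ U) : entT U ω ≤ n :=
  sInf_le ⟨n, h, rfl⟩

lemma after_coe {X : Type*} (a : ℕ) (f : (ℕ → X) → ℕ∞) (ω : ℕ → X) :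
    after (a : ℕ∞) f ω = (a : ℕ∞) + f fun k => ω (k + a) := rfl

lemma DD_succ_le (d N : ℕ) (j : ℤ) (k : ℕ) (ω : ℕ → Cyl d N) (R n : ℕ) (hRn : R ≤ n)
    (h1 : DD d N j k ω ≤ R) (h2 : ω R ∈ Bblk d N j) (h3 : ω n ∉ Btl d N j) :
    DD d N j (k + 1) ω ≤ n := by
  rw [DD]
  obtain ⟨a, ha, haR⟩ := ENat.le_natCast_iff.1 h1
  rw [ha, after_coe, oneExc]
  have h4 := entT_le (Bblk d N j) (fun k => ω (k + a)) (R - a)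
    (by simpa [Nat.sub_add_cancel haR] using h2)
  obtain ⟨r, hr, hrR⟩ := ENat.le_natCast_iff.1 h4
  rw [hr, after_coe]
  have h5 := entT_le (Btl d N j)ᶜ (fun l => (fun k => ω (k + a)) (l + r)) (n - a - r)
    (by
      have : n - a - r + r + a = n := by omega
      simpa [this] using h3)
  unfold exitT
  calc (a : ℕ∞) + (r + entT (Btl d N j)ᶜ (fun l => (fun k => ω (k + a)) (l + r)))
      ≤ (a : ℕ∞) + (r + ((n - a - r : ℕ) : ℕ∞)) := by gcongr
    _ = ((a + (r + (n - a - r)) : ℕ) : ℕ∞) := by push_cast; rfl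
    _ = n := by congr 1; omega

lemma Bblk_sub (d N : ℕ) (hN : 1 ≤ N) (j : ℤ) : Bblk d N j ⊆ Btl d N j := by
  intro x hx
  simp only [Bblk, Btl, Set.mem_ofPred_eq] at hx ⊢
  have : (1 : ℤ) ≤ N := by exact_mod_cast hN
  constructor <;> nlinarith [hx.1, hx.2]

lemma stA_inv (d N : ℕ) (j : ℤ) (A : Finset (Cyl d N)) (K : ℕ) (hK : 1 ≤ K)
    (ω : ℕ → Cyl d N) (n : ℕ) :
    DD d N j (stA (Bblk d N j) (Btl d N j) A K ω n).2.1 ω ≤ n ∧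
    (stA (Bblk d N j) (Btl d N j) A K ω n).2.1 ≤ K ∧
    ((stA (Bblk d N j) (Btl d N j) A K ω n).1 = true →
      (stA (Bblk d N j) (Btl d N j) A K ω n).2.1 < K ∧ ∃ R ≤ n,
        DD d N j (stA (Bblk d N j) (Btl d N j) A K ω n).2.1 ω ≤ R ∧ ω R ∈ Bblk d N j) ∧
    ((stA (Bblk d N j) (Btl d N j) A K ω n).2.1 = K → ω n ∈ Btl d N j →
      DD d N j K ω < n) := by
  induction n with
  | zero =>
    simp only [stA, stp]
    split_ifs with h
    · refine ⟨by simp [DD], by simp, fun _ => ⟨by simp only; omega, 0, le_rfl, by simp [DD], h.1⟩,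
        fun h' => ?_⟩
      simp at h'; omega
    · refine ⟨by simp [DD], by simp, by simp, fun h' => ?_⟩
      simp at h'; omega
  | succ n ih =>
    have hlt : (n : ℕ∞) < ((n + 1 : ℕ) : ℕ∞) := by exact_mod_cast Nat.lt_succ_self n
    rw [stA]
    generalize stA (Bblk d N j) (Btl d N j) A K ω n = s at ih
    obtain ⟨b, k, S⟩ := s
    obtain ⟨i1, i2, i3, i4⟩ := ih
    simp only at i1 i2 i3 i4
    cases b
    · simp only [stp]
      split_ifs with h
      · refine ⟨i1.trans hlt.le, i2, fun _ => ⟨h.2, n + 1, le_rfl, i1.trans hlt.le, h.1⟩, ?_⟩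
        intro h'
        have := h.2
        simp only at h'
        omega
      · refine ⟨i1.trans hlt.le, i2, by simp, fun h' _ => ?_⟩
        simp only at h'
        subst h'
        exact i1.trans_lt hlt
    · obtain ⟨hk, R, hR, hDR, hRB⟩ := i3 rfl
      simp only [stp]
      split_ifs with h
      · refine ⟨i1.trans hlt.le, i2, fun _ => ⟨hk, R, by omega, hDR, hRB⟩, ?_⟩
        intro h'
        simp only at h'
        omega
      · refine ⟨DD_succ_le d N j k ω R (n + 1) (by omega) hDR hRB h, hk, by simp, ?_⟩
        intro _ h'
        exact absurd h' h

lemma stA_visit (d N : ℕ) (hN : 1 ≤ N) (j : ℤ) (A : Finset (Cyl d N))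
    (hA : (A : Set (Cyl d N)) ⊆ Bblk d N j) (K : ℕ) (hK : 1 ≤ K)
    (ω : ℕ → Cyl d N) (n : ℕ) (hn : (n : ℕ∞) ≤ DD d N j K ω) (hω : ω n ∈ A) :
    ω n ∈ (stA (Bblk d N j) (Btl d N j) A K ω n).2.2 := by
  apply stA_mem _ _ _ _ _ _ hω
  obtain ⟨i1, i2, i3, i4⟩ := stA_inv d N j A K hK ω n
  by_contra hb
  rw [Bool.not_eq_true] at hb
  have hB : ω n ∈ Bblk d N j := hA hω
  rcases lt_or_eq_of_le i2 with h | h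
  · exact stA_out _ _ (Bblk_sub d N hN j) A K ω n hb h hB
  · exact absurd (i4 h (Bblk_sub d N hN j hB)) (not_lt.2 hn)

/-- Value function of the automaton. -/
noncomputable def valA {X : Type*} (l M : ℝ) (hh : X → ℝ) (a K : ℕ) :
    Bool × ℕ × Finset X → X → ℝ
  | (true, k, S), x => Real.exp (l * ((S.card : ℝ) - a)) * M ^ (K - (k + 1)) * hh x
  | (false, k, S), _ => Real.exp (l * ((S.card : ℝ) - a)) * M ^ (K - k)

lemma valA_true {X : Type*} (B Bt : Set X) (A : Finset X) (l M : ℝ) (hl : 0 ≤ l) (hM : 1 ≤ M)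
    (h hh : X → ℝ) (hh1 : ∀ x, 1 ≤ hh x) (h1 : ∀ x, 1 ≤ h x)
    (hA : ∀ y ∈ Bt, y ∈ A → Real.exp l * hh y ≤ h y) (hnA : ∀ y ∈ Bt, hh y ≤ h y)
    (a K k : ℕ) (S : Finset X) (y : X) :
    valA l M hh a K (stp B Bt A K (true, k, S) y) y
      ≤ Real.exp (l * ((S.card : ℝ) - a)) * M ^ (K - (k + 1)) * h y ∧
    (y ∈ Bt → Real.exp (l * (((S ∪ ({y} ∩ A)).card : ℝ) - a)) * hh y
      ≤ Real.exp (l * ((S.card : ℝ) - a)) * h y) := by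
  have key : y ∈ Bt → Real.exp (l * (((S ∪ ({y} ∩ A)).card : ℝ) - a)) * hh y
      ≤ Real.exp (l * ((S.card : ℝ) - a)) * h y := by
    intro hy
    by_cases hyA : y ∈ A
    · have hc : ((S ∪ ({y} ∩ A)).card : ℝ) ≤ S.card + 1 := by
        have h2 := Finset.card_union_le S ({y} ∩ A)
        have h3 : ({y} ∩ A).card ≤ 1 :=
          (Finset.card_le_card Finset.inter_subset_left).trans (by simp)
        exact_mod_cast h2.trans (by omega)
      have he : Real.exp (l * (((S ∪ ({y} ∩ A)).card : ℝ) - a))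
          ≤ Real.exp (l * ((S.card : ℝ) - a)) * Real.exp l := by
        rw [← Real.exp_add]
        apply Real.exp_le_exp.2
        nlinarith
      calc _ ≤ Real.exp (l * ((S.card : ℝ) - a)) * Real.exp l * hh y := by
            gcongr
            linarith [hh1 y]
        _ = Real.exp (l * ((S.card : ℝ) - a)) * (Real.exp l * hh y) := by ring
        _ ≤ _ := by gcongr; exact hA y hy hyA
    · have : S ∪ ({y} ∩ A) = S := by
        rw [Finset.singleton_inter_of_notMem hyA, Finset.union_empty]
      rw [this]
      gcongr
      exact hnA y hy
  refine ⟨?_, key⟩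
  simp only [stp]
  split_ifs with hy
  · simp only [valA]
    have := mul_le_mul_of_nonneg_right (key hy) (by positivity : 0 ≤ M ^ (K - (k + 1)))
    nlinarith [this]
  · simp only [valA]
    exact le_mul_of_one_le_right (by positivity) (h1 y)

lemma valA_false {X : Type*} (B Bt : Set X) (hB : B ⊆ Bt) (A : Finset X) (l M : ℝ)
    (hl : 0 ≤ l) (hM : 1 ≤ M)
    (h hh : X → ℝ) (hh1 : ∀ x, 1 ≤ hh x) (h1 : ∀ x, 1 ≤ h x)
    (hA : ∀ y ∈ Bt, y ∈ A → Real.exp l * hh y ≤ h y) (hnA : ∀ y ∈ Bt, hh y ≤ h y)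
    (a K k : ℕ) (S : Finset X) (y : X) (z : ℝ) (hz : 1 ≤ z)
    (hy : y ∈ B → k < K → h y ≤ M * z) :
    valA l M hh a K (stp B Bt A K (false, k, S) y) y
      ≤ Real.exp (l * ((S.card : ℝ) - a)) * M ^ (K - k) * z := by
  simp only [stp]
  split_ifs with hyB
  · simp only [valA]
    have h2 := (valA_true B Bt A l M hl hM h hh hh1 h1 hA hnA a K k S y).2 (hB hyB.1)
    have h3 := hy hyB.1 hyB.2
    have h4 : K - k = (K - (k + 1)) + 1 := by omega
    rw [h4, pow_succ]
    calc _ = (Real.exp (l * (((S ∪ ({y} ∩ A)).card : ℝ) - a)) * hh y) * M ^ (K - (k + 1)) := by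
          ring
      _ ≤ (Real.exp (l * ((S.card : ℝ) - a)) * (M * z)) * M ^ (K - (k + 1)) := by
          exact mul_le_mul_of_nonneg_right (h2.trans (by gcongr)) (by positivity)
      _ = _ := by ring
  · simp only [valA]
    exact le_mul_of_one_le_right (by positivity) hz

lemma Pl_bound (d N : ℕ) (hN : 1 ≤ N) (j : ℤ) (A : Finset (Cyl d N))
    (hAB : (A : Set (Cyl d N)) ⊆ Bblk d N j) (K : ℕ) (hK : 1 ≤ K)
    (Pl : Cyl d N → Measure (ℕ → Cyl d N)) (hPl : IsCylRW d N Pl)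
    (l M : ℝ) (hl : 0 ≤ l) (hM : 1 ≤ M) (h hh : Cyl d N → ℝ) (h1 : ∀ x, 1 ≤ h x)
    (hhh : ∀ x, ∑ e ∈ unitVecs d, h (x + projE d N e) = 2 * (d + 1) * hh x)
    (hA : ∀ y ∈ Btl d N j, y ∈ A → Real.exp l * hh y ≤ h y)
    (hnA : ∀ y ∈ Btl d N j, hh y ≤ h y)
    (hent : ∀ x, x ∉ Bblk d N j → ∀ e ∈ unitVecs d, x + projE d N e ∈ Bblk d N j →
      h (x + projE d N e) ≤ M) (x : Cyl d N) :
    Pl x {ω | ∀ y ∈ A, y ∈ ranE ω (DD d N j K ω)}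
      ≤ ENNReal.ofReal (Real.exp (-l * A.card) * M ^ K *
        (if x ∈ Bblk d N j then h x else 1)) := by
  have hB := Bblk_sub d N hN j
  have hprob := hPl.1 x
  have hd : (0 : ℝ) < 2 * (d + 1) := by positivity
  have hh1 : ∀ x, 1 ≤ hh x := by
    intro x
    have h2 : ∑ e ∈ unitVecs d, (1 : ℝ) ≤ ∑ e ∈ unitVecs d, h (x + projE d N e) :=
      Finset.sum_le_sum fun e _ => h1 _
    rw [hhh, Finset.sum_const, card_unitVecs, nsmul_eq_mul] at h2
    push_cast at h2
    rw [mul_one] at h2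
    exact le_of_mul_le_mul_left (by linarith) hd
  set E : ℕ → Set (ℕ → Cyl d N) := fun n =>
    {ω | ∀ y ∈ A, ∃ i ≤ n, (i : ℕ∞) ≤ DD d N j K ω ∧ ω i = y} with hE
  have hunion : {ω | ∀ y ∈ A, y ∈ ranE ω (DD d N j K ω)} = ⋃ n, E n := by
    ext ω
    simp only [Set.mem_iUnion, hE, Set.mem_ofPred_eq, ranE]
    constructor
    · intro hω
      choose! f hf using hω
      exact ⟨A.sup f, fun y hy => ⟨f y, Finset.le_sup hy, hf y hy⟩⟩
    · rintro ⟨n, hn⟩ y hy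
      obtain ⟨i, _, hi⟩ := hn y hy
      exact ⟨i, hi⟩
  have hmono : Monotone E := by
    intro n n' hnn ω hω y hy
    obtain ⟨i, hi, hi2⟩ := hω y hy
    exact ⟨i, hi.trans hnn, hi2⟩
  rw [hunion, hmono.measure_iUnion]
  refine iSup_le fun n => ?_
  have hval0 : ∀ s y, 0 ≤ valA l M hh A.card K s y := by
    rintro ⟨b, k, S⟩ y
    have := hh1 y
    cases b <;> simp only [valA] <;> positivity
  have hup := path_upper0 (Pl x) x (stepProb d N) (fun k γ => hPl.2 x k γ) n
    (fun k γ => ENNReal.ofReal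
      (valA l M hh A.card K (stA (Bblk d N j) (Btl d N j) A K γ k) (γ k)))
    (by
      intro k γ γ' hγ
      rw [stA_congr _ _ _ _ k γ γ' hγ, hγ k le_rfl]) (E n)
    (by
      intro ω hω
      have hsub : A ⊆ (stA (Bblk d N j) (Btl d N j) A K ω n).2.2 := by
        intro y hy
        obtain ⟨i, hi, hi2, hi3⟩ := hω y hy
        have := stA_visit d N hN j A hAB K hK ω i hi2 (by rw [hi3]; exact hy)
        rw [hi3] at this
        exact stA_mono _ _ A K ω hi this
      generalize stA (Bblk d N j) (Btl d N j) A K ω n = s at hsub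
      obtain ⟨b, k, S⟩ := s
      have hc : (A.card : ℝ) ≤ S.card := by exact_mod_cast Finset.card_le_card hsub
      have he : 1 ≤ Real.exp (l * ((S.card : ℝ) - A.card)) :=
        Real.one_le_exp (mul_nonneg hl (by linarith))
      rw [ENNReal.one_le_ofReal]
      cases b
      · simp only [valA]
        exact one_le_mul_of_one_le_of_one_le he (one_le_pow₀ hM)
      · simp only [valA]
        exact one_le_mul_of_one_le_of_one_le
          (one_le_mul_of_one_le_of_one_le he (one_le_pow₀ hM)) (hh1 _))
    (by
      intro k _ γ
      have hupd : ∀ y, stA (Bblk d N j) (Btl d N j) A K (Function.update γ (k + 1) y) (k + 1)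
          = stp (Bblk d N j) (Btl d N j) A K (stA (Bblk d N j) (Btl d N j) A K γ k) y := by
        intro y
        rw [stA, Function.update_self]
        congr 1
        apply stA_congr
        intro i hi
        rw [Function.update_of_ne (by omega)]
      simp only [hupd, Function.update_self]
      rw [tsum_stepProb d N (γ k) (fun y => ENNReal.ofReal (valA l M hh A.card K
        (stp (Bblk d N j) (Btl d N j) A K (stA (Bblk d N j) (Btl d N j) A K γ k) y) y))]
      rw [← ENNReal.ofReal_sum_of_nonneg (fun _ _ => hval0 _ _)]
      have hdd : (2 * ((d : ℝ≥0∞) + 1)) = ENNReal.ofReal (2 * (d + 1)) := by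
        rw [ENNReal.ofReal_mul (by norm_num), ENNReal.ofReal_add (by positivity) (by norm_num)]
        simp
      rw [hdd, ← ENNReal.ofReal_div_of_pos hd]
      apply ENNReal.ofReal_le_ofReal
      rw [div_le_iff₀ hd]
      have hout := stA_out _ _ hB A K γ k
      generalize stA (Bblk d N j) (Btl d N j) A K γ k = s at hout
      obtain ⟨b, q, S⟩ := s
      cases b
      · have hb : ∀ e ∈ unitVecs d, valA l M hh A.card K
            (stp (Bblk d N j) (Btl d N j) A K (false, q, S) (γ k + projE d N e))
              (γ k + projE d N e)
            ≤ Real.exp (l * ((S.card : ℝ) - A.card)) * M ^ (K - q) * 1 := by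
          intro e he
          apply valA_false _ _ hB A l M hl hM h hh hh1 h1 hA hnA _ _ _ _ _ _ le_rfl
          intro hy hqK
          rw [mul_one]
          exact hent _ (hout rfl hqK) e he hy
        refine (Finset.sum_le_sum hb).trans ?_
        rw [Finset.sum_const, card_unitVecs, nsmul_eq_mul]
        simp only [valA]
        push_cast
        apply le_of_eq
        ring
      · have hb : ∀ e ∈ unitVecs d, valA l M hh A.card K
            (stp (Bblk d N j) (Btl d N j) A K (true, q, S) (γ k + projE d N e))
              (γ k + projE d N e)
            ≤ Real.exp (l * ((S.card : ℝ) - A.card)) * M ^ (K - (q + 1))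
              * h (γ k + projE d N e) := fun e _ =>
          (valA_true _ _ A l M hl hM h hh hh1 h1 hA hnA _ _ _ _ _).1
        refine (Finset.sum_le_sum hb).trans ?_
        rw [← Finset.mul_sum, hhh]
        simp only [valA]
        apply le_of_eq
        ring)
  refine hup.trans (ENNReal.ofReal_le_ofReal ?_)
  simp only [stA]
  have hz : (1 : ℝ) ≤ if x ∈ Bblk d N j then h x else 1 := by
    split_ifs
    · exact h1 x
    · exact le_rfl
  have := valA_false _ _ hB A l M hl hM h hh hh1 h1 hA hnA A.card K 0 ∅ x _ hz
    (by
      intro hx _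
      rw [if_pos hx]
      have := h1 x
      nlinarith)
  refine this.trans (le_of_eq ?_)
  simp

lemma unit_last (d : ℕ) (e : Lat d) (he : e ∈ unitVecs d) : |e (Fin.last d)| ≤ 1 := by
  obtain ⟨l, hl⟩ := (mem_unitVecs d e).1 he
  by_cases hil : Fin.last d = l
  · rcases hl with h | h <;> simp [h, hil]
  · rcases hl with h | h <;> simp [h, hil]

lemma lawP_bound (d N : ℕ) (hN : 1 ≤ N) (Pl : Cyl d N → Measure (ℕ → Cyl d N))
    (E : Set (ℕ → Cyl d N)) (c0 b : ℝ) (hc0 : 0 ≤ c0) (hb : 0 ≤ b)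
    (H : Cyl d N → ℝ) (hH0 : ∀ x, 0 ≤ H x)
    (hE : ∀ x, Pl x E ≤ ENNReal.ofReal (c0 * (1 + H x)))
    (hH : ∀ T : Finset (Cyl d N), (∀ y ∈ T, |y.2| ≤ N) →
      ∑ y ∈ T, H y ≤ b * ((N : ℝ) ^ d * (2 * N + 1))) :
    (lawP d N Pl E).toReal ≤ c0 * (1 + b) := by
  have : NeZero N := ⟨by omega⟩
  set F : Finset (Cyl d N) := Finset.univ ×ˢ Finset.Icc (-(N : ℤ)) N with hF
  have hmem : ∀ x : Cyl d N, x ∈ F ↔ x ∈ Bblk d N 0 := by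
    intro x
    simp [hF, Bblk]
  have hcard : (F.card : ℝ) = (N : ℝ) ^ d * (2 * N + 1) := by
    rw [hF, Finset.card_product]
    have h1 : (Finset.univ : Finset (Fin d → ZMod N)).card = N ^ d := by
      simp [ZMod.card]
    have h2 : (Finset.Icc (-(N : ℤ)) N).card = 2 * N + 1 := by
      rw [Int.card_Icc]; omega
    rw [h1, h2]
    push_cast
    ring
  have hpos : (0 : ℝ) < (N : ℝ) ^ d * (2 * N + 1) := by
    have : (0 : ℝ) < N := by exact_mod_cast hN
    positivity
  have hsum : (Measure.sum fun x : Cyl d N => if x ∈ Bblk d N 0 then Pl x else 0) E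
      = ∑ x ∈ F, Pl x E := by
    rw [Measure.sum_apply_of_countable, tsum_eq_sum (s := F)]
    · refine Finset.sum_congr rfl fun x hx => ?_
      rw [if_pos ((hmem x).1 hx)]
    · intro x hx
      rw [if_neg (fun h => hx ((hmem x).2 h))]
      simp
  have hle : ∑ x ∈ F, Pl x E
      ≤ ENNReal.ofReal (c0 * (1 + b) * ((N : ℝ) ^ d * (2 * N + 1))) := by
    refine (Finset.sum_le_sum fun x _ => hE x).trans ?_
    rw [← ENNReal.ofReal_sum_of_nonneg
      (fun x _ => mul_nonneg hc0 (by linarith [hH0 x]))]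
    apply ENNReal.ofReal_le_ofReal
    rw [← Finset.mul_sum, mul_assoc]
    apply mul_le_mul_of_nonneg_left _ hc0
    rw [Finset.sum_add_distrib, Finset.sum_const, nsmul_eq_mul, mul_one, hcard]
    have := hH F (by
      intro y hy
      rw [hF, Finset.mem_product, Finset.mem_Icc] at hy
      exact abs_le.2 hy.2)
    linarith
  have hlaw : lawP d N Pl E ≤ ENNReal.ofReal (c0 * (1 + b)) := by
    rw [lawP, Measure.smul_apply, hsum, smul_eq_mul]
    have hden : (N : ℝ≥0∞) ^ d * (2 * N + 1)
        = ENNReal.ofReal ((N : ℝ) ^ d * (2 * N + 1)) := by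
      rw [ENNReal.ofReal_mul (by positivity), ENNReal.ofReal_pow (by positivity),
        ENNReal.ofReal_add (by positivity) (by norm_num), ENNReal.ofReal_mul (by norm_num)]
      simp
    rw [hden]
    calc _ ≤ (ENNReal.ofReal ((N : ℝ) ^ d * (2 * N + 1)))⁻¹
          * ENNReal.ofReal (c0 * (1 + b) * ((N : ℝ) ^ d * (2 * N + 1))) := by gcongr
      _ = ENNReal.ofReal (c0 * (1 + b)) := by
          rw [← ENNReal.ofReal_inv_of_pos hpos, ← ENNReal.ofReal_mul (by positivity)]
          congr 1
          field_simp
  exact ENNReal.toReal_le_of_le_ofReal (by positivity) hlaw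

lemma exists_eta (lam χ : ℝ) (h : Real.exp lam * χ < 1) :
    ∃ η : ℝ, 0 < η ∧ Real.exp (lam + η) * (χ + η) < 1 := by
  have hc : Continuous fun η : ℝ => Real.exp (lam + η) * (χ + η) := by fun_prop
  have h0 : Real.exp (lam + 0) * (χ + 0) < 1 := by simpa using h
  have := hc.continuousAt.eventually (gt_mem_nhds h0)
  obtain ⟨δ, hδ, hb⟩ := Metric.eventually_nhds_iff.1 this
  refine ⟨δ / 2, by positivity, hb ?_⟩
  rw [Real.dist_eq, sub_zero, abs_of_pos (by positivity)]
  linarith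

set_option maxHeartbeats 2000000 in
lemma main_aux (d m k : ℕ) (hm1 : 1 ≤ m) (hk : 2 ≤ k) (hmk : k + m = d)
    (Q : ZLat (k + 1) → Measure (ℕ → ZLat (k + 1))) (hQ : IsLatRW (k + 1) Q)
    (lam : ℝ) (hlam : 0 < lam)
    (hchi : Real.exp lam *
        ((m : ℝ) / (d + 1) + (1 - (m : ℝ) / (d + 1)) * retProb (k + 1) Q) < 1)
    (Pl : ∀ N : ℕ, Cyl d N → Measure (ℕ → Cyl d N))
    (hPl : ∀ N : ℕ, IsCylRW d N (Pl N)) :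
    ∃ N₁ : ℕ, 0 < N₁ ∧ ∃ u₁ : ℝ, 0 < u₁ ∧
      ∀ N : ℕ, N₁ ≤ N → ∀ j : ℤ, ∀ A ∈ Adm d N j m,
        ((lawP d N (Pl N))
            {ω | ∀ x ∈ A, x ∈ ranE ω (DD d N j ⌊u₁ * (N : ℝ) ^ (d - 1)⌋₊ ω)}).toReal
          ≤ Real.exp (-lam * A.card) := by
  set χ : ℝ := (m : ℝ) / (d + 1) + (1 - (m : ℝ) / (d + 1)) * retProb (k + 1) Q with hχ
  obtain ⟨η, hη, hη1⟩ := exists_eta lam χ hchi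
  set l : ℝ := lam + η with hl
  have hl0 : 0 < l := by linarith
  have hel : 1 < Real.exp l := Real.one_lt_exp_iff.2 hl0
  set c : ℝ := (Real.exp l - 1) / (1 - Real.exp l * (χ + η)) with hc
  have hcpos : 0 < c := div_pos (by linarith) (by linarith)
  have hceq : c * (1 - Real.exp l * (χ + η)) = Real.exp l - 1 := by
    rw [hc, div_mul_cancel₀]
    linarith
  set ε : ℝ := min η (η / (2 * c)) with hε
  have hεpos : 0 < ε := lt_min hη (by positivity)
  have hcε : c * ε ≤ η / 2 := by
    calc c * ε ≤ c * (η / (2 * c)) := by gcongr; exact min_le_right _ _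
      _ = η / 2 := by field_simp
  have hkey : Real.exp l * (1 + c * (χ + ε)) ≤ 1 + c := by
    have h1 : ε ≤ η := min_le_left _ _
    calc Real.exp l * (1 + c * (χ + ε)) ≤ Real.exp l * (1 + c * (χ + η)) := by gcongr
      _ = 1 + c := by linarith
  obtain ⟨C, hC, N₀, hN₀, HU⟩ := exists_U d m k hm1 hk hmk Q hQ ε hεpos
  set u : ℝ := η / (2 * c * C) with hu
  have hupos : 0 < u := by positivity
  refine ⟨max N₀ ⌈1 / u⌉₊, by omega, u, hupos, ?_⟩
  intro N hNN j A hAdm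
  have hN4 : 4 ≤ N := by omega
  have hNr : (1 : ℝ) ≤ N := by exact_mod_cast (by omega : 1 ≤ N)
  have hNp : (1 : ℝ) ≤ (N : ℝ) ^ (d - 1) := one_le_pow₀ hNr
  obtain ⟨U, U1, U2, U3, U4, U5, U6⟩ := HU N (by omega) j A hAdm
  have hd : (0 : ℝ) < 2 * (d + 1) := by positivity
  have hBt : ∀ y : Cyl d N, y ∈ Btl d N j ↔ |y.2 - j * N| ≤ 2 * N - 1 := by
    intro y
    simp only [Btl, Set.mem_ofPred_eq, abs_le]
    constructor <;> rintro ⟨h1, h2⟩ <;> constructor <;> linarith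
  have hBb : ∀ y : Cyl d N, y ∈ Bblk d N j ↔ |y.2 - j * N| ≤ N := by
    intro y
    simp only [Bblk, Set.mem_ofPred_eq, abs_le]
    constructor <;> rintro ⟨h1, h2⟩ <;> constructor <;> linarith
  have hAB : (A : Set (Cyl d N)) ⊆ Bblk d N j := by
    intro y hy
    have h1 := Cblk_vert (hAdm.2.1 hy)
    rw [hBb]
    rw [abs_le] at h1 ⊢
    omega
  have hstep2 : ∀ (x : Cyl d N), ∀ e ∈ unitVecs d,
      |(x + projE d N e).2 - x.2| ≤ 1 := by
    intro x e he
    simpa [projE] using unit_last d e he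
  set h : Cyl d N → ℝ := fun y => if y ∈ Btl d N j then 1 + c * U y else 1 with hh
  set g : Cyl d N → ℝ := fun x => (∑ e ∈ unitVecs d, h (x + projE d N e)) / (2 * (d + 1)) with hg
  have h1 : ∀ x, 1 ≤ h x := by
    intro x
    simp only [hh]
    split_ifs with hx
    · have := U1 x (((hBt x).1 hx).trans (by omega))
      nlinarith
    · exact le_rfl
  have hsumh : ∀ y ∈ Btl d N j, ∑ e ∈ unitVecs d, h (y + projE d N e)
      ≤ 2 * (d + 1) + c * ∑ e ∈ unitVecs d, U (y + projE d N e) := by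
    intro y hy
    have : ∀ e ∈ unitVecs d, h (y + projE d N e) ≤ 1 + c * U (y + projE d N e) := by
      intro e he
      have h2 := hstep2 y e he
      have h3 := (hBt y).1 hy
      have h4 : 0 ≤ U (y + projE d N e) := by
        apply U1
        rw [abs_le] at *
        omega
      simp only [hh]
      split_ifs
      · exact le_rfl
      · nlinarith
    refine (Finset.sum_le_sum this).trans ?_
    rw [Finset.sum_add_distrib, Finset.sum_const, card_unitVecs, nsmul_eq_mul, ← Finset.mul_sum]
    push_cast
    linarith
  set K : ℕ := ⌊u * (N : ℝ) ^ (d - 1)⌋₊ with hK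
  have hK1 : 1 ≤ K := by
    rw [hK, Nat.one_le_floor_iff]
    have h2 : 1 / u ≤ N := (Nat.le_ceil _).trans (by exact_mod_cast (by omega : ⌈1 / u⌉₊ ≤ N))
    have h3 : (N : ℝ) ≤ (N : ℝ) ^ (d - 1) := le_self_pow₀ hNr (by omega)
    rw [div_le_iff₀ hupos] at h2
    nlinarith
  set M : ℝ := 1 + c * (C * A.card / (N : ℝ) ^ (d - 1)) with hM
  have hM1 : 1 ≤ M := by
    rw [hM]
    have : 0 ≤ c * (C * A.card / (N : ℝ) ^ (d - 1)) := by positivity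
    linarith
  have hPb := Pl_bound d N (by omega) j A hAB K hK1 (Pl N) (hPl N) l M hl0.le hM1 h g h1
    (by
      intro x
      simp only [hg]
      field_simp)
    (by
      intro y hy hyA
      have h2 := (hsumh y hy).trans (add_le_add_right
        (mul_le_mul_of_nonneg_left (U4 y hyA) hcpos.le) _)
      have h3 : g y ≤ 1 + c * (χ + ε) := by
        simp only [hg]
        rw [div_le_iff₀ hd]
        linarith
      calc Real.exp l * g y ≤ Real.exp l * (1 + c * (χ + ε)) := by gcongr
        _ ≤ 1 + c := hkey
        _ ≤ h y := by
          simp only [hh]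
          rw [if_pos hy]
          nlinarith [U2 y hyA])
    (by
      intro y hy
      have h2 := (hsumh y hy).trans (add_le_add_right
        (mul_le_mul_of_nonneg_left (U3 y) hcpos.le) _)
      simp only [hg]
      rw [div_le_iff₀ hd]
      have h3 : h y = 1 + c * U y := if_pos hy
      rw [h3]
      linarith)
    (by
      intro x hx e he hxe
      have h2 := hstep2 x e he
      have hxt := Bblk_sub d N (by omega) j hxe
      have h3 : h (x + projE d N e) = 1 + c * U (x + projE d N e) := if_pos hxt
      rw [h3, hM]
      have h4 : |(x + projE d N e).2 - j * N| = N := by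
        rw [hBb] at hx hxe
        rw [abs_le] at hx hxe h2
        generalize (x + projE d N e).2 = b at *
        rcases abs_cases (b - j * N) with h5 | h5 <;> rw [h5.1] <;> omega
      have h5 := U5 _ h4
      gcongr)
  set H : Cyl d N → ℝ := fun x => if x ∈ Bblk d N j then c * U x else 0 with hHdef
  have hfin := lawP_bound d N (by omega) (Pl N)
    {ω | ∀ x ∈ A, x ∈ ranE ω (DD d N j K ω)} (Real.exp (-l * A.card) * M ^ K)
    (c * ε * A.card) (by positivity) (by positivity) H
    (by
      intro x
      simp only [hHdef]
      split_ifs with hx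
      · have := U1 x (((hBb x).1 hx).trans (by omega))
        positivity
      · exact le_rfl)
    (by
      intro x
      refine (hPb x).trans (le_of_eq ?_)
      congr 2
      simp only [hHdef, hh]
      split_ifs with h2 h3
      · rfl
      · exact absurd (Bblk_sub d N (by omega) j h2) h3
      · simp)
    (by
      intro T hT
      simp only [hHdef]
      rw [← Finset.sum_filter, ← Finset.mul_sum]
      have := U6 (T.filter (fun x => x ∈ Bblk d N j))
        (fun y hy => hT y (Finset.mem_filter.1 hy).1)
      calc _ ≤ c * (ε * A.card * ((N : ℝ) ^ d * (2 * N + 1))) := by gcongr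
        _ = _ := by ring)
  refine hfin.trans ?_
  have hMK : M ^ K ≤ Real.exp (η / 2 * A.card) := by
    calc M ^ K ≤ (Real.exp (c * (C * A.card / (N : ℝ) ^ (d - 1)))) ^ K := by
          gcongr
          rw [hM, add_comm]
          exact Real.add_one_le_exp _
      _ = Real.exp (K * (c * (C * A.card / (N : ℝ) ^ (d - 1)))) := by
          rw [← Real.exp_nat_mul]
      _ ≤ _ := by
          apply Real.exp_le_exp.2
          have hKle : (K : ℝ) ≤ u * (N : ℝ) ^ (d - 1) := Nat.floor_le (by positivity)
          calc _ ≤ (u * (N : ℝ) ^ (d - 1)) * (c * (C * A.card / (N : ℝ) ^ (d - 1))) := by gcongr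
            _ = η / 2 * A.card := by
              rw [hu]
              have : (N : ℝ) ^ (d - 1) ≠ 0 := by positivity
              field_simp
  have hlast : 1 + c * ε * A.card ≤ Real.exp (η / 2 * A.card) := by
    have h2 := Real.add_one_le_exp (η / 2 * A.card)
    have h3 : c * ε * A.card ≤ η / 2 * A.card := by gcongr
    linarith
  calc _ ≤ Real.exp (-l * A.card) * Real.exp (η / 2 * A.card) * Real.exp (η / 2 * A.card) := by
        gcongr
    _ = Real.exp (-lam * A.card) := by
        rw [← Real.exp_add, ← Real.exp_add]
        congr 1
        rw [hl]
        ring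

lemma main_aux2 (d m k ν : ℕ) (hν : ν = k + 1) (hm1 : 1 ≤ m) (hk : 2 ≤ k) (hmk : k + m = d)
    (Q : ZLat ν → Measure (ℕ → ZLat ν)) (hQ : IsLatRW ν Q)
    (lam : ℝ) (hlam : 0 < lam)
    (hchi : Real.exp lam *
        ((m : ℝ) / (d + 1) + (1 - (m : ℝ) / (d + 1)) * retProb ν Q) < 1)
    (Pl : ∀ N : ℕ, Cyl d N → Measure (ℕ → Cyl d N))
    (hPl : ∀ N : ℕ, IsCylRW d N (Pl N)) :
    ∃ N₁ : ℕ, 0 < N₁ ∧ ∃ u₁ : ℝ, 0 < u₁ ∧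
      ∀ N : ℕ, N₁ ≤ N → ∀ j : ℤ, ∀ A ∈ Adm d N j m,
        ((lawP d N (Pl N))
            {ω | ∀ x ∈ A, x ∈ ranE ω (DD d N j ⌊u₁ * (N : ℝ) ^ (d - 1)⌋₊ ω)}).toReal
          ≤ Real.exp (-lam * A.card) := by
  subst hν
  exact main_aux d m k hm1 hk hmk Q hQ lam hlam hchi Pl hPl

/-- **Theorem 1.2, part 2.** Under `χ(λ) < 1`, there exist `N₁ > 0`, `u₁ > 0` such that
for `N ≥ N₁`, all `j ∈ ℤ` and all `A ∈ A^j_m`,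
`P[X_{[0, D^j_{u₁ N^{d-1}}]} ⊇ A] ≤ exp(-λ|A|)`. -/
theorem statement_4 (d m : ℕ) (hd : 3 ≤ d) (hm1 : 1 ≤ m) (hm2 : m ≤ d - 2)
    (Q : ZLat (d + 1 - m) → Measure (ℕ → ZLat (d + 1 - m))) (hQ : IsLatRW (d + 1 - m) Q)
    (lam : ℝ) (hlam : 0 < lam)
    (hchi : Real.exp lam *
        ((m : ℝ) / (d + 1) + (1 - (m : ℝ) / (d + 1)) * retProb (d + 1 - m) Q) < 1)
    (Pl : ∀ N : ℕ, Cyl d N → Measure (ℕ → Cyl d N))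
    (hPl : ∀ N : ℕ, IsCylRW d N (Pl N)) :
    ∃ N₁ : ℕ, 0 < N₁ ∧ ∃ u₁ : ℝ, 0 < u₁ ∧
      ∀ N : ℕ, N₁ ≤ N → ∀ j : ℤ, ∀ A ∈ Adm d N j m,
        ((lawP d N (Pl N))
            {ω | ∀ x ∈ A, x ∈ ranE ω (DD d N j ⌊u₁ * (N : ℝ) ^ (d - 1)⌋₊ ω)}).toReal
          ≤ Real.exp (-lam * A.card) := by
  exact main_aux2 d m (d - m) (d + 1 - m) (by omega) hm1 (by omega) (by omega) Q hQ lam hlam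
    hchi Pl hPl

end DiscCyl
end

section
/- (Lemma 1.4) Let d ≥ 3 and 1 ≤ m ≤ d−2. Then limsup_{N→∞} q_N ≤ q(d+1−m), where q_N = sup{P_z[H_F < T_{B̃_0}] : F ∈ L_m, z ∈ ∂F}. -/
open MeasureTheory Filter
open scoped ENNReal Classical

namespace DiscCyl

section General

set_option linter.unusedSectionVars false

variable {X : Type*} [MeasurableSpace X] [DiscreteMeasurableSpace X] [Countable X]

theorem meas_coord (A : Set X) (k : ℕ) : MeasurableSet {ω : ℕ → X | ω k ∈ A} :=
  (measurable_pi_apply k) (MeasurableSet.of_discrete (s := A))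

theorem ext_cyl (μ ν : Measure (ℕ → X)) [IsFiniteMeasure μ]
    (huniv : μ Set.univ = ν Set.univ)
    (h : ∀ (n : ℕ) (γ : ℕ → X), μ {ω | ∀ i ≤ n, ω i = γ i} = ν {ω | ∀ i ≤ n, ω i = γ i}) :
    μ = ν := by
  refine ext_of_generate_finite
    {S : Set (ℕ → X) | ∃ (n : ℕ) (γ : ℕ → X), S = {ω | ∀ i ≤ n, ω i = γ i}} ?_ ?_ ?_ huniv
  · apply le_antisymm
    · refine iSup_le fun i => ?_
      rintro s ⟨t, _, rfl⟩
      have : (fun b : ℕ → X => b i) ⁻¹' t =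
          ⋃ (g : Fin (i + 1) → X) (_ : g (Fin.last i) ∈ t),
            {ω : ℕ → X | ∀ k ≤ i, ω k = (fun k => g ⟨min k i, by omega⟩ : ℕ → X) k} := by
        ext ω
        simp only [Set.mem_preimage, Set.mem_iUnion, Set.mem_ofPred_eq, exists_prop]
        constructor
        · intro hω
          refine ⟨fun k => ω k, by simpa using hω, fun k hk => ?_⟩
          simp [min_eq_left hk]
        · rintro ⟨g, hg, hω⟩
          rw [hω i le_rfl]
          simpa [Fin.last] using hg
      rw [this]
      refine MeasurableSet.iUnion fun g => MeasurableSet.iUnion fun _ => ?_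
      exact MeasurableSpace.measurableSet_generateFrom ⟨_, _, rfl⟩
    · refine MeasurableSpace.generateFrom_le ?_
      rintro S ⟨n, γ, rfl⟩
      have : {ω : ℕ → X | ∀ i ≤ n, ω i = γ i} = ⋂ i, ⋂ (_ : i ≤ n), {ω | ω i = γ i} := by
        ext; simp
      rw [this]
      refine MeasurableSet.iInter fun i => MeasurableSet.iInter fun _ => ?_
      simpa using meas_coord {γ i} i
  · rintro S ⟨n, γ, rfl⟩ T ⟨n', γ', rfl⟩ ⟨ω, h1, h2⟩
    refine ⟨max n n', ω, ?_⟩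
    ext ξ
    simp only [Set.mem_inter_iff, Set.mem_ofPred_eq] at *
    constructor
    · rintro ⟨h3, h4⟩ i hi
      rcases le_max_iff.1 hi with hi | hi
      · rw [h3 i hi, h1 i hi]
      · rw [h4 i hi, h2 i hi]
    · intro h3
      exact ⟨fun i hi => by rw [h3 i (le_max_of_le_left hi), h1 i hi],
        fun i hi => by rw [h3 i (le_max_of_le_right hi), h2 i hi]⟩
  · rintro S ⟨n, γ, rfl⟩
    exact h n γ

/-- Abstract random walk with uniformly chosen increments `st i`. -/
structure RW {ι : Type*} [Fintype ι] [Add X] (st : ι → X) (P : X → Measure (ℕ → X)) : Prop where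
  prob : ∀ x, IsProbabilityMeasure (P x)
  start : ∀ x, ∀ᵐ ω ∂(P x), ω 0 = x
  markov : ∀ x (S : Set (ℕ → X)), MeasurableSet S →
    (P x).real {ω | (fun k => ω (k + 1)) ∈ S} =
      (Fintype.card ι : ℝ)⁻¹ * ∑ i, (P (x + st i)).real S

theorem RW.mk' {ι : Type*} [Fintype ι] [Nonempty ι] [Add X] [DecidableEq X] (st : ι → X)
    (P : X → Measure (ℕ → X)) (p : X → X → ℝ≥0∞)
    (hp : ∀ x y, p x y = ((Finset.univ.filter fun i => x + st i = y).card : ℝ≥0∞) /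
      (Fintype.card ι : ℝ≥0∞))
    (hprob : ∀ x, IsProbabilityMeasure (P x))
    (hcyl : ∀ (x : X) (n : ℕ) (γ : ℕ → X), P x {ω | ∀ i ≤ n, ω i = γ i} =
        (if γ 0 = x then 1 else 0) * ∏ i ∈ Finset.range n, p (γ i) (γ (i + 1))) :
    RW st P := by
  have hc0 : (Fintype.card ι : ℝ≥0∞) ≠ 0 := by simp
  have hct : (Fintype.card ι : ℝ≥0∞) ≠ ⊤ := by simp
  have hstart : ∀ x, ∀ᵐ ω ∂(P x), ω 0 = x := by
    intro x
    have h1 := hcyl x 0 (fun _ => x)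
    simp only [nonpos_iff_eq_zero, forall_eq, if_true, Finset.range_zero, Finset.prod_empty,
      mul_one] at h1
    have := hprob x
    have hm : MeasurableSet {ω : ℕ → X | ω 0 = x} := by simpa using meas_coord {x} 0
    rw [← prob_compl_eq_zero_iff hm] at h1
    exact h1
  refine ⟨hprob, hstart, ?_⟩
  intro x S hS
  have hsh : Measurable (fun (ω : ℕ → X) (k : ℕ) => ω (k + 1)) :=
    measurable_pi_lambda _ fun k => measurable_pi_apply _
  have key : (P x).map (fun (ω : ℕ → X) (k : ℕ) => ω (k + 1)) =
      (Fintype.card ι : ℝ≥0∞)⁻¹ • ∑ i, P (x + st i) := by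
    have := hprob x
    have : IsFiniteMeasure ((P x).map (fun (ω : ℕ → X) (k : ℕ) => ω (k + 1))) := inferInstance
    apply ext_cyl
    · rw [Measure.map_apply hsh MeasurableSet.univ]
      simp only [Set.preimage_univ, measure_univ, Measure.smul_apply, Measure.finsetSum_apply,
        Finset.sum_const, smul_eq_mul, nsmul_eq_mul, mul_one, Finset.card_univ]
      exact (ENNReal.inv_mul_cancel hc0 hct).symm
    · intro n γ
      rw [Measure.map_apply hsh]
      swap
      · have : {ω : ℕ → X | ∀ i ≤ n, ω i = γ i} = ⋂ i, ⋂ (_ : i ≤ n), {ω | ω i = γ i} := by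
          ext; simp
        rw [this]
        refine MeasurableSet.iInter fun i => MeasurableSet.iInter fun _ => ?_
        simpa using meas_coord {γ i} i
      have e1 : P x ((fun (ω : ℕ → X) (k : ℕ) => ω (k + 1)) ⁻¹' {ω | ∀ i ≤ n, ω i = γ i}) =
          P x {ω | ∀ i ≤ n + 1, ω i = (fun k => Nat.casesOn k x γ : ℕ → X) i} := by
        apply measure_congr
        filter_upwards [hstart x] with ω hω
        apply propext
        change (∀ i ≤ n, ω (i + 1) = γ i) ↔ (∀ i ≤ n + 1, _)
        constructor
        · intro h i hi
          cases i with
          | zero => exact hω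
          | succ i => exact h i (by omega)
        · intro h i hi
          exact h (i + 1) (by omega)
      rw [e1, hcyl, Finset.prod_range_succ']
      simp only [Measure.smul_apply, Measure.finsetSum_apply, smul_eq_mul, hcyl]
      change (if x = x then (1 : ℝ≥0∞) else 0) *
        ((∏ k ∈ Finset.range n, p (γ k) (γ (k + 1))) * p x (γ 0)) = _
      rw [if_pos rfl, one_mul]
      rw [← Finset.sum_mul, hp x, Finset.sum_boole, mul_comm, ENNReal.div_eq_inv_mul, mul_assoc]
      simp only [eq_comm]
  have h2 := congrArg (fun μ => (μ S).toReal) key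
  simp only [Measure.map_apply hsh hS, Measure.smul_apply, Measure.finsetSum_apply, smul_eq_mul,
    ENNReal.toReal_mul, ENNReal.toReal_inv, ENNReal.toReal_natCast] at h2
  rw [ENNReal.toReal_sum (fun i _ => by have := hprob (x + st i); exact measure_ne_top _ _)] at h2
  exact h2

variable {ι : Type*} [Fintype ι] [Add X] {st : ι → X} {P : X → Measure (ℕ → X)}

theorem meas_hit (A : Set X) (n : ℕ) : MeasurableSet {ω : ℕ → X | ∃ k ≤ n, ω k ∈ A} := by
  have : {ω : ℕ → X | ∃ k ≤ n, ω k ∈ A} = ⋃ k, ⋃ (_ : k ≤ n), {ω | ω k ∈ A} := by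
    ext; simp
  rw [this]
  exact MeasurableSet.iUnion fun k => MeasurableSet.iUnion fun _ => meas_coord A k

theorem meas_stay (A : Set X) (n : ℕ) : MeasurableSet {ω : ℕ → X | ∀ k ≤ n, ω k ∈ A} := by
  have : {ω : ℕ → X | ∀ k ≤ n, ω k ∈ A} = ⋂ k, ⋂ (_ : k ≤ n), {ω | ω k ∈ A} := by
    ext; simp
  rw [this]
  exact MeasurableSet.iInter fun k => MeasurableSet.iInter fun _ => meas_coord A k

theorem RW.coord_zero (h : RW st P) (A : Set X) (x : X) :
    (P x).real {ω | ω 0 ∈ A} = if x ∈ A then 1 else 0 := by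
  have := h.prob x
  have e : (P x).real {ω | ω 0 ∈ A} = (P x).real {_ω : ℕ → X | x ∈ A} := by
    apply measureReal_congr
    filter_upwards [h.start x] with ω hω
    apply propext
    change ω 0 ∈ A ↔ x ∈ A
    rw [hω]
  rw [e]
  split_ifs with hx <;> simp [hx]

theorem RW.coord_succ (h : RW st P) (A : Set X) (n : ℕ) (x : X) :
    (P x).real {ω | ω (n + 1) ∈ A} =
      (Fintype.card ι : ℝ)⁻¹ * ∑ i, (P (x + st i)).real {ω | ω n ∈ A} :=
  h.markov x {ω | ω n ∈ A} (meas_coord A n)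

theorem RW.hit_mem (h : RW st P) (A : Set X) (n : ℕ) (x : X) (hx : x ∈ A) :
    (P x).real {ω | ∃ k ≤ n, ω k ∈ A} = 1 := by
  have := h.prob x
  have e : (P x).real {ω | ∃ k ≤ n, ω k ∈ A} = (P x).real Set.univ := by
    apply measureReal_congr
    filter_upwards [h.start x] with ω hω
    apply propext
    change (∃ k ≤ n, ω k ∈ A) ↔ True
    simp only [iff_true]
    exact ⟨0, Nat.zero_le _, by rw [hω]; exact hx⟩
  rw [e]; simp

theorem RW.hit_zero (h : RW st P) (A : Set X) (x : X) (hx : x ∉ A) :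
    (P x).real {ω | ∃ k ≤ 0, ω k ∈ A} = 0 := by
  have := h.coord_zero A x
  simp only [hx, if_false] at this
  simpa using this

theorem RW.hit_succ (h : RW st P) (A : Set X) (n : ℕ) (x : X) (hx : x ∉ A) :
    (P x).real {ω | ∃ k ≤ n + 1, ω k ∈ A} =
      (Fintype.card ι : ℝ)⁻¹ * ∑ i, (P (x + st i)).real {ω | ∃ k ≤ n, ω k ∈ A} := by
  rw [← h.markov x _ (meas_hit A n)]
  apply measureReal_congr
  filter_upwards [h.start x] with ω hω
  apply propext
  change (∃ k ≤ n + 1, ω k ∈ A) ↔ (∃ k ≤ n, ω (k + 1) ∈ A)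
  constructor
  · rintro ⟨k, hk, hA⟩
    cases k with
    | zero => rw [hω] at hA; exact absurd hA hx
    | succ k => exact ⟨k, by omega, hA⟩
  · rintro ⟨k, hk, hA⟩
    exact ⟨k + 1, by omega, hA⟩

theorem RW.stay_not_mem (h : RW st P) (A : Set X) (n : ℕ) (x : X) (hx : x ∉ A) :
    (P x).real {ω | ∀ k ≤ n, ω k ∈ A} = 0 := by
  have e : (P x).real {ω | ∀ k ≤ n, ω k ∈ A} = (P x).real ∅ := by
    apply measureReal_congr
    filter_upwards [h.start x] with ω hω
    apply propext
    change (∀ k ≤ n, ω k ∈ A) ↔ False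
    simp only [iff_false]
    intro h0
    have := h0 0 (Nat.zero_le _)
    rw [hω] at this
    exact hx this
  rw [e]; simp

theorem RW.stay_succ (h : RW st P) (A : Set X) (n : ℕ) (x : X) (hx : x ∈ A) :
    (P x).real {ω | ∀ k ≤ n + 1, ω k ∈ A} =
      (Fintype.card ι : ℝ)⁻¹ * ∑ i, (P (x + st i)).real {ω | ∀ k ≤ n, ω k ∈ A} := by
  rw [← h.markov x _ (meas_stay A n)]
  apply measureReal_congr
  filter_upwards [h.start x] with ω hω
  apply propext
  change (∀ k ≤ n + 1, ω k ∈ A) ↔ (∀ k ≤ n, ω (k + 1) ∈ A)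
  constructor
  · intro h k hk
    exact h (k + 1) (by omega)
  · intro h k hk
    cases k with
    | zero => rw [hω]; exact hx
    | succ k => exact h k (by omega)

end General

/-- Signed unit vector. -/
def sv {n : ℕ} (p : Fin n × Bool) : Fin n → ℤ := Pi.single p.1 (if p.2 then (1 : ℤ) else -1)

theorem sv_inj {n : ℕ} : Function.Injective (sv (n := n)) := by
  rintro ⟨i, b⟩ ⟨j, c⟩ h
  have hij : i = j := by
    by_contra hne
    have := congrFun h i
    simp only [sv, Pi.single_eq_same, Pi.single_eq_of_ne hne] at this
    split_ifs at this; omega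
  subst hij
  have := congrFun h i
  simp only [sv, Pi.single_eq_same] at this
  cases b <;> cases c <;> simp_all

theorem latRW (ν : ℕ) (hν : 0 < ν) (Q : ZLat ν → Measure (ℕ → ZLat ν)) (hQ : IsLatRW ν Q) :
    RW (sv (n := ν)) Q := by
  have : Nonempty (Fin ν × Bool) := ⟨⟨⟨0, hν⟩, true⟩⟩
  refine RW.mk' _ Q (zStep ν) ?_ hQ.1 hQ.2
  intro x y
  unfold zStep
  split_ifs with h
  · have : ∃ p, sv p = y - x := by
      obtain ⟨i, h | h⟩ := h
      · exact ⟨(i, true), by simp [sv, h]⟩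
      · exact ⟨(i, false), by simp [sv, h]⟩
    obtain ⟨p, hp⟩ := this
    have : (Finset.univ.filter fun i => x + sv i = y) = {p} := by
      ext q
      simp only [Finset.mem_filter, Finset.mem_univ, true_and, Finset.mem_singleton]
      constructor
      · intro hq
        apply sv_inj
        rw [hp, ← hq]; simp
      · rintro rfl
        rw [hp]; simp
    rw [this]
    simp [mul_comm]
  · have : (Finset.univ.filter fun i => x + sv i = y) = ∅ := by
      ext q
      simp only [Finset.mem_filter, Finset.mem_univ, true_and, Finset.notMem_empty, iff_false]
      intro hq
      apply h
      rw [← hq]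
      obtain ⟨i, b⟩ := q
      refine ⟨i, ?_⟩
      cases b <;> simp [sv]
    rw [this]
    simp

instance (N : ℕ) : DiscreteMeasurableSpace (ZMod N) := ⟨fun _ => trivial⟩

theorem cylRW (d N : ℕ) (P : Cyl d N → Measure (ℕ → Cyl d N)) (hP : IsCylRW d N P) :
    RW (fun p : Fin (d + 1) × Bool => projE d N (sv p)) P := by
  refine RW.mk' _ P (stepProb d N) ?_ hP.1 hP.2
  intro x y
  unfold stepProb
  have : (unitVecs d).filter (fun e => x + projE d N e = y) =
      (Finset.univ.filter fun i : Fin (d + 1) × Bool => x + projE d N (sv i) = y).image sv := by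
    unfold unitVecs
    rw [Finset.filter_image]
    rfl
  rw [this, Finset.card_image_of_injective _ sv_inj]
  simp [mul_comm]

/-- Probability that simple random walk on `ℤ^ν` hits the origin within `n` steps. -/
noncomputable def hh (ν : ℕ) : ℕ → (Fin ν → ℤ) → ℝ
  | 0, v => if v = 0 then 1 else 0
  | n + 1, v => if v = 0 then 1 else
      (Fintype.card (Fin ν × Bool) : ℝ)⁻¹ * ∑ p : Fin ν × Bool, hh ν n (v + sv p)

theorem hh_zero (ν n : ℕ) : hh ν n 0 = 1 := by
  cases n <;> simp [hh]

theorem hh_succ (ν n : ℕ) (v : Fin ν → ℤ) (hv : v ≠ 0) : hh ν (n + 1) v =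
    (Fintype.card (Fin ν × Bool) : ℝ)⁻¹ * ∑ p : Fin ν × Bool, hh ν n (v + sv p) := by
  simp [hh, hv]

theorem hh_nonneg (ν n : ℕ) : ∀ v, 0 ≤ hh ν n v := by
  induction n with
  | zero => intro v; unfold hh; split_ifs <;> norm_num
  | succ n ih =>
    intro v
    by_cases hv : v = 0
    · rw [hv, hh_zero]; norm_num
    · rw [hh_succ _ _ _ hv]
      exact mul_nonneg (by positivity) (Finset.sum_nonneg fun p _ => ih _)

theorem hh_mono (ν n : ℕ) : ∀ v, hh ν n v ≤ hh ν (n + 1) v := by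
  induction n with
  | zero =>
    intro v
    by_cases hv : v = 0
    · rw [hv, hh_zero, hh_zero]
    · have : hh ν 0 v = 0 := by simp [hh, hv]
      rw [this]; exact hh_nonneg _ _ _
  | succ n ih =>
    intro v
    by_cases hv : v = 0
    · rw [hv, hh_zero, hh_zero]
    · rw [hh_succ _ _ _ hv, hh_succ _ _ _ hv]
      exact mul_le_mul_of_nonneg_left (Finset.sum_le_sum fun p _ => ih _) (by positivity)

theorem hh_neg (ν n : ℕ) : ∀ v, hh ν n (-v) = hh ν n v := by
  induction n with
  | zero => intro v; simp [hh]
  | succ n ih =>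
    intro v
    by_cases hv : v = 0
    · rw [hv]; simp
    · rw [hh_succ _ _ _ hv, hh_succ _ _ _ (by simpa using hv)]
      congr 1
      refine Fintype.sum_equiv (Equiv.prodCongr (Equiv.refl _) Equiv.boolNot) _ _ ?_
      rintro ⟨i, b⟩
      rw [← ih]
      congr 1
      have : sv (i, b) = - sv (Equiv.prodCongr (Equiv.refl (Fin ν)) Equiv.boolNot (i, b)) := by
        cases b <;> simp [sv, ← Pi.single_neg]
      rw [this]
      abel

theorem hh_perm (ν n : ℕ) (π : Equiv.Perm (Fin ν)) : ∀ v, hh ν n (v ∘ π) = hh ν n v := by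
  have h0 : ∀ v : Fin ν → ℤ, v ∘ π = 0 ↔ v = 0 := by
    intro v
    constructor
    · intro h
      funext i
      have := congrFun h (π.symm i)
      simpa using this
    · rintro rfl; rfl
  induction n with
  | zero => intro v; simp only [hh, h0]
  | succ n ih =>
    intro v
    by_cases hv : v = 0
    · rw [hv]
      have : (0 : Fin ν → ℤ) ∘ π = 0 := rfl
      rw [this]
    · rw [hh_succ _ _ _ hv, hh_succ _ _ _ (by rwa [Ne, h0])]
      congr 1
      refine Fintype.sum_equiv (Equiv.prodCongr π (Equiv.refl _)) _ _ ?_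
      rintro ⟨i, b⟩
      conv_rhs => rw [← ih]
      congr 1
      funext j
      simp [sv, Pi.single_apply]

theorem hh_sv (ν n : ℕ) (p q : Fin ν × Bool) : hh ν n (sv p) = hh ν n (sv q) := by
  have key : ∀ p : Fin ν × Bool, hh ν n (sv p) = hh ν n (sv (q.1, true)) := by
    rintro ⟨i, b⟩
    have h1 : hh ν n (sv (i, b)) = hh ν n (sv (i, true)) := by
      cases b
      · rw [← hh_neg]
        congr 1
        simp [sv, ← Pi.single_neg]
      · rfl
    rw [h1, ← hh_perm ν n (Equiv.swap i q.1)]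
    congr 1
    funext j
    simp only [sv, Function.comp, Pi.single_apply]
    have : Equiv.swap i q.1 j = i ↔ j = q.1 := by
      rw [Equiv.apply_eq_iff_eq_symm_apply]; simp
    simp [this]
  rw [key p, key q]

theorem lat_hit (ν : ℕ) (Q : ZLat ν → Measure (ℕ → ZLat ν)) (h : RW (sv (n := ν)) Q) (n : ℕ) :
    ∀ x, (Q x).real {ω | ∃ k ≤ n, ω k ∈ ({0} : Set (ZLat ν))} = hh ν n x := by
  induction n with
  | zero =>
    intro x
    by_cases hx : x = 0
    · rw [h.hit_mem _ _ _ (by simpa using hx), hx, hh_zero]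
    · rw [h.hit_zero _ _ (by simpa using hx)]; simp [hh, hx]
  | succ n ih =>
    intro x
    by_cases hx : x = 0
    · rw [h.hit_mem _ _ _ (by simpa using hx), hx, hh_zero]
    · rw [h.hit_succ _ _ _ (by simpa using hx), hh_succ _ _ _ hx]
      simp only [ih]

theorem hh_le_ret (ν : ℕ) (Q : ZLat ν → Measure (ℕ → ZLat ν)) (h : RW (sv (n := ν)) Q) (n : ℕ)
    (p : Fin ν × Bool) : hh ν n (sv p) ≤ retProb ν Q := by
  have := h.prob 0
  have h1 := h.markov 0 _ (meas_hit ({0} : Set (ZLat ν)) n)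
  simp only [lat_hit ν Q h n, zero_add] at h1
  rw [Finset.sum_congr rfl (fun q _ => hh_sv ν n q p)] at h1
  have : Nonempty (Fin ν × Bool) := ⟨p⟩
  rw [Finset.sum_const, nsmul_eq_mul, ← mul_assoc, Finset.card_univ,
    inv_mul_cancel₀ (Nat.cast_ne_zero.2 Fintype.card_ne_zero), one_mul] at h1
  rw [← h1]
  unfold retProb
  apply measureReal_mono
  · rintro ω ⟨k, hk, h0⟩
    exact ⟨k + 1, by omega, h0⟩
  · exact measure_ne_top _ _

/-- coordinates reduced mod `N`. -/
def cm (d N : ℕ) (x : Cyl d N) (i : Fin (d + 1)) : ZMod N :=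
  Fin.lastCases (motive := fun _ => ZMod N) (x.2 : ZMod N) x.1 i

theorem cm_proj (d N : ℕ) (v : Lat d) (i : Fin (d + 1)) :
    cm d N (projE d N v) i = (v i : ZMod N) := by
  refine Fin.lastCases ?_ (fun j => ?_) i <;> simp [cm, projE]

theorem cm_add (d N : ℕ) (x y : Cyl d N) (i : Fin (d + 1)) :
    cm d N (x + y) i = cm d N x i + cm d N y i := by
  refine Fin.lastCases ?_ (fun j => ?_) i <;> simp [cm]

theorem proj_add (d N : ℕ) (u v : Lat d) : projE d N (u + v) = projE d N u + projE d N v := by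
  ext <;> simp [projE]

theorem loc_hit (d N ν : ℕ) (P : Cyl d N → Measure (ℕ → Cyl d N))
    (h : RW (fun p : Fin (d + 1) × Bool => projE d N (sv p)) P)
    (σ : Fin ν → Fin (d + 1)) (hσ : Function.Injective σ) (hν : 0 < ν)
    (I : Finset (Fin (d + 1))) (hI : ∀ i, i ∉ I ↔ i ∈ Set.range σ) (y : Lat d)
    (F : Set (Cyl d N))
    (hF : F = (fun v => projE d N (y + v)) '' {v : Lat d | ∀ i ∉ I, v i = 0}) (n : ℕ) :
    ∀ v : Lat d, (∀ a, |v (σ a)| + n < N) →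
      (P (projE d N (y + v))).real {ω | ∃ k ≤ n, ω k ∈ F} ≤ hh ν n (v ∘ σ) := by
  have hmem : ∀ v : Lat d, v ∘ σ = 0 → projE d N (y + v) ∈ F := by
    intro v hv
    rw [hF]
    refine ⟨v, fun i hi => ?_, rfl⟩
    obtain ⟨a, rfl⟩ := (hI i).1 hi
    exact congrFun hv a
  have hmem' : ∀ v : Lat d, (∀ a, |v (σ a)| < N) → projE d N (y + v) ∈ F → v ∘ σ = 0 := by
    intro v hv hm
    rw [hF] at hm
    obtain ⟨u, hu, he⟩ := hm
    funext a
    have h1 := congrArg (fun x => cm d N x (σ a)) he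
    simp only [cm_proj, Pi.add_apply] at h1
    have h2 : u (σ a) = 0 := hu _ ((hI _).2 ⟨a, rfl⟩)
    rw [h2] at h1
    push_cast at h1
    have h3 : ((v (σ a) : ℤ) : ZMod N) = 0 := by
      have := add_left_cancel h1
      rw [← this]
    rw [ZMod.intCast_zmod_eq_zero_iff_dvd] at h3
    exact Int.eq_zero_of_abs_lt_dvd h3 (hv a)
  have : Nonempty (Fin ν × Bool) := ⟨⟨⟨0, hν⟩, true⟩⟩
  induction n with
  | zero =>
    intro v hv
    by_cases hx : projE d N (y + v) ∈ F
    · rw [h.hit_mem _ _ _ hx, hmem' v (by simpa using hv) hx, hh_zero]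
    · rw [h.hit_zero _ _ hx]; exact hh_nonneg _ _ _
  | succ n ih =>
    intro v hv
    by_cases hx : projE d N (y + v) ∈ F
    · rw [h.hit_mem _ _ _ hx, hmem' v _ hx, hh_zero]
      intro a
      have := hv a
      push_cast at this
      omega
    · have hv0 : v ∘ σ ≠ 0 := fun h0 => hx (hmem v h0)
      rw [h.hit_succ _ _ _ hx]
      have hstep : ∀ p : Fin (d + 1) × Bool,
          (P (projE d N (y + v) + projE d N (sv p))).real {ω | ∃ k ≤ n, ω k ∈ F} ≤
            hh ν n ((v + sv p) ∘ σ) := by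
        intro p
        rw [← proj_add, add_assoc]
        apply ih
        intro a
        have h1 := hv a
        have h2 : |sv p (σ a)| ≤ 1 := by
          unfold sv
          rw [Pi.single_apply]
          split_ifs <;> simp
        have h3 := abs_add_le (v (σ a)) (sv p (σ a))
        simp only [Pi.add_apply]
        push_cast at h1
        linarith
      have hsum : ∑ i : Fin (d + 1), ∑ b : Bool, hh ν n ((v + sv (i, b)) ∘ σ) ≤
          ∑ i : Fin (d + 1), 2 * hh ν (n + 1) (v ∘ σ) := by
        rw [← sub_nonneg, ← Finset.sum_sub_distrib]
        have e1 : ∑ i : Fin (d + 1), (2 * hh ν (n + 1) (v ∘ σ)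
              - ∑ b : Bool, hh ν n ((v + sv (i, b)) ∘ σ)) ≥
            ∑ i ∈ Finset.univ.image σ, (2 * hh ν (n + 1) (v ∘ σ)
              - ∑ b : Bool, hh ν n ((v + sv (i, b)) ∘ σ)) := by
          apply Finset.sum_le_sum_of_subset_of_nonneg (Finset.subset_univ _)
          intro i _ hi
          have hi' : ∀ a, σ a ≠ i := by simpa using hi
          have : ∀ b, (v + sv (i, b)) ∘ σ = v ∘ σ := by
            intro b
            funext a
            simp [sv, Pi.single_apply, hi' a]
          simp only [this, Fintype.sum_bool]
          have := hh_mono ν n (v ∘ σ)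
          linarith
        refine le_trans (le_of_eq ?_) e1
        rw [Finset.sum_image (fun a _ b _ hab => hσ hab), Finset.sum_sub_distrib]
        have e2 : ∀ a b, (v + sv (σ a, b)) ∘ σ = v ∘ σ + sv (a, b) := by
          intro a b
          funext c
          simp [sv, Pi.single_apply, hσ.eq_iff]
        simp only [e2]
        have e3 := hh_succ ν n (v ∘ σ) hv0
        rw [Fintype.sum_prod_type] at e3
        have hc : (Fintype.card (Fin ν × Bool) : ℝ) = 2 * ν := by simp [mul_comm]
        have hν' : (0 : ℝ) < ν := by exact_mod_cast hν
        rw [hc] at e3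
        rw [e3]
        simp only [Finset.sum_const, Finset.card_univ, Fintype.card_fin, nsmul_eq_mul]
        field_simp
        ring
      calc _ ≤ (Fintype.card (Fin (d + 1) × Bool) : ℝ)⁻¹ *
            ∑ i : Fin (d + 1), ∑ b : Bool, hh ν n ((v + sv (i, b)) ∘ σ) := by
              rw [← Fintype.sum_prod_type (f := fun p => hh ν n ((v + sv p) ∘ σ))]
              exact mul_le_mul_of_nonneg_left (Finset.sum_le_sum fun p _ => hstep p)
                (by positivity)
        _ ≤ (Fintype.card (Fin (d + 1) × Bool) : ℝ)⁻¹ *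
            ∑ i : Fin (d + 1), 2 * hh ν (n + 1) (v ∘ σ) :=
              mul_le_mul_of_nonneg_left hsum (by positivity)
        _ = _ := by
              simp
              field_simp

theorem stay_sum (d N : ℕ) (hN : 0 < N) (P : Cyl d N → Measure (ℕ → Cyl d N))
    (h : RW (fun p : Fin (d + 1) × Bool => projE d N (sv p)) P) (n : ℕ) :
    ∀ x : Cyl d N, |x.2| ≤ 2 * N →
      ∑ j ∈ Finset.range n, (P x).real {ω | ∀ k ≤ j, ω k ∈ Btl d N 0} ≤
        ((d : ℝ) + 1) * (4 * (N : ℝ) ^ 2 - (x.2 : ℝ) ^ 2) := by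
  have hg : ∀ x : Cyl d N, |x.2| ≤ 2 * N → 0 ≤ (4 * (N : ℝ) ^ 2 - (x.2 : ℝ) ^ 2) := by
    intro x hx
    have : |(x.2 : ℝ)| ≤ 2 * N := by exact_mod_cast hx
    have h2 := abs_le.1 this
    nlinarith
  induction n with
  | zero =>
    intro x hx
    have := hg x hx
    simp only [Finset.range_zero, Finset.sum_empty]
    positivity
  | succ n ih =>
    intro x hx
    by_cases hB : x ∈ Btl d N 0
    · rw [Finset.sum_range_succ']
      have h0 : (P x).real {ω | ∀ k ≤ 0, ω k ∈ Btl d N 0} ≤ 1 := by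
        have := h.prob x
        exact measureReal_le_one
      simp only [h.stay_succ _ _ _ hB]
      rw [← Finset.mul_sum, Finset.sum_comm]
      have hB' : (0 - 2) * (N : ℤ) + 1 ≤ x.2 ∧ x.2 ≤ (0 + 2) * (N : ℤ) - 1 := hB
      have hx2 : ∀ p : Fin (d + 1) × Bool, (x + projE d N (sv p)).2 = x.2 + sv p (Fin.last d) :=
        fun p => rfl
      have hstep : ∀ p : Fin (d + 1) × Bool,
          ∑ j ∈ Finset.range n, (P (x + projE d N (sv p))).real
            {ω | ∀ k ≤ j, ω k ∈ Btl d N 0} ≤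
          ((d : ℝ) + 1) * (4 * (N : ℝ) ^ 2 - ((x.2 : ℝ) + sv p (Fin.last d)) ^ 2) := by
        intro p
        have := ih (x + projE d N (sv p)) ?_
        · refine this.trans (le_of_eq ?_)
          rw [hx2]; push_cast; rfl
        · rw [hx2]
          have h2 : |sv p (Fin.last d)| ≤ 1 := by
            unfold sv
            rw [Pi.single_apply]
            split_ifs <;> simp
          rw [abs_le] at h2 ⊢
          constructor <;> linarith [h2.1, h2.2, hB'.1, hB'.2]
      have hs : ∑ p : Fin (d + 1) × Bool,
          ((d : ℝ) + 1) * (4 * (N : ℝ) ^ 2 - ((x.2 : ℝ) + sv p (Fin.last d)) ^ 2) =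
          2 * ((d : ℝ) + 1) * (((d : ℝ) + 1) * (4 * (N : ℝ) ^ 2 - (x.2 : ℝ) ^ 2) - 1) := by
        rw [← Finset.mul_sum, Fintype.sum_prod_type]
        have : ∀ i : Fin (d + 1), ∑ b : Bool,
            (4 * (N : ℝ) ^ 2 - ((x.2 : ℝ) + sv (i, b) (Fin.last d)) ^ 2) =
            2 * (4 * (N : ℝ) ^ 2 - (x.2 : ℝ) ^ 2) - if Fin.last d = i then 2 else 0 := by
          intro i
          simp only [Fintype.sum_bool, sv, Pi.single_apply]
          by_cases hi : Fin.last d = i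
          · simp only [if_pos hi]
            simp
            ring
          · simp only [if_neg hi]
            simp
            ring
        simp only [this]
        rw [Finset.sum_sub_distrib]
        simp
        ring
      have hc : (Fintype.card (Fin (d + 1) × Bool) : ℝ) = 2 * ((d : ℝ) + 1) := by
        simp [mul_comm]
      have hD : (0 : ℝ) < 2 * ((d : ℝ) + 1) := by positivity
      have := mul_le_mul_of_nonneg_left ((Finset.sum_le_sum fun p _ => hstep p).trans
        (le_of_eq hs)) (inv_nonneg.2 hD.le)
      rw [inv_mul_cancel_left₀ hD.ne'] at this
      rw [hc]
      linarith
    · rw [Finset.sum_eq_zero fun j _ => h.stay_not_mem _ _ _ hB]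
      have := hg x hx
      positivity

theorem stay_bound (d N : ℕ) (hN : 0 < N) (P : Cyl d N → Measure (ℕ → Cyl d N))
    (h : RW (fun p : Fin (d + 1) × Bool => projE d N (sv p)) P) (n : ℕ) (x : Cyl d N) :
    n * (P x).real {ω | ∀ k ≤ n, ω k ∈ Btl d N 0} ≤ 4 * ((d : ℝ) + 1) * (N : ℝ) ^ 2 := by
  by_cases hB : x ∈ Btl d N 0
  · have hB' : (0 - 2) * (N : ℤ) + 1 ≤ x.2 ∧ x.2 ≤ (0 + 2) * (N : ℤ) - 1 := hB
    have h1 := stay_sum d N hN P h n x (by rw [abs_le]; constructor <;> linarith [hB'.1, hB'.2])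
    have := h.prob x
    have h2 : ∑ j ∈ Finset.range n, (P x).real {ω | ∀ k ≤ n, ω k ∈ Btl d N 0} ≤
        ∑ j ∈ Finset.range n, (P x).real {ω | ∀ k ≤ j, ω k ∈ Btl d N 0} := by
      refine Finset.sum_le_sum fun j hj => measureReal_mono ?_
      intro ω hω k hk
      exact hω k (hk.trans (Finset.mem_range.1 hj).le)
    rw [Finset.sum_const, Finset.card_range, nsmul_eq_mul] at h2
    have h3 : 0 ≤ ((d : ℝ) + 1) * (x.2 : ℝ) ^ 2 := by positivity
    linarith
  · rw [h.stay_not_mem _ _ _ hB]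
    simp only [mul_zero]
    positivity

/-- Real part of the standard additive character. -/
noncomputable def ar (N : ℕ) [NeZero N] (k : ZMod N) : ℝ := (ZMod.stdAddChar k).re

theorem char_norm (N : ℕ) [NeZero N] (k : ZMod N) : ‖ZMod.stdAddChar k‖ = 1 := by
  rw [ZMod.stdAddChar_apply]; exact Circle.norm_coe _

theorem ar_le_one (N : ℕ) [NeZero N] (k : ZMod N) : ar N k ≤ 1 := by
  rw [← char_norm N k]; exact Complex.re_le_norm _

theorem neg_one_le_ar (N : ℕ) [NeZero N] (k : ZMod N) : -1 ≤ ar N k := by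
  have := Complex.abs_re_le_norm (ZMod.stdAddChar k)
  rw [char_norm N k] at this
  exact (abs_le.1 this).1

theorem ar_eq_cos (N : ℕ) [NeZero N] (k : ZMod N) :
    ar N k = Real.cos (2 * Real.pi * (k.val / N)) := by
  unfold ar
  rw [ZMod.stdAddChar_apply, ZMod.toCircle_eq_circleExp, Circle.coe_exp,
    Complex.exp_ofReal_mul_I_re]

theorem char_add_neg (N : ℕ) [NeZero N] (k : ZMod N) :
    ZMod.stdAddChar k + ZMod.stdAddChar (-k) = 2 * (ar N k : ℂ) := by
  have h : ZMod.stdAddChar (-k) = (starRingEnd ℂ) (ZMod.stdAddChar k) := by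
    rw [AddChar.map_neg_eq_inv, Complex.inv_def, Complex.normSq_eq_norm_sq, char_norm]
    simp
  rw [h, Complex.add_conj]
  unfold ar
  push_cast
  ring

theorem lam_bound (D : ℝ) (hD : 4 ≤ D) (T : ℝ) (h0 : 0 ≤ T) (h6 : T ≤ 6) :
    |1 - D⁻¹ * T| ≤ Real.exp (-(1 / (4 * D)) * T) := by
  have hD0 : 0 < D := by linarith
  set u := D⁻¹ * T with hu
  have hu0 : 0 ≤ u := by positivity
  have hu1 : u ≤ 3 / 2 := by
    rw [hu, inv_mul_le_iff₀ hD0]; linarith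
  have e : -(1 / (4 * D)) * T = -(u / 4) := by rw [hu]; field_simp
  rw [e, abs_le]
  have h1 := Real.add_one_le_exp (-(u / 4))
  have h2 := Real.add_one_le_exp (-u)
  have h3 : Real.exp (-u) ≤ Real.exp (-(u / 4)) := Real.exp_le_exp.2 (by linarith)
  constructor <;> linarith

theorem gsum (s : ℝ) (hs : 0 < s) (n : ℕ) :
    ∑ i ∈ Finset.range (n + 1), 1 / (1 + (s * i) ^ 2) ≤ 1 + 2 / s * (1 - 1 / (1 + s * n)) := by
  induction n with
  | zero => simp
  | succ n ih =>
    rw [Finset.sum_range_succ]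
    have hn : (0 : ℝ) ≤ n := by positivity
    have hsn : 0 ≤ s * n := by positivity
    have key : 1 / (1 + (s * ((n + 1 : ℕ) : ℝ)) ^ 2) ≤
        2 / s * (1 / (1 + s * n) - 1 / (1 + s * ((n + 1 : ℕ) : ℝ))) := by
      have e : 2 / s * (1 / (1 + s * n) - 1 / (1 + s * ((n + 1 : ℕ) : ℝ))) =
          2 / ((1 + s * n) * (1 + s * (n + 1))) := by
        push_cast
        field_simp
        ring
      rw [e, div_le_div_iff₀ (by positivity) (by positivity)]
      push_cast
      nlinarith [sq_nonneg (1 - s * (n + 1)), mul_nonneg hs.le hsn, sq_nonneg (s * n)]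
    linarith

theorem gsum' (s : ℝ) (hs : 0 < s) (n : ℕ) :
    ∑ i ∈ Finset.range (n + 1), 1 / (1 + (s * i) ^ 2) ≤ 1 + 2 / s := by
  refine (gsum s hs n).trans ?_
  have : 0 ≤ 2 / s * (1 / (1 + s * n)) := by positivity
  linarith

theorem exp_le_g (b N i : ℝ) (hb : 0 < b) (hN : 0 < N) (hi : 0 ≤ i) (hi2 : i ≤ N / 2) :
    Real.exp (-b * (1 - Real.cos (2 * Real.pi * (i / N)))) ≤
      1 / (1 + (Real.sqrt (8 * b) / N * i) ^ 2) := by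
  have hpi := Real.pi_pos
  have hr0 : 0 ≤ i / N := by positivity
  have hr1 : i / N ≤ 1 / 2 := by rw [div_le_iff₀ hN]; linarith
  have h1 := Real.cos_le_one_sub_mul_cos_sq (x := 2 * Real.pi * (i / N)) (by
    rw [abs_of_nonneg (by positivity)]; nlinarith)
  have e1 : 2 / Real.pi ^ 2 * (2 * Real.pi * (i / N)) ^ 2 = 8 * (i / N) ^ 2 := by
    field_simp
    ring
  rw [e1] at h1
  have e2 : (Real.sqrt (8 * b) / N * i) ^ 2 = b * (8 * (i / N) ^ 2) := by
    have : (Real.sqrt (8 * b) / N * i) ^ 2 = Real.sqrt (8 * b) ^ 2 * (i / N) ^ 2 := by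
      field_simp
    rw [this, Real.sq_sqrt (by positivity)]
    ring
  rw [e2]
  set t := b * (8 * (i / N) ^ 2) with ht
  have ht0 : 0 ≤ t := by positivity
  have h2 : Real.exp (-b * (1 - Real.cos (2 * Real.pi * (i / N)))) ≤ Real.exp (-t) := by
    apply Real.exp_le_exp.2
    rw [ht]
    nlinarith
  refine h2.trans ?_
  rw [Real.exp_neg, ← one_div]
  apply one_div_le_one_div_of_le (by positivity)
  linarith [Real.add_one_le_exp t]

theorem ssum (N : ℕ) [NeZero N] (b : ℝ) (hb : 0 < b) :
    ∑ k : ZMod N, Real.exp (-b * (1 - ar N k)) ≤ 2 + 4 * N / Real.sqrt (8 * b) := by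
  have hN : (0 : ℝ) < N := by exact_mod_cast Nat.pos_of_ne_zero (NeZero.ne N)
  set s := Real.sqrt (8 * b) / N with hs
  have hs0 : 0 < s := by positivity
  let G : ℕ → ℝ := fun i => 1 / (1 + (s * i) ^ 2) + 1 / (1 + (s * ((N - i : ℕ) : ℝ)) ^ 2)
  have h1 : ∀ k : ZMod N, Real.exp (-b * (1 - ar N k)) ≤ G k.val := by
    intro k
    have hk := (ZMod.val_lt k).le
    have hk' : (k.val : ℝ) ≤ N := by exact_mod_cast hk
    have p1 : 0 ≤ 1 / (1 + (s * (k.val : ℝ)) ^ 2) := by positivity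
    have p2 : 0 ≤ 1 / (1 + (s * ((N - k.val : ℕ) : ℝ)) ^ 2) := by positivity
    rw [ar_eq_cos]
    by_cases hc : (k.val : ℝ) ≤ N / 2
    · have := exp_le_g b N k.val hb hN (by positivity) hc
      simp only [G]
      linarith
    · have hc' : ((N - k.val : ℕ) : ℝ) = N - k.val := by push_cast [hk]; ring
      have := exp_le_g b N (N - k.val : ℕ) hb hN (by positivity) (by rw [hc']; linarith)
      have e : Real.cos (2 * Real.pi * (((N - k.val : ℕ) : ℝ) / N)) =
          Real.cos (2 * Real.pi * (k.val / N)) := by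
        rw [hc']
        have : 2 * Real.pi * ((N - k.val : ℝ) / N) = 2 * Real.pi - 2 * Real.pi * (k.val / N) := by
          field_simp
        rw [this, Real.cos_two_pi_sub]
      rw [e] at this
      simp only [G]
      linarith
  have h2 : ∑ k : ZMod N, G k.val = ∑ i ∈ Finset.range N, G i := by
    clear_value G
    clear h1 hs0 hs s hN
    cases N with
    | zero => exact absurd rfl (NeZero.ne 0)
    | succ m => exact Fin.sum_univ_eq_sum_range G (m + 1)
  have h3 : ∑ i ∈ Finset.range N, 1 / (1 + (s * (i : ℝ)) ^ 2) ≤ 1 + 2 / s := by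
    refine le_trans ?_ (gsum' s hs0 N)
    exact Finset.sum_le_sum_of_subset_of_nonneg (Finset.range_mono (Nat.le_succ _))
      fun i _ _ => by positivity
  have h4 : ∑ i ∈ Finset.range N, 1 / (1 + (s * ((N - i : ℕ) : ℝ)) ^ 2) ≤ 1 + 2 / s := by
    rw [← Finset.sum_range_reflect]
    refine le_trans ?_ (gsum' s hs0 N)
    rw [Finset.sum_range_succ' _ N]
    have : ∑ j ∈ Finset.range N, 1 / (1 + (s * ((N - (N - 1 - j) : ℕ) : ℝ)) ^ 2) =
        ∑ j ∈ Finset.range N, 1 / (1 + (s * ((j + 1 : ℕ) : ℝ)) ^ 2) := by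
      refine Finset.sum_congr rfl fun j hj => ?_
      have := Finset.mem_range.1 hj
      have e : N - (N - 1 - j) = j + 1 := by omega
      rw [e]
    rw [this]
    have : (0 : ℝ) ≤ 1 / (1 + (s * ((0 : ℕ) : ℝ)) ^ 2) := by positivity
    linarith
  calc _ ≤ ∑ k : ZMod N, G k.val := Finset.sum_le_sum fun k _ => h1 k
    _ = ∑ i ∈ Finset.range N, G i := h2
    _ ≤ (1 + 2 / s) + (1 + 2 / s) := by
      simp only [G]
      rw [Finset.sum_add_distrib]
      exact add_le_add h3 h4
    _ = _ := by
      rw [hs]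
      field_simp
      ring

theorem heat_rep (d N : ℕ) [NeZero N] (P : Cyl d N → Measure (ℕ → Cyl d N))
    (h : RW (fun p : Fin (d + 1) × Bool => projE d N (sv p)) P)
    (τ : Fin 3 → Fin (d + 1)) (hτ : Function.Injective τ) (y : Fin 3 → ZMod N) (n : ℕ) :
    ∀ x, (((P x).real {ω | ω n ∈ {x : Cyl d N | ∀ j, cm d N x (τ j) = y j}} : ℝ) : ℂ) =
      ((N : ℂ)⁻¹) ^ 3 * ∑ k : Fin 3 → ZMod N,
        ((1 - ((d : ℝ) + 1)⁻¹ * ∑ j, (1 - ar N (k j)) : ℝ) : ℂ) ^ n *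
          ZMod.stdAddChar (∑ j, k j * (cm d N x (τ j) - y j)) := by
  have hN : (N : ℂ) ≠ 0 := by exact_mod_cast NeZero.ne N
  induction n with
  | zero =>
    intro x
    rw [h.coord_zero]
    simp only [pow_zero, one_mul]
    have e1 : ∀ k : Fin 3 → ZMod N, ZMod.stdAddChar (∑ j, k j * (cm d N x (τ j) - y j)) =
        ∏ j, ZMod.stdAddChar (k j * (cm d N x (τ j) - y j)) := by
      intro k
      rw [Fin.sum_univ_three, Fin.prod_univ_three, AddChar.map_add_eq_mul, AddChar.map_add_eq_mul]
    simp only [e1]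
    rw [← Fintype.prod_sum (fun (j : Fin 3) (k : ZMod N) =>
      (ZMod.stdAddChar (k * (cm d N x (τ j) - y j)) : ℂ))]
    simp only [AddChar.sum_mulShift _ (ZMod.isPrimitive_stdAddChar N), ZMod.card, sub_eq_zero]
    by_cases hx : ∀ j, cm d N x (τ j) = y j
    · rw [if_pos (by exact hx)]
      simp only [hx, if_true]
      simp [hN]
    · rw [if_neg (by exact hx)]
      push Not at hx
      obtain ⟨j, hj⟩ := hx
      rw [Finset.prod_eq_zero (Finset.mem_univ j) (by simp [hj])]
      simp
  | succ n ih =>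
    intro x
    rw [h.coord_succ]
    push_cast
    simp only [ih]
    rw [← Finset.mul_sum, Finset.sum_comm, mul_left_comm, Finset.mul_sum]
    congr 1
    refine Finset.sum_congr rfl fun k _ => ?_
    rw [← Finset.mul_sum, pow_succ]
    have hc : (Fintype.card (Fin (d + 1) × Bool) : ℂ) = 2 * ((d : ℂ) + 1) := by
      simp [mul_comm]
    have hd : (d : ℂ) + 1 ≠ 0 := by exact_mod_cast Nat.succ_ne_zero d
    let κ : Fin (d + 1) → ZMod N := fun i => ∑ j, if τ j = i then k j else 0
    have hsum : ∑ p : Fin (d + 1) × Bool,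
        (ZMod.stdAddChar (∑ j, k j * (cm d N (x + projE d N (sv p)) (τ j) - y j)) : ℂ) =
        2 * (((d : ℝ) + 1 - ∑ j, (1 - ar N (k j)) : ℝ) : ℂ) *
          ZMod.stdAddChar (∑ j, k j * (cm d N x (τ j) - y j)) := by
      rw [Fintype.sum_prod_type]
      have e1 : ∀ i, ∑ b : Bool,
          (ZMod.stdAddChar (∑ j, k j * (cm d N (x + projE d N (sv (i, b))) (τ j) - y j)) : ℂ) =
          2 * (ar N (κ i) : ℂ) * ZMod.stdAddChar (∑ j, k j * (cm d N x (τ j) - y j)) := by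
        intro i
        have e2 : ∀ b : Bool, ∑ j, k j * (cm d N (x + projE d N (sv (i, b))) (τ j) - y j) =
            (if b then κ i else -κ i) + ∑ j, k j * (cm d N x (τ j) - y j) := by
          intro b
          have : (if b then κ i else -κ i) =
              ∑ j, k j * ((sv (i, b) (τ j) : ℤ) : ZMod N) := by
            cases b
            · simp only [κ, sv, Pi.single_apply, ← Finset.sum_neg_distrib]
              simp only [Bool.false_eq_true, if_false]
              refine Finset.sum_congr rfl fun j _ => ?_
              split_ifs <;> simp
            · simp only [κ, sv, Pi.single_apply]
              simp only [if_true]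
              refine Finset.sum_congr rfl fun j _ => ?_
              split_ifs <;> simp
          rw [this, ← Finset.sum_add_distrib]
          refine Finset.sum_congr rfl fun j _ => ?_
          rw [cm_add, cm_proj]
          ring
        simp only [e2, Fintype.sum_bool, AddChar.map_add_eq_mul, if_true, Bool.false_eq_true,
          if_false]
        rw [← add_mul, char_add_neg]
      simp only [e1]
      rw [← Finset.sum_mul, ← Finset.mul_sum]
      congr 2
      rw [← Complex.ofReal_sum]
      congr 1
      have e3 : ∑ j, (1 - ar N (k j)) = ∑ i, (1 - ar N (κ i)) := by
        apply Fintype.sum_of_injective τ hτ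
        · intro i hi
          have : κ i = 0 := by
            apply Finset.sum_eq_zero
            intro j _
            rw [if_neg]
            intro hj
            exact hi ⟨j, hj⟩
          rw [this]
          simp [ar]
        · intro j
          have : κ (τ j) = k j := by
            simp only [κ, hτ.eq_iff]
            simp
          rw [this]
      rw [e3, Finset.sum_sub_distrib]
      simp
    rw [hsum, hc]
    push_cast
    field_simp

theorem heat_bound (d A : ℕ) (hd : 3 ≤ d) : ∃ K : ℝ, ∀ (N : ℕ), 0 < N →
    ∀ (P : Cyl d N → Measure (ℕ → Cyl d N)),
    RW (fun p : Fin (d + 1) × Bool => projE d N (sv p)) P →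
    ∀ (τ : Fin 3 → Fin (d + 1)), Function.Injective τ → ∀ (y : Fin 3 → ZMod N) (n : ℕ),
    1 ≤ n → n ≤ A * N ^ 2 → ∀ x,
    (P x).real {ω | ω n ∈ {x : Cyl d N | ∀ j, cm d N x (τ j) = y j}} ≤
      K * (1 / (n : ℝ) ^ (3 / 2 : ℝ)) := by
  set D : ℝ := (d : ℝ) + 1 with hD
  have hD4 : 4 ≤ D := by
    have : (3 : ℝ) ≤ d := by exact_mod_cast hd
    linarith
  have hD0 : 0 < D := by linarith
  refine ⟨(2 * Real.sqrt A + 4 / Real.sqrt (2 / D)) ^ 3, ?_⟩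
  intro N hN P h τ hτ y n hn hnA x
  have : NeZero N := ⟨hN.ne'⟩
  have hNr : (0 : ℝ) < N := by exact_mod_cast hN
  have hnr : (0 : ℝ) < n := by exact_mod_cast hn
  have hsn : 0 < Real.sqrt n := Real.sqrt_pos.2 hnr
  have hrep := heat_rep d N P h τ hτ y n x
  have h0 : (P x).real {ω | ω n ∈ {x : Cyl d N | ∀ j, cm d N x (τ j) = y j}} =
      ‖(((P x).real {ω | ω n ∈ {x : Cyl d N | ∀ j, cm d N x (τ j) = y j}} : ℝ) : ℂ)‖ := by
    rw [Complex.norm_real, Real.norm_of_nonneg measureReal_nonneg]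
  rw [h0, hrep, norm_mul]
  set b : ℝ := 1 / (4 * D) * n with hb
  have hb0 : 0 < b := by positivity
  have h1 : ‖∑ k : Fin 3 → ZMod N,
        ((1 - ((d : ℝ) + 1)⁻¹ * ∑ j, (1 - ar N (k j)) : ℝ) : ℂ) ^ n *
          ZMod.stdAddChar (∑ j, k j * (cm d N x (τ j) - y j))‖ ≤
      (∑ k : ZMod N, Real.exp (-b * (1 - ar N k))) ^ 3 := by
    rw [Fintype.sum_pow]
    refine (norm_sum_le _ _).trans (Finset.sum_le_sum fun k _ => ?_)
    rw [norm_mul, char_norm, mul_one, norm_pow, Complex.norm_real, Real.norm_eq_abs]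
    have hl := lam_bound D hD4 (∑ j, (1 - ar N (k j)))
      (Finset.sum_nonneg fun j _ => by linarith [ar_le_one N (k j)])
      (by
        rw [Fin.sum_univ_three]
        linarith [neg_one_le_ar N (k 0), neg_one_le_ar N (k 1), neg_one_le_ar N (k 2)])
    refine (pow_le_pow_left₀ (abs_nonneg _) hl n).trans (le_of_eq ?_)
    rw [← Real.exp_nat_mul, ← Real.exp_sum, ← Finset.mul_sum, hb]
    congr 1
    ring
  have h2 := ssum N b hb0
  have h3 : 0 ≤ ∑ k : ZMod N, Real.exp (-b * (1 - ar N k)) :=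
    Finset.sum_nonneg fun k _ => (Real.exp_pos _).le
  have h4 : ‖((N : ℂ)⁻¹) ^ 3‖ = ((N : ℝ)⁻¹) ^ 3 := by simp
  rw [h4]
  refine (mul_le_mul_of_nonneg_left (h1.trans (pow_le_pow_left₀ h3 h2 3)) (by positivity)).trans ?_
  rw [← mul_pow]
  have e5 : (1 / (n : ℝ) ^ (3 / 2 : ℝ)) = (1 / Real.sqrt n) ^ 3 := by
    rw [Real.sqrt_eq_rpow, div_pow, one_pow, ← Real.rpow_natCast, ← Real.rpow_mul hnr.le]
    norm_num
  rw [e5, ← mul_pow]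
  refine pow_le_pow_left₀ (by positivity) ?_ 3
  have e6 : Real.sqrt (8 * b) = Real.sqrt (2 / D) * Real.sqrt n := by
    rw [← Real.sqrt_mul (by positivity)]
    congr 1
    rw [hb]; field_simp; norm_num
  have e7 : Real.sqrt n ≤ Real.sqrt A * N := by
    rw [← Real.sqrt_sq hNr.le, ← Real.sqrt_mul (by positivity)]
    apply Real.sqrt_le_sqrt
    exact_mod_cast hnA
  have e8 : (N : ℝ)⁻¹ ≤ Real.sqrt A * (1 / Real.sqrt n) := by
    rw [mul_one_div, le_div_iff₀ hsn, inv_mul_le_iff₀ hNr]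
    linarith
  rw [e6]
  have hq : 0 < Real.sqrt (2 / D) := by positivity
  have e9 : (N : ℝ)⁻¹ * (2 + 4 * N / (Real.sqrt (2 / D) * Real.sqrt n)) =
      2 * (N : ℝ)⁻¹ + 4 / Real.sqrt (2 / D) * (1 / Real.sqrt n) := by
    field_simp
  rw [e9]
  linarith

/-- **Lemma 1.4.** For `d ≥ 3` and `1 ≤ m ≤ d-2`, `limsup_N q_N ≤ q(d+1-m)`. -/
theorem statement_6 (d m : ℕ) (hd : 3 ≤ d) (hm1 : 1 ≤ m) (hm2 : m ≤ d - 2)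
    (Q : ZLat (d + 1 - m) → Measure (ℕ → ZLat (d + 1 - m))) (hQ : IsLatRW (d + 1 - m) Q)
    (Pl : ∀ N : ℕ, Cyl d N → Measure (ℕ → Cyl d N))
    (hPl : ∀ N : ℕ, IsCylRW d N (Pl N)) :
    limsup (fun N : ℕ => qNval d N m (Pl N) 0) atTop ≤ retProb (d + 1 - m) Q := by
  have hν : 0 < d + 1 - m := by omega
  have hQ' := latRW (d + 1 - m) hν Q hQ
  have hnn : ∀ N, 0 ≤ qNval d N m (Pl N) 0 := by
    intro N
    apply Real.sSup_nonneg
    rintro r ⟨F, _, z, _, rfl⟩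
    exact ENNReal.toReal_nonneg
  have hret : 0 ≤ retProb (d + 1 - m) Q := ENNReal.toReal_nonneg
  refine le_of_forall_pos_le_add fun ε hε => ?_
  refine limsup_le_of_le (isCoboundedUnder_le_of_le atTop (x := 0) hnn) ?_
  obtain ⟨A, hA⟩ := exists_nat_gt (4 * ((d : ℝ) + 1) / (ε / 2))
  have hD : (0 : ℝ) < 4 * ((d : ℝ) + 1) := by positivity
  have hA0 : (0 : ℝ) < A := lt_trans (by positivity) hA
  obtain ⟨K, hK⟩ := heat_bound d A hd
  have hsum : Summable (fun n : ℕ => K * (1 / (n : ℝ) ^ (3 / 2 : ℝ))) :=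
    (Real.summable_one_div_nat_rpow.2 (by norm_num)).mul_left K
  have hsum' : Summable (fun n : ℕ => |K * (1 / (n : ℝ) ^ (3 / 2 : ℝ))|) := hsum.abs
  have htail := tendsto_sum_nat_add (fun n : ℕ => |K * (1 / (n : ℝ) ^ (3 / 2 : ℝ))|)
  obtain ⟨n0, hn0⟩ := ((htail.eventually (gt_mem_nhds (half_pos hε))).and
    (eventually_ge_atTop 1)).exists
  filter_upwards [eventually_gt_atTop (n0 + 1)] with N hN
  have hN0 : 0 < N := by omega
  have hR := cylRW d N (Pl N) (hPl N)
  apply Real.sSup_le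
  swap
  · linarith
  rintro r ⟨F, ⟨I, hIm, y, hF⟩, z, ⟨hzF, y', hy'F, _, e, he, hy'⟩, rfl⟩
  have hpz := hR.prob z
  -- the transversal coordinates
  have hJ : Iᶜ.card = d + 1 - m := by
    rw [Finset.card_compl, hIm, Fintype.card_fin]
  let σ : Fin (d + 1 - m) → Fin (d + 1) := Iᶜ.orderEmbOfFin hJ
  have hσ : Function.Injective σ := (Iᶜ.orderEmbOfFin hJ).injective
  have hI : ∀ i, i ∉ I ↔ i ∈ Set.range σ := by
    intro i
    rw [show Set.range σ = (Iᶜ : Finset (Fin (d + 1))) from Finset.range_orderEmbOfFin _ hJ]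
    simp
  -- position of `z`
  obtain ⟨u, hu, hu'⟩ : ∃ u : Lat d, (∀ i ∉ I, u i = 0) ∧ projE d N (y + u) = y' := by
    rw [hF] at hy'F
    exact hy'F
  have hz : z = projE d N (y + (u - e)) := by
    have h1 : projE d N (y + (u - e)) + projE d N e = z + projE d N e := by
      rw [← proj_add, ← hy', ← hu']
      congr 1
      abel
    exact (add_right_cancel h1).symm
  obtain ⟨⟨i, b⟩, hib⟩ : ∃ p : Fin (d + 1) × Bool, sv p = e := by
    simp only [unitVecs, Finset.mem_image, Finset.mem_univ, true_and] at he
    exact he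
  have hiI : i ∉ I := by
    intro hi
    apply hzF
    rw [hz, hF]
    refine ⟨u - e, fun j hj => ?_, rfl⟩
    have hji : j ≠ i := fun h => hj (h ▸ hi)
    rw [Pi.sub_apply, hu j hj, ← hib]
    simp [sv, hji]
  obtain ⟨a, rfl⟩ := (hI i).1 hiI
  have hve : (u - e) ∘ σ = sv (a, !b) := by
    funext c
    have : u (σ c) = 0 := hu _ ((hI _).2 ⟨c, rfl⟩)
    rw [Function.comp, Pi.sub_apply, this, ← hib]
    cases b <;> simp [sv, Pi.single_apply, hσ.eq_iff] <;> split_ifs <;> simp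
  have hb1 : (Pl N z).real {ω | ∃ k ≤ n0, ω k ∈ F} ≤ retProb (d + 1 - m) Q := by
    have h1 := loc_hit d N (d + 1 - m) (Pl N) hR σ hσ hν I hI y F hF n0 (u - e) (by
      intro c
      have h2 := congrFun hve c
      simp only [Function.comp] at h2
      rw [h2]
      have h3 : |sv (a, !b) c| ≤ 1 := by
        unfold sv
        rw [Pi.single_apply]
        split_ifs <;> simp
      have : ((n0 + 1 : ℕ) : ℤ) < N := by exact_mod_cast hN
      push_cast at this
      linarith)
    rw [← hz, hve] at h1
    exact h1.trans (hh_le_ret _ Q hQ' n0 _)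
  -- heat kernel part
  let ι3 : Fin 3 → Fin (d + 1 - m) := Fin.castLE (by omega)
  have hτ : Function.Injective (σ ∘ ι3) := hσ.comp (Fin.castLE_injective _)
  let M := A * N ^ 2
  have hb2 : ∀ n, n0 ≤ n → n ≤ M → (Pl N z).real {ω | ω n ∈ F} ≤
      |K * (1 / (n : ℝ) ^ (3 / 2 : ℝ))| := by
    intro n h1 h2
    refine le_trans ?_ ((hK N hN0 (Pl N) hR (σ ∘ ι3) hτ
      (fun j => ((y (σ (ι3 j)) : ℤ) : ZMod N)) n (hn0.2.trans h1) h2 z).trans (le_abs_self _))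
    apply measureReal_mono
    · intro ω hω j
      have hω' : ω n ∈ F := hω
      rw [hF] at hω'
      obtain ⟨v, hv, hv'⟩ := hω'
      rw [← hv']
      simp only [Function.comp, cm_proj, Pi.add_apply]
      rw [hv _ ((hI _).2 ⟨_, rfl⟩), add_zero]
    · exact measure_ne_top _ _
  have hb2' : ∑ n ∈ Finset.Icc n0 M, (Pl N z).real {ω | ω n ∈ F} ≤ ε / 2 := by
    refine le_trans ?_ hn0.1.le
    refine (Finset.sum_le_sum fun n hn =>
      hb2 n (Finset.mem_Icc.1 hn).1 (Finset.mem_Icc.1 hn).2).trans ?_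
    rw [← Finset.Ico_succ_right_eq_Icc, Finset.sum_Ico_eq_sum_range]
    simp only [add_comm n0]
    exact ((summable_nat_add_iff n0).2 hsum').sum_le_tsum _ (fun _ _ => abs_nonneg _)
  -- survival part
  have hb3 : (Pl N z).real {ω | ∀ k ≤ M, ω k ∈ Btl d N 0} ≤ ε / 2 := by
    have h1 := stay_bound d N hN0 (Pl N) hR M z
    have hNr : (0 : ℝ) < N := by exact_mod_cast hN0
    have hMr : (M : ℝ) = A * (N : ℝ) ^ 2 := by simp [M]
    rw [hMr] at h1
    set q := (Pl N z).real {ω | ∀ k ≤ M, ω k ∈ Btl d N 0}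
    have h2 : A * q ≤ 4 * ((d : ℝ) + 1) := by
      have : (A * q) * (N : ℝ) ^ 2 ≤ 4 * ((d : ℝ) + 1) * (N : ℝ) ^ 2 := by linarith
      exact le_of_mul_le_mul_right this (by positivity)
    rw [div_lt_iff₀ (half_pos hε)] at hA
    have : A * q ≤ A * (ε / 2) := by linarith
    exact le_of_mul_le_mul_left this hA0
  have hincl : {ω : ℕ → Cyl d N | entT F ω < exitT (Btl d N 0) ω} ⊆
      {ω | ∃ k ≤ n0, ω k ∈ F} ∪ ((⋃ n ∈ Finset.Icc n0 M, {ω | ω n ∈ F}) ∪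
        {ω | ∀ k ≤ M, ω k ∈ Btl d N 0}) := by
    intro ω hω
    have hω' : entT F ω < exitT (Btl d N 0) ω := hω
    unfold entT at hω'
    obtain ⟨t, ⟨n, hnF, rfl⟩, hlt⟩ := sInf_lt_iff.1 hω'
    have hB : ∀ k ≤ n, ω k ∈ Btl d N 0 := by
      intro k hk
      by_contra hk'
      have h1 : exitT (Btl d N 0) ω ≤ (k : ℕ∞) := sInf_le ⟨k, hk', rfl⟩
      have h2 : (n : ℕ∞) < k := lt_of_lt_of_le hlt h1
      have h3 : n < k := by exact_mod_cast h2
      omega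
    by_cases h1 : n ≤ n0
    · exact Or.inl ⟨n, h1, hnF⟩
    · by_cases h2 : n ≤ M
      · refine Or.inr (Or.inl ?_)
        exact Set.mem_biUnion (Finset.mem_Icc.2 ⟨by omega, h2⟩) hnF
      · exact Or.inr (Or.inr fun k hk => hB k (by omega))
  calc ((Pl N z) {ω | entT F ω < exitT (Btl d N 0) ω}).toReal
      ≤ (Pl N z).real ({ω | ∃ k ≤ n0, ω k ∈ F} ∪ ((⋃ n ∈ Finset.Icc n0 M, {ω | ω n ∈ F}) ∪
        {ω | ∀ k ≤ M, ω k ∈ Btl d N 0})) := measureReal_mono hincl (measure_ne_top _ _)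
    _ ≤ retProb (d + 1 - m) Q + (ε / 2 + ε / 2) := by
      refine (measureReal_union_le _ _).trans (add_le_add hb1 ?_)
      refine (measureReal_union_le _ _).trans (add_le_add ?_ hb3)
      exact (measureReal_biUnion_finset_le _ _).trans hb2'
    _ = _ := by ring

end DiscCyl
end
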